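/- Quantitative strong maximum principle with right-hand side, in the unit ball. For every integer n ≥ 2, reals 0 < λ ≤ Λ, exponents q > n and p with n ≤ p ≤ q, d₀ ∈ (0,1/4], and K > 0, there exist constants ε > 0, c > 0, C > 0 such that the following holds. Let b, f : B₁ → ℝ be continuous with b ≥ 0 and ‖b‖_{L^q(B₁)} ≤ K, and let u be a C² function on B₁ with u ≥ 0 and L⁻[u] ≤ f in B₁. Then c·(∫_{B₁} (f⁻(x))^ε dx)^{1/ε} ≤ inf_{x ∈ B₁} u(x)/(1−|x|) + C·‖f⁺‖_{L^{p,q}(B₁)}, where ‖f‖_{L^{p,q}(B₁)} = ‖f‖_{L^p(B₁)} + ‖f‖_{L^q({x ∈ B₁ : 1−|x| < d₀})} and the ε-integral is a Lebesgue integral with values in [0,+∞]. -/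

import Mathlib

open MeasureTheory
open scoped ENNReal

/-- The Pucci minimal extremal operator `𝓜⁻(M)` with ellipticity constants `lam ≤ Lam`:
the infimum of `tr(A*M)` over symmetric matrices `A` with `lam•I ≤ A ≤ Lam•I`. -/
noncomputable def pucciMinus (n : ℕ) (lam Lam : ℝ) (M : Matrix (Fin n) (Fin n) ℝ) : ℝ :=
  sInf { t : ℝ | ∃ A : Matrix (Fin n) (Fin n) ℝ, A.IsSymm ∧
    (A - lam • (1 : Matrix (Fin n) (Fin n) ℝ)).PosSemidef ∧
    (Lam • (1 : Matrix (Fin n) (Fin n) ℝ) - A).PosSemidef ∧ t = (A * M).trace }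

/-- The Pucci maximal extremal operator `𝓜⁺(M)`. -/
noncomputable def pucciPlus (n : ℕ) (lam Lam : ℝ) (M : Matrix (Fin n) (Fin n) ℝ) : ℝ :=
  sSup { t : ℝ | ∃ A : Matrix (Fin n) (Fin n) ℝ, A.IsSymm ∧
    (A - lam • (1 : Matrix (Fin n) (Fin n) ℝ)).PosSemidef ∧
    (Lam • (1 : Matrix (Fin n) (Fin n) ℝ) - A).PosSemidef ∧ t = (A * M).trace }

/-- The Hessian matrix `D²u(x)` of `u` at `x`. -/
noncomputable def hess (n : ℕ) (u : EuclideanSpace ℝ (Fin n) → ℝ)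
    (x : EuclideanSpace ℝ (Fin n)) : Matrix (Fin n) (Fin n) ℝ :=
  fun i j => fderiv ℝ (fun y => fderiv ℝ u y (EuclideanSpace.single j (1 : ℝ))) x
    (EuclideanSpace.single i (1 : ℝ))

/-- The euclidean norm `|Du(x)|` of the gradient of `u` at `x`. -/
noncomputable def gradNorm (n : ℕ) (u : EuclideanSpace ℝ (Fin n) → ℝ)
    (x : EuclideanSpace ℝ (Fin n)) : ℝ := ‖fderiv ℝ u x‖

/-- The `L^p` norm `(∫_E |g|^p)^(1/p)`, as a Lebesgue integral valued in `[0,∞]`. -/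
noncomputable def LpNormE (n : ℕ) (p : ℝ) (g : EuclideanSpace ℝ (Fin n) → ℝ)
    (E : Set (EuclideanSpace ℝ (Fin n))) : ℝ≥0∞ :=
  (∫⁻ x in E, ENNReal.ofReal (|g x| ^ p)) ^ (1 / p)

/-- The last (`n`-th) coordinate `x_n` of a point of `ℝ^n`. -/
def lastC (n : ℕ) (hn : 1 ≤ n) (x : EuclideanSpace ℝ (Fin n)) : ℝ := x ⟨n - 1, by omega⟩

/-- The open half-ball `B_R⁺ = {|x| < R, x_n > 0}`. -/
def halfBall (n : ℕ) (hn : 1 ≤ n) (R : ℝ) : Set (EuclideanSpace ℝ (Fin n)) :=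
  {x | ‖x‖ < R ∧ 0 < lastC n hn x}

/-- The flat boundary part `B_R⁰ = {|x| ≤ R, x_n = 0}`. -/
def flatB (n : ℕ) (hn : 1 ≤ n) (R : ℝ) : Set (EuclideanSpace ℝ (Fin n)) :=
  {x | ‖x‖ ≤ R ∧ lastC n hn x = 0}

/-- The norm `‖g‖_{L^{p,q}(B_R⁺)} = ‖g‖_{L^p(B_R⁺)} + ‖g‖_{L^q(B_R⁺ ∩ {x_n < d0})}`. -/
noncomputable def LpqNormHB (n : ℕ) (hn : 1 ≤ n) (p q d0 R : ℝ)
    (g : EuclideanSpace ℝ (Fin n) → ℝ) : ℝ≥0∞ :=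
  LpNormE n p g (halfBall n hn R) +
    LpNormE n q g {x ∈ halfBall n hn R | lastC n hn x < d0}

/-- The open cube `Q_ρ` of side `ρ` centered at `(0,…,0,ρ/2)`. -/
def cubeQ (n : ℕ) (hn : 1 ≤ n) (ρ : ℝ) : Set (EuclideanSpace ℝ (Fin n)) :=
  {x | (∀ i : Fin n, i.1 ≠ n - 1 → |x i| < ρ / 2) ∧ 0 < lastC n hn x ∧ lastC n hn x < ρ}

/-- The norm `‖g‖_{L^{p,q}(Q₂)} = ‖g‖_{L^p(Q₂)} + ‖g‖_{L^q(Q₂ ∩ {x_n < d0})}`. -/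
noncomputable def LpqNormQ (n : ℕ) (hn : 1 ≤ n) (p q d0 : ℝ)
    (g : EuclideanSpace ℝ (Fin n) → ℝ) : ℝ≥0∞ :=
  LpNormE n p g (cubeQ n hn 2) +
    LpNormE n q g {x ∈ cubeQ n hn 2 | lastC n hn x < d0}

/-!
Let `h = f⁺` and `τ` be slightly larger than the right-hand side of the inequality. By the Hopf
lemma, a point where `u < τ (1 - |x|)` can be moved to a fixed distance from the sphere, and
propagation of positivity along chains of balls then shows that `u` is at most `C τ ρ ^ (-γ)`
somewhere in every ball of radius `ρ` whose distance from the sphere is of order `ρ`. Hence near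
every point of `B_{1-δ}` the graph of `u` is touched from below by a paraboloid of opening
`A τ δ ^ (-γ-2)`. Paraboloids of opening multiplied by `M` touch on a fixed proportion of balls near
such points, by the Aleksandrov–Bakelman–Pucci estimate, so the set not touched by paraboloids of
opening `A τ M ^ k δ ^ (-γ-2)` has measure at most `V μ ^ k`. At a touched point the Hessian of `u`
is bounded below, whence `f⁻` is bounded by the opening wherever `b` is not too large. With `δ`
decreasing geometrically in `k`, the volume of `{f⁻ > a τ L ^ k}` decays geometrically, and summing
over `k` bounds the integral of `(f⁻) ^ ε` for small `ε`.
-/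

namespace Pucci

open Metric
open scoped Gradient

local notation "ℝ^" d:max => EuclideanSpace ℝ (Fin d)

variable {n : ℕ} {lam Lam : ℝ}

/-! ### Pucci's minimal operator -/

section Matrix

variable {ι : Type*}

/-- The coefficient matrices competing in Pucci's operators: symmetric with
`lam • 1 ≤ A ≤ Lam • 1` in the Loewner order. -/
structure IsAdmissible [DecidableEq ι] (lam Lam : ℝ) (A : Matrix ι ι ℝ) : Prop where
  isSymm : A.IsSymm
  lower : (A - lam • (1 : Matrix ι ι ℝ)).PosSemidef
  upper : (Lam • (1 : Matrix ι ι ℝ) - A).PosSemidef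

lemma IsAdmissible.smul_one [DecidableEq ι] (hLam : lam ≤ Lam) :
    IsAdmissible lam Lam (lam • (1 : Matrix ι ι ℝ)) where
  isSymm := Matrix.isSymm_one.smul lam
  lower := by rw [sub_self]; exact .zero
  upper := by rw [← sub_smul]; exact Matrix.PosSemidef.one.smul (sub_nonneg.2 hLam)

variable [Fintype ι]

lemma trace_mul_nonneg {A B : Matrix ι ι ℝ} (hA : A.PosSemidef) (hB : B.PosSemidef) :
    0 ≤ (A * B).trace := by
  have h := (hA.hadamard hB.transpose).dotProduct_mulVec_nonneg (fun _ => (1 : ℝ))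
  simpa [Matrix.trace, Matrix.mul_apply, dotProduct, Matrix.mulVec, Matrix.hadamard] using h

lemma abs_apply_le_trace {A : Matrix ι ι ℝ} (hA : A.PosSemidef) (i j : ι) :
    |A i j| ≤ A.trace := by
  classical
  have hquad (s : ℝ) : 0 ≤ A i i + s * A j i + s * (A i j + s * A j j) := by
    have h := hA.dotProduct_mulVec_nonneg (Pi.single i 1 + s • Pi.single j 1)
    simpa [Matrix.mulVec_add, Matrix.mulVec_smul, add_dotProduct, mul_add] using h
  have hsymm : A j i = A i j := by simpa using hA.1.apply i j
  have hdiag (k : ι) : A k k ≤ A.trace :=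
    Finset.single_le_sum (f := fun k => A k k) (fun k _ => hA.diag_nonneg) (Finset.mem_univ k)
  have hplus := hquad 1
  have hminus := hquad (-1)
  rw [hsymm] at hplus hminus
  rw [abs_le]
  constructor <;> linarith [hdiag i, hdiag j]

lemma abs_det_le_trace_pow [DecidableEq ι] {A : Matrix ι ι ℝ} (hA : A.PosSemidef) :
    |A.det| ≤ A.trace ^ Fintype.card ι := by
  rw [abs_of_nonneg hA.det_nonneg, hA.1.det_eq_prod_eigenvalues, hA.1.trace_eq_sum_eigenvalues]
  simp only [RCLike.ofReal_real_eq_id, id]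
  calc ∏ i, hA.1.eigenvalues i ≤ ∏ _i : ι, ∑ j, hA.1.eigenvalues j :=
        Finset.prod_le_prod (fun i _ => hA.eigenvalues_nonneg i) fun i hi =>
          Finset.single_le_sum (fun j _ => hA.eigenvalues_nonneg j) hi
    _ = (∑ j, hA.1.eigenvalues j) ^ Fintype.card ι := by simp

namespace IsAdmissible

variable [DecidableEq ι] {A B : Matrix ι ι ℝ}

lemma trace_le (hA : IsAdmissible lam Lam A) : A.trace ≤ Fintype.card ι * Lam := by
  have h := hA.upper.trace_nonneg
  simp only [Matrix.trace_sub, Matrix.trace_smul, Matrix.trace_one, smul_eq_mul] at h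
  linarith

lemma mul_trace_le (hA : IsAdmissible lam Lam A) (hB : B.PosSemidef) :
    lam * B.trace ≤ (A * B).trace := by
  have h := trace_mul_nonneg hA.lower hB
  simp only [sub_mul, Matrix.smul_mul, one_mul, Matrix.trace_sub, Matrix.trace_smul,
    smul_eq_mul] at h
  linarith

lemma abs_apply_le (hA : IsAdmissible lam Lam A) (hlam : 0 ≤ lam) (i j : ι) :
    |A i j| ≤ Fintype.card ι * Lam := by
  have hpos : A.PosSemidef := by
    simpa using hA.lower.add (Matrix.PosSemidef.one.smul hlam)
  exact (abs_apply_le_trace hpos i j).trans hA.trace_le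

lemma le_trace_mul (hA : IsAdmissible lam Lam A) (hlam : 0 ≤ lam) (M : Matrix ι ι ℝ) :
    -(Fintype.card ι * Lam * ∑ i, ∑ j, |M j i|) ≤ (A * M).trace := by
  simp only [Matrix.trace, Matrix.diag_apply, Matrix.mul_apply, Finset.mul_sum,
    ← Finset.sum_neg_distrib]
  refine Finset.sum_le_sum fun i _ => Finset.sum_le_sum fun j _ => ?_
  calc -(Fintype.card ι * Lam * |M j i|) ≤ -(|A i j| * |M j i|) := by
        gcongr; exact hA.abs_apply_le hlam i j
    _ ≤ A i j * M j i := by rw [← abs_mul]; exact neg_abs_le _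

end IsAdmissible

end Matrix

section PucciMinus

variable {M : Matrix (Fin n) (Fin n) ℝ}

lemma pucciMinus_le_trace (hlam : 0 ≤ lam) {A : Matrix (Fin n) (Fin n) ℝ}
    (hA : IsAdmissible lam Lam A) (M : Matrix (Fin n) (Fin n) ℝ) :
    pucciMinus n lam Lam M ≤ (A * M).trace := by
  refine csInf_le ⟨-(Fintype.card (Fin n) * Lam * ∑ i, ∑ j, |M j i|), ?_⟩
    ⟨A, hA.isSymm, hA.lower, hA.upper, rfl⟩
  rintro t ⟨A', hsymm, hlower, hupper, rfl⟩
  exact IsAdmissible.le_trace_mul ⟨hsymm, hlower, hupper⟩ hlam M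

lemma le_pucciMinus (hLam : lam ≤ Lam) {c : ℝ}
    (hc : ∀ A, IsAdmissible lam Lam A → c ≤ (A * M).trace) : c ≤ pucciMinus n lam Lam M := by
  have hone : IsAdmissible lam Lam (lam • (1 : Matrix (Fin n) (Fin n) ℝ)) := .smul_one hLam
  refine le_csInf ⟨_, _, hone.isSymm, hone.lower, hone.upper, rfl⟩ ?_
  rintro t ⟨A, hsymm, hlower, hupper, rfl⟩
  exact hc A ⟨hsymm, hlower, hupper⟩

lemma pucciMinus_add_le (hlam : 0 ≤ lam) (hLam : lam ≤ Lam) (M N : Matrix (Fin n) (Fin n) ℝ) :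
    pucciMinus n lam Lam M + pucciMinus n lam Lam N ≤ pucciMinus n lam Lam (M + N) := by
  refine le_pucciMinus hLam fun A hA => ?_
  rw [mul_add, Matrix.trace_add]
  exact add_le_add (pucciMinus_le_trace hlam hA M) (pucciMinus_le_trace hlam hA N)

lemma mul_trace_le_pucciMinus (hLam : lam ≤ Lam) (hM : M.PosSemidef) :
    lam * M.trace ≤ pucciMinus n lam Lam M :=
  le_pucciMinus hLam fun _ hA => hA.mul_trace_le hM

lemma le_pucciMinus_neg_smul_one (hLam : lam ≤ Lam) {κ : ℝ} (hκ : 0 ≤ κ) :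
    -(n * Lam * κ) ≤ pucciMinus n lam Lam (-κ • (1 : Matrix (Fin n) (Fin n) ℝ)) := by
  refine le_pucciMinus hLam fun A hA => ?_
  have htrace := hA.trace_le
  rw [Fintype.card_fin] at htrace
  simp only [neg_smul, mul_neg, Matrix.mul_smul, mul_one, Matrix.trace_neg, Matrix.trace_smul,
    smul_eq_mul]
  nlinarith

lemma mul_trace_add_smul_one_le (hlam : 0 ≤ lam) (hLam : lam ≤ Lam) {κ : ℝ} (hκ : 0 ≤ κ)
    (hM : (M + κ • (1 : Matrix (Fin n) (Fin n) ℝ)).PosSemidef) :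
    lam * (M + κ • (1 : Matrix (Fin n) (Fin n) ℝ)).trace ≤
      pucciMinus n lam Lam M + n * Lam * κ := by
  have hadd := pucciMinus_add_le hlam hLam (M + κ • (1 : Matrix (Fin n) (Fin n) ℝ)) (-κ • 1)
  rw [neg_smul, add_neg_cancel_right, ← neg_smul] at hadd
  linarith [mul_trace_le_pucciMinus hLam hM, le_pucciMinus_neg_smul_one (n := n) hLam hκ]

lemma le_pucciMinus_vecMulVec_sub (hlam : 0 ≤ lam) (hLam : lam ≤ Lam) (v : Fin n → ℝ) {α β : ℝ}
    (hα : 0 ≤ α) (hβ : 0 ≤ β) :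
    lam * α * (∑ i, v i ^ 2) - n * Lam * β ≤
      pucciMinus n lam Lam (α • Matrix.vecMulVec v v - β • (1 : Matrix (Fin n) (Fin n) ℝ)) := by
  have hpos : (α • Matrix.vecMulVec v v).PosSemidef := by
    simpa using (Matrix.posSemidef_vecMulVec_self_star v).smul hα
  have htrace : (α • Matrix.vecMulVec v v).trace = α * ∑ i, v i ^ 2 := by
    simp [Matrix.trace, Matrix.vecMulVec, sq, Finset.mul_sum]
  have hadd := pucciMinus_add_le hlam hLam (α • Matrix.vecMulVec v v) (-β • 1)
  have hrank := mul_trace_le_pucciMinus hLam hpos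
  rw [neg_smul, ← sub_eq_add_neg, ← neg_smul] at hadd
  rw [htrace] at hrank
  linarith [le_pucciMinus_neg_smul_one (n := n) hLam hβ]

end PucciMinus

/-! ### Hessians -/

section Hessian

variable {u v : ℝ^n → ℝ} {x : ℝ^n}

lemma hess_apply (hu : ContDiffAt ℝ 2 u x) (i j : Fin n) :
    hess n u x i j =
      iteratedFDeriv ℝ 2 u x ![EuclideanSpace.single i 1, EuclideanSpace.single j 1] := by
  have hdiff : DifferentiableAt ℝ (fderiv ℝ u) x :=
    (hu.fderiv_right (m := 1) (by norm_num)).differentiableAt one_ne_zero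
  rw [iteratedFDeriv_two_apply, hess, fderiv_clm_apply hdiff (by fun_prop)]
  simp

lemma isSymm_hess (hu : ContDiffAt ℝ 2 u x) : (hess n u x).IsSymm := by
  ext i j
  rw [Matrix.transpose_apply, hess_apply hu, hess_apply hu, iteratedFDeriv_two_apply,
    iteratedFDeriv_two_apply]
  exact (hu.isSymmSndFDerivAt (by simp)) _ _

lemma sum_mul_hess_mul (hu : ContDiffAt ℝ 2 u x) (w : ℝ^n) :
    ∑ i, ∑ j, w i * hess n u x i j * w j = fderiv ℝ (fderiv ℝ u) x w w := by
  have hw : w = ∑ i, w i • (EuclideanSpace.single i (1 : ℝ)) := by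
    ext j
    simp [Finset.sum_apply, Pi.single_apply]
  conv_rhs => rw [hw]
  simp only [hess_apply hu, iteratedFDeriv_two_apply, Matrix.cons_val_zero, Matrix.cons_val_one,
    map_sum, map_smul, sum_apply, smul_apply, smul_eq_mul, Finset.mul_sum]
  rw [Finset.sum_comm]
  exact Finset.sum_congr rfl fun i _ => Finset.sum_congr rfl fun j _ => by ring

lemma hess_add (hu : ContDiffAt ℝ 2 u x) (hv : ContDiffAt ℝ 2 v x) :
    hess n (u + v) x = hess n u x + hess n v x := by
  ext i j
  rw [Matrix.add_apply, hess_apply hu, hess_apply hv, hess_apply (u := u + v) (hu.add hv),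
    iteratedFDeriv_add_apply hu hv, add_apply]

lemma hess_const_smul (hu : ContDiffAt ℝ 2 u x) (c : ℝ) :
    hess n (c • u) x = c • hess n u x := by
  ext i j
  rw [Matrix.smul_apply, hess_apply hu, hess_apply (u := c • u) (hu.const_smul c),
    iteratedFDeriv_const_smul_apply hu, smul_apply]

lemma hess_sub (hu : ContDiffAt ℝ 2 u x) (hv : ContDiffAt ℝ 2 v x) :
    hess n (u - v) x = hess n u x - hess n v x := by
  have hneg : u - v = u + (-1 : ℝ) • v := by rw [neg_one_smul, sub_eq_add_neg]
  rw [hneg, hess_add hu (v := (-1 : ℝ) • v) (hv.const_smul (-1 : ℝ)), hess_const_smul hv,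
    neg_one_smul, sub_eq_add_neg]

end Hessian

section Radial

variable {F : Type*} [NormedAddCommGroup F] [InnerProductSpace ℝ F] {g : ℝ → ℝ}

lemma contDiffAt_comp_norm_sub_sq {x₀ x : F} (hg : ContDiffAt ℝ 2 g (‖x - x₀‖ ^ 2)) :
    ContDiffAt ℝ 2 (fun y => g (‖y - x₀‖ ^ 2)) x :=
  ContDiffAt.comp (g := g) x hg ((contDiffAt_id.sub contDiffAt_const).norm_sq ℝ)

lemma hasFDerivAt_comp_norm_sub_sq {x₀ x : F} (hg : DifferentiableAt ℝ g (‖x - x₀‖ ^ 2)) :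
    HasFDerivAt (fun y => g (‖y - x₀‖ ^ 2))
      ((2 * deriv g (‖x - x₀‖ ^ 2)) • innerSL ℝ (x - x₀)) x := by
  have hsq : HasFDerivAt (fun y : F => ‖y - x₀‖ ^ 2) (2 • innerSL ℝ (x - x₀)) x := by
    simpa using ((hasFDerivAt_id x).sub_const x₀).norm_sq
  refine (hg.hasDerivAt.comp_hasFDerivAt x hsq).congr_fderiv ?_
  ext w
  simp
  ring

lemma hess_comp_norm_sub_sq {x₀ x : ℝ^n} (hg : ContDiffAt ℝ 2 g (‖x - x₀‖ ^ 2)) :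
    hess n (fun y => g (‖y - x₀‖ ^ 2)) x =
      (4 * deriv (deriv g) (‖x - x₀‖ ^ 2)) • Matrix.vecMulVec (x - x₀) (x - x₀)
        + (2 * deriv g (‖x - x₀‖ ^ 2)) • (1 : Matrix (Fin n) (Fin n) ℝ) := by
  have hderiv : DifferentiableAt ℝ (deriv g) (‖x - x₀‖ ^ 2) :=
    (ContDiffAt.derivWithin (m := 1) hg (by norm_num)).differentiableAt one_ne_zero
  ext i j
  have hfderiv : (fun y => fderiv ℝ (fun y => g (‖y - x₀‖ ^ 2)) y (EuclideanSpace.single j 1))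
      =ᶠ[nhds x] fun y => 2 * deriv g (‖y - x₀‖ ^ 2) * (y - x₀) j := by
    have hcont : ContinuousAt (fun y : ℝ^n => ‖y - x₀‖ ^ 2) x := by fun_prop
    filter_upwards [hcont.eventually (hg.eventually (by simp))] with y hy
    rw [(hasFDerivAt_comp_norm_sub_sq (hy.differentiableAt two_ne_zero)).fderiv]
    simp [EuclideanSpace.inner_single_right]
  have hcoord : HasFDerivAt (fun y : ℝ^n => (y - x₀) j) (EuclideanSpace.proj j : ℝ^n →L[ℝ] ℝ) x :=
    ((EuclideanSpace.proj j : ℝ^n →L[ℝ] ℝ).hasFDerivAt (x := x)).sub_const (x₀ j)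
  have hprod : HasFDerivAt (fun y => 2 * deriv g (‖y - x₀‖ ^ 2) * (y - x₀) j) _ x :=
    ((hasFDerivAt_comp_norm_sub_sq hderiv).const_mul 2).mul hcoord
  have hone : (EuclideanSpace.proj j : ℝ^n →L[ℝ] ℝ) (EuclideanSpace.single i 1) =
      (1 : Matrix (Fin n) (Fin n) ℝ) i j := by
    simp [Matrix.one_apply, eq_comm]
  rw [hess, hfderiv.fderiv_eq, hprod.fderiv]
  simp only [add_apply, smul_apply, smul_eq_mul, innerSL_apply_apply, hone,
    EuclideanSpace.inner_single_right, Matrix.add_apply, Matrix.smul_apply, Matrix.vecMulVec_apply,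
    one_mul, conj_trivial]
  ring

end Radial

/-! ### Contact sets -/

section SecondDerivativeTest

lemma deriv_deriv_nonneg_of_isLocalMin {φ : ℝ → ℝ} {t : ℝ} (hφ : ContinuousAt φ t)
    (hmin : IsLocalMin φ t) : 0 ≤ deriv (deriv φ) t := by
  by_contra! hneg
  have hmax : IsLocalMax φ t := isLocalMax_of_deriv_deriv_neg hneg hmin.deriv_eq_zero hφ
  have hconst : φ =ᶠ[nhds t] fun _ => φ t := by
    filter_upwards [hmax, hmin] with s hle hge using le_antisymm hle hge
  have hzero : deriv (deriv φ) t = 0 := by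
    rw [hconst.deriv.deriv_eq]
    simp
  exact hneg.ne hzero

lemma fderiv_fderiv_nonneg_of_isLocalMin {E : Type*} [NormedAddCommGroup E] [NormedSpace ℝ E]
    {φ : E → ℝ} {x : E} (hφ : ContDiffAt ℝ 2 φ x) (hmin : IsLocalMin φ x) (v : E) :
    0 ≤ fderiv ℝ (fderiv ℝ φ) x v v := by
  have hline (t : ℝ) : HasDerivAt (fun t : ℝ => x + t • v) v t := by
    simpa using ((hasDerivAt_id t).smul_const v).const_add x
  have hx : x + (0 : ℝ) • v = x := by simp
  have htendsto : Filter.Tendsto (fun t : ℝ => x + t • v) (nhds 0) (nhds x) := by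
    simpa using (hline 0).continuousAt.tendsto
  have hderiv : deriv (fun t : ℝ => φ (x + t • v)) =ᶠ[nhds 0]
      fun t => fderiv ℝ φ (x + t • v) v := by
    filter_upwards [htendsto.eventually (hφ.eventually (by simp))] with t ht
    exact ((ht.differentiableAt two_ne_zero).hasFDerivAt.comp_hasDerivAt t (hline t)).deriv
  have hsecond : HasDerivAt (fun t : ℝ => fderiv ℝ φ (x + t • v) v)
      (fderiv ℝ (fderiv ℝ φ) x v v) 0 := by
    have hdiff : DifferentiableAt ℝ (fderiv ℝ φ) (x + (0 : ℝ) • v) := by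
      rw [hx]
      exact (hφ.fderiv_right (m := 1) (by norm_num)).differentiableAt one_ne_zero
    have hcomp : HasDerivAt (fun t : ℝ => fderiv ℝ φ (x + t • v))
        (fderiv ℝ (fderiv ℝ φ) (x + (0 : ℝ) • v) v) 0 :=
      hdiff.hasFDerivAt.comp_hasDerivAt 0 (hline 0)
    simpa only [hx, map_zero, add_zero] using hcomp.clm_apply (hasDerivAt_const (0 : ℝ) v)
  rw [← hsecond.deriv, ← hderiv.deriv_eq]
  refine deriv_deriv_nonneg_of_isLocalMin ?_ ?_
  · exact hφ.continuousAt.comp_of_eq (hline 0).continuousAt hx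
  · filter_upwards [htendsto.eventually hmin] with t ht
    rwa [hx]

lemma posSemidef_hess_of_isLocalMin {φ : ℝ^n → ℝ} {x : ℝ^n} (hφ : ContDiffAt ℝ 2 φ x)
    (hmin : IsLocalMin φ x) : (hess n φ x).PosSemidef := by
  refine Matrix.PosSemidef.of_dotProduct_mulVec_nonneg ?_ fun v => ?_
  · rw [Matrix.IsHermitian, Matrix.conjTranspose_eq_transpose_of_trivial]
    exact isSymm_hess hφ
  · have h := fderiv_fderiv_nonneg_of_isLocalMin hφ hmin (WithLp.toLp 2 v)
    rw [← sum_mul_hess_mul hφ] at h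
    simpa [dotProduct, Matrix.mulVec, Finset.mul_sum, mul_assoc] using h

end SecondDerivativeTest

section ContactSet

variable {E : Type*} [NormedAddCommGroup E] [NormedSpace ℝ E] {w : E → ℝ} {U : Set E} {κ κ' : ℝ}

/-- The points of `U` at which the graph of `w` is touched from below, over all of `U`, by the
concave paraboloid of opening `κ` with the same value and slope. -/
def contactSet (κ : ℝ) (w : E → ℝ) (U : Set E) : Set E :=
  {x ∈ U | ∀ z ∈ U, w x + fderiv ℝ w x (z - x) - κ / 2 * ‖z - x‖ ^ 2 ≤ w z}

lemma contactSet_subset_contactSet (h : κ ≤ κ') : contactSet κ w U ⊆ contactSet κ' w U :=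
  fun x hx => ⟨hx.1, fun z hz => by nlinarith [hx.2 z hz, sq_nonneg ‖z - x‖]⟩

lemma isClosed_contactSet (hU : IsClosed U) (hw : ∀ x ∈ U, ContDiffAt ℝ 1 w x) (κ : ℝ) :
    IsClosed (contactSet κ w U) := by
  have hinter : contactSet κ w U =
      U ∩ ⋂ z ∈ U, U ∩ {x | w x + fderiv ℝ w x (z - x) - κ / 2 * ‖z - x‖ ^ 2 ≤ w z} := by
    ext x
    simp only [contactSet, Set.mem_ofPred_eq, Set.mem_inter_iff, Set.mem_iInter]
    exact ⟨fun h => ⟨h.1, fun z hz => ⟨h.1, h.2 z hz⟩⟩, fun h => ⟨h.1, fun z hz => (h.2 z hz).2⟩⟩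
  have hcont : ContinuousOn w U := fun x hx => (hw x hx).continuousAt.continuousWithinAt
  have hfderiv : ContinuousOn (fderiv ℝ w) U := fun x hx =>
    ((hw x hx).continuousAt_fderiv one_ne_zero).continuousWithinAt
  rw [hinter]
  refine hU.inter (isClosed_biInter fun z _ => ?_)
  have hparab : ContinuousOn (fun x => w x + fderiv ℝ w x (z - x) - κ / 2 * ‖z - x‖ ^ 2) U :=
    (hcont.add (hfderiv.clm_apply (by fun_prop))).sub (by fun_prop)
  exact hparab.preimage_isClosed_of_isClosed hU isClosed_Iic

end ContactSet

section ContactHessian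

variable {w : ℝ^n → ℝ} {U : Set (ℝ^n)} {κ : ℝ} {x : ℝ^n}

lemma hess_continuousLinearMap (L : ℝ^n →L[ℝ] ℝ) (x : ℝ^n) : hess n L x = 0 := by
  ext i j
  simp [hess]

lemma hess_mul_norm_sub_sq (c : ℝ) (x₀ x : ℝ^n) :
    hess n (fun y => c * ‖y - x₀‖ ^ 2) x = (2 * c) • (1 : Matrix (Fin n) (Fin n) ℝ) := by
  have hderiv : deriv (fun s : ℝ => c * s) = fun _ => c := by
    ext s
    simp
  rw [hess_comp_norm_sub_sq (g := fun s => c * s) (by fun_prop), hderiv]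
  simp

lemma posSemidef_hess_add_smul_one (hx : x ∈ contactSet κ w U) (hU : U ∈ nhds x)
    (hw : ContDiffAt ℝ 2 w x) :
    (hess n w x + κ • (1 : Matrix (Fin n) (Fin n) ℝ)).PosSemidef := by
  set L := fderiv ℝ w x with hL
  have hsq : ContDiffAt ℝ 2 (fun y : ℝ^n => κ / 2 * ‖y - x‖ ^ 2) x :=
    contDiffAt_comp_norm_sub_sq (g := fun s => κ / 2 * s) (by fun_prop)
  have hLsmooth : ContDiffAt ℝ 2 L x := L.contDiff.contDiffAt
  have hmin : IsLocalMin (w + (fun y => κ / 2 * ‖y - x‖ ^ 2) - ⇑L) x := by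
    filter_upwards [hU] with z hz
    have hcontact := hx.2 z hz
    rw [← hL, map_sub] at hcontact
    simp only [Pi.sub_apply, Pi.add_apply, sub_self, norm_zero]
    linarith
  have hsum : ContDiffAt ℝ 2 (w + fun y => κ / 2 * ‖y - x‖ ^ 2) x := hw.add hsq
  have hsmooth : ContDiffAt ℝ 2 ((w + fun y => κ / 2 * ‖y - x‖ ^ 2) - ⇑L) x := hsum.sub hLsmooth
  have hpos := posSemidef_hess_of_isLocalMin hsmooth hmin
  rwa [hess_sub hsum hLsmooth, hess_add hw hsq, hess_continuousLinearMap,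
    hess_mul_norm_sub_sq, sub_zero, mul_div_cancel₀ κ two_ne_zero] at hpos

end ContactHessian

section ShiftedGradient

variable {F : Type*} [NormedAddCommGroup F] [InnerProductSpace ℝ F] [CompleteSpace F]
  {w : F → ℝ} {U : Set F} {κ : ℝ} {z ξ : F}

/-- The map `z ↦ ∇w(z) + κz`. At a contact point of opening `κ > 0` it is `κ` times the vertex of
the touching paraboloid. -/
noncomputable def shiftedGradient (κ : ℝ) (w : F → ℝ) (z : F) : F := ∇ w z + κ • z

lemma norm_fderiv_eq_norm_shiftedGradient_sub :
    ‖fderiv ℝ w z‖ = ‖shiftedGradient κ w z - κ • z‖ := by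
  rw [shiftedGradient, add_sub_cancel_right, gradient, LinearIsometryEquiv.norm_map]

lemma shiftedGradient_eq_of_isMinOn (hU : U ∈ nhds z) (hw : DifferentiableAt ℝ w z)
    (hmin : IsMinOn (fun y => w y + κ / 2 * ‖y‖ ^ 2 - inner ℝ ξ y) U z) :
    shiftedGradient κ w z = ξ := by
  have hsq : HasFDerivAt (fun y : F => ‖y‖ ^ 2) (2 • innerSL ℝ z) z := by
    simpa using (hasFDerivAt_id z).norm_sq
  have hzero := (hmin.isLocalMin hU).hasFDerivAt_eq_zero
    ((hw.hasFDerivAt.add (hsq.const_mul (κ / 2))).sub (innerSL ℝ ξ).hasFDerivAt)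
  refine ext_inner_right ℝ fun v => ?_
  have hv := congrArg (fun L : F →L[ℝ] ℝ => L v) hzero
  simp only [sub_apply, add_apply, smul_apply, smul_eq_mul, nsmul_eq_mul, innerSL_apply_apply,
    zero_apply] at hv
  rw [shiftedGradient, gradient, inner_add_left, InnerProductSpace.toDual_symm_apply,
    real_inner_smul_left]
  push_cast at hv
  linarith

lemma mem_contactSet_of_isMinOn (hU : U ∈ nhds z) (hw : DifferentiableAt ℝ w z)
    (hmin : IsMinOn (fun y => w y + κ / 2 * ‖y‖ ^ 2 - inner ℝ ξ y) U z) :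
    z ∈ contactSet κ w U := by
  refine ⟨mem_of_mem_nhds hU, fun y hy => ?_⟩
  have hfderiv : fderiv ℝ w z (y - z) = inner ℝ ξ (y - z) - κ * inner ℝ z (y - z) := by
    rw [← shiftedGradient_eq_of_isMinOn hU hw hmin, shiftedGradient, gradient, inner_add_left,
      InnerProductSpace.toDual_symm_apply, real_inner_smul_left]
    ring
  have hle : w z + κ / 2 * ‖z‖ ^ 2 - inner ℝ ξ z ≤ w y + κ / 2 * ‖y‖ ^ 2 - inner ℝ ξ y := hmin hy
  rw [hfderiv, inner_sub_right, inner_sub_right, real_inner_self_eq_norm_sq, norm_sub_sq_real,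
    real_inner_comm z y]
  linarith

end ShiftedGradient

lemma exists_hasFDerivAt_shiftedGradient {w : ℝ^n → ℝ} {z : ℝ^n} (hw : ContDiffAt ℝ 2 w z)
    (κ : ℝ) : ∃ L : ℝ^n →L[ℝ] ℝ^n, HasFDerivAt (shiftedGradient κ w) L z ∧
      L.det = (hess n w z + κ • (1 : Matrix (Fin n) (Fin n) ℝ)).det := by
  let dual : (ℝ^n →L[ℝ] ℝ) →L[ℝ] ℝ^n := ((InnerProductSpace.toDual ℝ (ℝ^n)).symm :
    (ℝ^n →L[ℝ] ℝ) ≃ₗᵢ⋆[ℝ] ℝ^n).toLinearIsometry.toContinuousLinearMap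
  have hdual (ℓ : ℝ^n →L[ℝ] ℝ) (j : Fin n) : dual ℓ j = ℓ (EuclideanSpace.single j 1) := by
    rw [← InnerProductSpace.toDual_symm_apply (𝕜 := ℝ), EuclideanSpace.inner_single_right]
    simp [dual]
  have hfderiv : HasFDerivAt (fderiv ℝ w) (fderiv ℝ (fderiv ℝ w) z) z :=
    ((hw.fderiv_right (m := 1) (by norm_num)).differentiableAt one_ne_zero).hasFDerivAt
  refine ⟨dual.comp (fderiv ℝ (fderiv ℝ w) z) + κ • ContinuousLinearMap.id ℝ (ℝ^n),
    (dual.hasFDerivAt.comp z hfderiv).add ((hasFDerivAt_id z).const_smul κ), ?_⟩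
  rw [ContinuousLinearMap.det,
    ← LinearMap.det_toMatrix (EuclideanSpace.basisFun (Fin n) ℝ).toBasis, ← Matrix.det_transpose]
  congr 1
  ext i j
  rw [Matrix.transpose_apply, LinearMap.toMatrix_apply, Matrix.add_apply, hess_apply hw,
    iteratedFDeriv_two_apply]
  simp [hdual, Matrix.one_apply, eq_comm]

/-! ### The Aleksandrov–Bakelman–Pucci estimate -/

section LnBound

/-- The bound `‖g⁺‖_{L^n(E)} ≤ H`, for `0 ≤ H`, raised to the power `n`. The exponent `n` is the
dimension: it is the one for which the Aleksandrov–Bakelman–Pucci estimate holds. -/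
def PosPartLnLE (g : ℝ^n → ℝ) (E : Set (ℝ^n)) (H : ℝ) : Prop :=
  ∫⁻ x in E, ENNReal.ofReal (g x) ^ n ≤ ENNReal.ofReal H ^ n

namespace PosPartLnLE

variable {g g' : ℝ^n → ℝ} {E E' : Set (ℝ^n)} {H H' c : ℝ}

lemma mono_set (hg : PosPartLnLE g E H) (hE : E' ⊆ E) : PosPartLnLE g E' H :=
  (lintegral_mono_set hE).trans hg

lemma mono (hg : PosPartLnLE g E H) (hH : H ≤ H') : PosPartLnLE g E H' :=
  le_trans hg (by gcongr)

lemma mono_fun (hg : PosPartLnLE g E H) (hE : MeasurableSet E) (hle : ∀ x ∈ E, g' x ≤ g x) :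
    PosPartLnLE g' E H := by
  refine (setLIntegral_mono' hE fun x hx => ?_).trans hg
  gcongr
  exact hle x hx

lemma const_mul (hg : PosPartLnLE g E H) (hc : 0 ≤ c) :
    PosPartLnLE (fun x => c * g x) E (c * H) := by
  unfold PosPartLnLE at *
  simp only [ENNReal.ofReal_mul hc, mul_pow]
  rw [lintegral_const_mul' _ _ (by simp)]
  gcongr

lemma const (hc : 0 ≤ c) (hE : volume E ≤ ENNReal.ofReal H ^ n) :
    PosPartLnLE (fun _ => c) E (c * H) := by
  unfold PosPartLnLE
  rw [setLIntegral_const, ENNReal.ofReal_mul hc, mul_pow]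
  gcongr

lemma rpow_inv_le [NeZero n] (hg : PosPartLnLE g E H) :
    (∫⁻ x in E, ENNReal.ofReal (g x) ^ (n : ℝ)) ^ (1 / (n : ℝ)) ≤ ENNReal.ofReal H := by
  rw [one_div, ENNReal.rpow_inv_le_iff (Nat.cast_pos.2 (NeZero.pos n))]
  simpa only [ENNReal.rpow_natCast, PosPartLnLE] using hg

lemma add [NeZero n] (hg : PosPartLnLE g E H) (hg' : PosPartLnLE g' E H') (hgm : Measurable g)
    (hgm' : Measurable g') (hH : 0 ≤ H) (hH' : 0 ≤ H') :
    PosPartLnLE (fun x => g x + g' x) E (H + H') := by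
  have hminkowski := (ENNReal.lintegral_Lp_add_le (μ := volume.restrict E) (p := (n : ℝ))
    hgm.ennreal_ofReal.aemeasurable hgm'.ennreal_ofReal.aemeasurable
    (by exact_mod_cast NeZero.one_le)).trans (add_le_add hg.rpow_inv_le hg'.rpow_inv_le)
  rw [one_div, ENNReal.rpow_inv_le_iff (Nat.cast_pos.2 (NeZero.pos n)),
    ← ENNReal.ofReal_add hH hH'] at hminkowski
  simp only [ENNReal.rpow_natCast, Pi.add_apply] at hminkowski
  refine (lintegral_mono fun x => ?_).trans hminkowski
  gcongr
  exact ENNReal.ofReal_add_le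

end PosPartLnLE

/-- The `n`-th root of the volume of the unit ball of `ℝⁿ`. -/
noncomputable def unitBallVolumeRoot (n : ℕ) : ℝ :=
  (volume (ball (0 : ℝ^n) 1)).toReal ^ (1 / (n : ℝ))

lemma unitBallVolumeRoot_pos : 0 < unitBallVolumeRoot n :=
  Real.rpow_pos_of_pos
    (ENNReal.toReal_pos (measure_ball_pos volume _ one_pos).ne' measure_ball_lt_top.ne) _

lemma volume_ball_eq_pow [NeZero n] (x : ℝ^n) {r : ℝ} (hr : 0 ≤ r) :
    volume (ball x r) = ENNReal.ofReal (unitBallVolumeRoot n * r) ^ n := by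
  have hunit : volume (ball (0 : ℝ^n) 1) = ENNReal.ofReal (unitBallVolumeRoot n) ^ n := by
    have hn : (n : ℝ) ≠ 0 := NeZero.ne _
    rw [← ENNReal.ofReal_pow unitBallVolumeRoot_pos.le, unitBallVolumeRoot, ← Real.rpow_natCast,
      ← Real.rpow_mul ENNReal.toReal_nonneg, one_div_mul_cancel hn, Real.rpow_one,
      ENNReal.ofReal_toReal measure_ball_lt_top.ne]
  rw [Measure.addHaar_ball volume x hr, hunit, finrank_euclideanSpace_fin, ENNReal.ofReal_pow hr,
    ENNReal.ofReal_mul unitBallVolumeRoot_pos.le, mul_pow, mul_comm]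

lemma volume_closedBall_eq_pow [NeZero n] (x : ℝ^n) {r : ℝ} (hr : 0 ≤ r) :
    volume (closedBall x r) = ENNReal.ofReal (unitBallVolumeRoot n * r) ^ n := by
  rw [Measure.addHaar_closedBall volume x hr, ← volume_ball_eq_pow x hr,
    Measure.addHaar_ball volume x hr]

end LnBound

section ABP

variable {w b h : ℝ^n → ℝ} {x₀ y : ℝ^n} {r t H κ : ℝ}

/-- `u` is a classical supersolution on `S` of `𝓜⁻(D²u) - b|Du| ≤ h`, with measurable data and
nonnegative drift coefficient `b`. The set `S` need not be open. -/
structure IsSupersolutionOn (lam Lam : ℝ) (b h u : ℝ^n → ℝ) (S : Set (ℝ^n)) : Prop where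
  contDiffAt : ∀ x ∈ S, ContDiffAt ℝ 2 u x
  pucci_le : ∀ x ∈ S, pucciMinus n lam Lam (hess n u x) ≤ b x * ‖fderiv ℝ u x‖ + h x
  measurable_drift : Measurable b
  drift_nonneg : ∀ x, 0 ≤ b x
  measurable_source : Measurable h

/-- By the area formula the image of `Z` has volume at most `∫ det(D²w + κI)`, and ellipticity
bounds the determinant of a positive matrix by the `n`-th power of Pucci's operator. -/
lemma mul_radius_le_of_ball_subset_image [NeZero n] {Z : Set (ℝ^n)} {G : ℝ^n → ℝ} {ξ : ℝ^n}
    (hlam : 0 < lam) (hLam : lam ≤ Lam) (hκ : 0 ≤ κ) (hZ : MeasurableSet Z)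
    (hw : ∀ x ∈ Z, ContDiffAt ℝ 2 w x)
    (hpos : ∀ x ∈ Z, (hess n w x + κ • (1 : Matrix (Fin n) (Fin n) ℝ)).PosSemidef)
    (hpucci : ∀ x ∈ Z, pucciMinus n lam Lam (hess n w x) + n * Lam * κ ≤ G x)
    (hG : PosPartLnLE G Z H) (ht : 0 ≤ t) (hH : 0 ≤ H)
    (himage : ball ξ t ⊆ shiftedGradient κ w '' Z) : lam * unitBallVolumeRoot n * t ≤ H := by
  choose! L hL hdet using fun x (hx : x ∈ Z) => exists_hasFDerivAt_shiftedGradient (hw x hx) κ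
  have hdet_le (x) (hx : x ∈ Z) :
      ENNReal.ofReal |(L x).det| ≤ ENNReal.ofReal (lam⁻¹ * G x) ^ n := by
    have htrace : (hess n w x + κ • (1 : Matrix (Fin n) (Fin n) ℝ)).trace ≤ lam⁻¹ * G x := by
      rw [le_inv_mul_iff₀ hlam]
      exact (mul_trace_add_smul_one_le hlam.le hLam hκ (hpos x hx)).trans (hpucci x hx)
    have htrace_nonneg := (hpos x hx).trace_nonneg
    rw [hdet x hx, ← ENNReal.ofReal_pow (htrace_nonneg.trans htrace)]
    refine ENNReal.ofReal_le_ofReal ((abs_det_le_trace_pow (hpos x hx)).trans ?_)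
    rw [Fintype.card_fin]
    gcongr
  have hvolume : volume (ball ξ t) ≤ ENNReal.ofReal (lam⁻¹ * H) ^ n :=
    calc volume (ball ξ t) ≤ volume (shiftedGradient κ w '' Z) := measure_mono himage
      _ ≤ ∫⁻ x in Z, ENNReal.ofReal |(L x).det| :=
        addHaar_image_le_lintegral_abs_det_fderiv volume hZ
          fun x hx => (hL x hx).hasFDerivWithinAt
      _ ≤ ∫⁻ x in Z, ENNReal.ofReal (lam⁻¹ * G x) ^ n := setLIntegral_mono' hZ hdet_le
      _ ≤ ENNReal.ofReal (lam⁻¹ * H) ^ n := hG.const_mul (inv_nonneg.2 hlam.le)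
  rw [volume_ball_eq_pow ξ ht, ENNReal.pow_le_pow_left_iff (NeZero.ne n),
    ENNReal.ofReal_le_ofReal_iff (by positivity), le_inv_mul_iff₀ hlam] at hvolume
  linarith

/-- The points of a ball where `w` is negative, has slope at most `t`, and is touched from below by
its tangent hyperplane. -/
def negativeContactSet (w : ℝ^n → ℝ) (x₀ : ℝ^n) (r t : ℝ) : Set (ℝ^n) :=
  (ball x₀ r ∩ w ⁻¹' Set.Iio 0) ∩
    (contactSet 0 w (closedBall x₀ r) ∩ (closedBall x₀ r ∩ {x | ‖fderiv ℝ w x‖ ≤ t}))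

lemma measurableSet_negativeContactSet (hw : ∀ x ∈ closedBall x₀ r, ContDiffAt ℝ 1 w x) :
    MeasurableSet (negativeContactSet w x₀ r t) := by
  have hcont : ContinuousOn w (ball x₀ r) := fun x hx =>
    (hw x (ball_subset_closedBall hx)).continuousAt.continuousWithinAt
  have hfderiv : ContinuousOn (fun x => ‖fderiv ℝ w x‖) (closedBall x₀ r) := fun x hx =>
    ((hw x hx).continuousAt_fderiv one_ne_zero).norm.continuousWithinAt
  exact (hcont.isOpen_inter_preimage isOpen_ball isOpen_Iio).measurableSet.inter
    ((isClosed_contactSet isClosed_closedBall hw 0).measurableSet.inter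
      (hfderiv.preimage_isClosed_of_isClosed isClosed_closedBall isClosed_Iic).measurableSet)

lemma ball_subset_image_negativeContactSet (hw : ∀ x ∈ closedBall x₀ r, ContDiffAt ℝ 1 w x)
    (hsphere : ∀ x ∈ sphere x₀ r, 0 ≤ w x) (hy : y ∈ closedBall x₀ r) (ht : 2 * (t * r) ≤ -w y)
    (hwy : w y < 0) :
    ball 0 t ⊆ shiftedGradient 0 w '' negativeContactSet w x₀ r t := by
  intro ξ hξ
  rw [mem_ball_zero_iff] at hξ
  have hcont : ContinuousOn (fun z => w z - inner ℝ ξ z) (closedBall x₀ r) := fun z hz =>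
    ((hw z hz).continuousAt.sub (by fun_prop)).continuousWithinAt
  obtain ⟨z, hz, hmin⟩ := (isCompact_closedBall x₀ r).exists_isMinOn ⟨y, hy⟩ hcont
  have hinner (z) (hz : z ∈ closedBall x₀ r) : |inner ℝ ξ (z - x₀)| ≤ ‖ξ‖ * r :=
    (abs_real_inner_le_norm _ _).trans (by gcongr; exact mem_closedBall_iff_norm.1 hz)
  have hwz : w z < 0 := by
    have hle : w z - inner ℝ ξ z ≤ w y - inner ℝ ξ y := hmin hy
    have hzbound := abs_le.1 (hinner z hz)
    have hybound := abs_le.1 (hinner y hy)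
    rw [inner_sub_right] at hzbound hybound
    have hr : 0 ≤ r := dist_nonneg.trans hy
    rcases hr.eq_or_lt with rfl | hr
    · linarith
    · nlinarith
  have hzball : z ∈ ball x₀ r :=
    (mem_closedBall.1 hz).lt_of_ne fun heq => (hsphere z heq).not_gt hwz
  have hnhds : closedBall x₀ r ∈ nhds z :=
    Filter.mem_of_superset (isOpen_ball.mem_nhds hzball) ball_subset_closedBall
  have hdiff : DifferentiableAt ℝ w z := (hw z hz).differentiableAt one_ne_zero
  have hmin' : IsMinOn (fun y => w y + 0 / 2 * ‖y‖ ^ 2 - inner ℝ ξ y) (closedBall x₀ r) z := by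
    simpa using hmin
  have hgrad : shiftedGradient 0 w z = ξ := shiftedGradient_eq_of_isMinOn hnhds hdiff hmin'
  refine ⟨z, ⟨⟨hzball, hwz⟩, mem_contactSet_of_isMinOn hnhds hdiff hmin', hz, ?_⟩, hgrad⟩
  rw [Set.mem_ofPred_eq, norm_fderiv_eq_norm_shiftedGradient_sub (κ := 0), hgrad, zero_smul,
    sub_zero]
  exact hξ.le

/-- The Aleksandrov–Bakelman–Pucci estimate for a drift of small `L^n` norm, in which case no
iteration over the size of the drift is needed. -/
theorem neg_le_of_isSupersolutionOn [NeZero n] (hlam : 0 < lam) (hLam : lam ≤ Lam) (hr : 0 < r)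
    (hw : ∀ x ∈ closedBall x₀ r, ContDiffAt ℝ 2 w x) (hsphere : ∀ x ∈ sphere x₀ r, 0 ≤ w x)
    (hsup : IsSupersolutionOn lam Lam b h w (ball x₀ r ∩ {x | w x < 0}))
    (hb : PosPartLnLE b (ball x₀ r) (lam * unitBallVolumeRoot n / 2))
    (hh : PosPartLnLE h (ball x₀ r) H) (hH : 0 ≤ H) (hy : y ∈ closedBall x₀ r) :
    -(8 / (lam * unitBallVolumeRoot n) * r * H) ≤ w y := by
  by_contra! hlt
  have hω : 0 < lam * unitBallVolumeRoot n := mul_pos hlam unitBallVolumeRoot_pos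
  have hwy : w y < 0 := hlt.trans_le (neg_nonpos.2 (by positivity))
  set t := -w y / (4 * r) with ht
  have ht_pos : 0 < t := div_pos (neg_pos.2 hwy) (by positivity)
  have htr : t * r = -w y / 4 := by rw [ht]; field_simp
  have hw₁ : ∀ x ∈ closedBall x₀ r, ContDiffAt ℝ 1 w x := fun x hx => (hw x hx).of_le one_le_two
  have hsource : PosPartLnLE (fun x => t * b x + h x) (negativeContactSet w x₀ r t)
      (t * (lam * unitBallVolumeRoot n / 2) + H) :=
    ((hb.const_mul ht_pos.le).add hh (hsup.measurable_drift.const_mul t) hsup.measurable_source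
      (by positivity) hH).mono_set fun x hx => hx.1.1
  have hslope := mul_radius_le_of_ball_subset_image (κ := 0) (ξ := 0) hlam hLam le_rfl
    (measurableSet_negativeContactSet hw₁) (fun x hx => hw x hx.2.2.1)
    (fun x hx => posSemidef_hess_add_smul_one hx.2.1
      (Filter.mem_of_superset (isOpen_ball.mem_nhds hx.1.1) ball_subset_closedBall)
      (hw x hx.2.2.1))
    (fun x hx => by
      have hle := hsup.pucci_le x hx.1
      have hdrift := mul_le_mul_of_nonneg_left hx.2.2.2 (hsup.drift_nonneg x)
      linarith)
    hsource ht_pos.le (by positivity)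
    (ball_subset_image_negativeContactSet hw₁ hsphere hy (by linarith) hwy)
  have ht_le : t ≤ 2 / (lam * unitBallVolumeRoot n) * H := by
    rw [div_mul_eq_mul_div, le_div_iff₀ hω]
    linarith
  have hfinal : -w y ≤ 8 / (lam * unitBallVolumeRoot n) * r * H :=
    calc -w y = 4 * r * t := by linarith
      _ ≤ 4 * r * (2 / (lam * unitBallVolumeRoot n) * H) := by gcongr
      _ = 8 / (lam * unitBallVolumeRoot n) * r * H := by ring
  linarith

end ABP

/-! ### Propagation of positivity -/

section Barrier

variable {b h u v : ℝ^n → ℝ} {S : Set (ℝ^n)} {x₀ x y : ℝ^n} {r B c H β : ℝ}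

lemma le_pucciMinus_hess_comp_norm_sub_sq (hlam : 0 ≤ lam) (hLam : lam ≤ Lam) {g : ℝ → ℝ}
    (hg : ContDiffAt ℝ 2 g (‖x - x₀‖ ^ 2)) (hderiv : deriv g (‖x - x₀‖ ^ 2) ≤ 0)
    (hderiv₂ : 0 ≤ deriv (deriv g) (‖x - x₀‖ ^ 2)) :
    4 * lam * deriv (deriv g) (‖x - x₀‖ ^ 2) * ‖x - x₀‖ ^ 2
        + 2 * n * Lam * deriv g (‖x - x₀‖ ^ 2) ≤
      pucciMinus n lam Lam (hess n (fun y => g (‖y - x₀‖ ^ 2)) x) := by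
  have hle := le_pucciMinus_vecMulVec_sub (n := n) hlam hLam (x - x₀ : ℝ^n).ofLp
    (mul_nonneg zero_le_four hderiv₂) (mul_nonneg zero_le_two (neg_nonneg.2 hderiv))
  rw [mul_neg, neg_smul, sub_neg_eq_add, ← hess_comp_norm_sub_sq hg,
    ← EuclideanSpace.real_norm_sq_eq] at hle
  linarith

lemma IsSupersolutionOn.mono_set (hu : IsSupersolutionOn lam Lam b h u S) {S' : Set (ℝ^n)}
    (hS : S' ⊆ S) : IsSupersolutionOn lam Lam b h u S' :=
  { hu with
    contDiffAt := fun x hx => hu.contDiffAt x (hS hx)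
    pucci_le := fun x hx => hu.pucci_le x (hS hx) }

lemma IsSupersolutionOn.sub (hu : IsSupersolutionOn lam Lam b h u S) (hlam : 0 ≤ lam)
    (hLam : lam ≤ Lam) (hv : ∀ x ∈ S, ContDiffAt ℝ 2 v x)
    (hpucci : ∀ x ∈ S, -c ≤ pucciMinus n lam Lam (hess n v x))
    (hB : ∀ x ∈ S, ‖fderiv ℝ v x‖ ≤ B) :
    IsSupersolutionOn lam Lam b (fun x => h x + B * b x + c) (u - v) S where
  contDiffAt x hx := (hu.contDiffAt x hx).sub (hv x hx)
  pucci_le x hx := by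
    have hadd := pucciMinus_add_le hlam hLam (hess n (u - v) x) (hess n v x)
    rw [hess_sub (hu.contDiffAt x hx) (hv x hx), sub_add_cancel] at hadd
    have hnorm : ‖fderiv ℝ u x‖ ≤ ‖fderiv ℝ (u - v) x‖ + B := by
      rw [fderiv_sub ((hu.contDiffAt x hx).differentiableAt two_ne_zero)
        ((hv x hx).differentiableAt two_ne_zero)]
      exact (norm_le_norm_sub_add _ _).trans (add_le_add_right (hB x hx) _)
    have hdrift := mul_le_mul_of_nonneg_left hnorm (hu.drift_nonneg x)
    rw [hess_sub (hu.contDiffAt x hx) (hv x hx)]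
    linarith [hu.pucci_le x hx, hpucci x hx]
  measurable_drift := hu.measurable_drift
  drift_nonneg := hu.drift_nonneg
  measurable_source := (hu.measurable_source.add (hu.measurable_drift.const_mul B)).add_const c

theorem IsSupersolutionOn.sub_le_of_barrier [NeZero n] (hlam : 0 < lam) (hLam : lam ≤ Lam)
    (hr : 0 < r) (hu : ∀ x ∈ closedBall x₀ r, ContDiffAt ℝ 2 u x)
    (hsup : IsSupersolutionOn lam Lam b h u (ball x₀ r ∩ {x | u x < v x}))
    (hv : ∀ x ∈ closedBall x₀ r, ContDiffAt ℝ 2 v x) (hsphere : ∀ x ∈ sphere x₀ r, v x ≤ u x)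
    (hpucci : ∀ x ∈ ball x₀ r ∩ {x | u x < v x}, 0 ≤ pucciMinus n lam Lam (hess n v x))
    (hB : ∀ x ∈ ball x₀ r ∩ {x | u x < v x}, ‖fderiv ℝ v x‖ ≤ B) (hB0 : 0 ≤ B)
    (hb : PosPartLnLE b (ball x₀ r) β) (hβ0 : 0 ≤ β) (hβ : β ≤ lam * unitBallVolumeRoot n / 2)
    (hh : PosPartLnLE h (ball x₀ r) H) (hH : 0 ≤ H) (hy : y ∈ closedBall x₀ r) :
    v y - 8 / (lam * unitBallVolumeRoot n) * r * (H + B * β) ≤ u y := by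
  have hnegative : ball x₀ r ∩ {x | (u - v) x < 0} = ball x₀ r ∩ {x | u x < v x} := by
    simp only [Pi.sub_apply, sub_neg]
  have hsub := hsup.sub hlam.le hLam (c := 0) (fun x hx => hv x (ball_subset_closedBall hx.1))
    (by simpa only [neg_zero] using hpucci) hB
  simp only [add_zero, ← hnegative] at hsub
  have hABP := neg_le_of_isSupersolutionOn hlam hLam hr (fun x hx => (hu x hx).sub (hv x hx))
    (fun x hx => sub_nonneg.2 (hsphere x hx)) hsub (hb.mono hβ)
    (hh.add (hb.const_mul hB0) hsup.measurable_source (hsup.measurable_drift.const_mul B) hH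
      (by positivity)) (by positivity) hy
  linarith

end Barrier

section GaussianBarrier

variable {A m ρ : ℝ} {y z : ℝ^n}

/-- The profile, as a function of `|z - y|²`, of the barrier that propagates positivity from
`B_ρ(y)` to `B_{30ρ}(y)`. It vanishes at distance `40ρ`. -/
noncomputable def gaussianProfile (A m ρ s : ℝ) : ℝ :=
  m * (Real.exp (-(A / ρ ^ 2 * s)) - Real.exp (-(1600 * A)))

lemma contDiff_gaussianProfile : ContDiff ℝ 2 (gaussianProfile A m ρ) := by
  unfold gaussianProfile
  fun_prop

lemma deriv_gaussianProfile : deriv (gaussianProfile A m ρ) =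
    fun s => -(m * (A / ρ ^ 2)) * Real.exp (-(A / ρ ^ 2 * s)) := by
  ext s
  have hlinear : HasDerivAt (fun s : ℝ => -(A / ρ ^ 2 * s)) (-(A / ρ ^ 2)) s :=
    ((hasDerivAt_id' s).const_mul (A / ρ ^ 2)).fun_neg.congr_deriv (by rw [mul_one])
  refine (((hlinear.exp).sub_const _).const_mul m).deriv.trans ?_
  ring

lemma deriv_deriv_gaussianProfile : deriv (deriv (gaussianProfile A m ρ)) =
    fun s => m * (A / ρ ^ 2) ^ 2 * Real.exp (-(A / ρ ^ 2 * s)) := by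
  rw [deriv_gaussianProfile]
  ext s
  have hlinear : HasDerivAt (fun s : ℝ => -(A / ρ ^ 2 * s)) (-(A / ρ ^ 2)) s :=
    ((hasDerivAt_id' s).const_mul (A / ρ ^ 2)).fun_neg.congr_deriv (by rw [mul_one])
  refine ((hlinear.exp).const_mul _).deriv.trans ?_
  ring

lemma exp_neg_div_sq_mul_le_one (hA : 0 ≤ A) {s : ℝ} (hs : 0 ≤ s) :
    Real.exp (-(A / ρ ^ 2 * s)) ≤ 1 :=
  Real.exp_le_one_iff.2 (neg_nonpos.2 (by positivity))

lemma gaussianProfile_le (hA : 0 ≤ A) (hm : 0 ≤ m) {s : ℝ} (hs : 0 ≤ s) :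
    gaussianProfile A m ρ s ≤ m :=
  mul_le_of_le_one_right hm <|
    (sub_le_self _ (Real.exp_nonneg _)).trans (exp_neg_div_sq_mul_le_one hA hs)

lemma gaussianProfile_eq_zero (hρ : ρ ≠ 0) : gaussianProfile A m ρ ((40 * ρ) ^ 2) = 0 := by
  have hexponent : A / ρ ^ 2 * (40 * ρ) ^ 2 = 1600 * A := by
    field_simp
    ring
  rw [gaussianProfile, hexponent, sub_self, mul_zero]

lemma le_gaussianProfile (hA : 0 ≤ A) (hm : 0 ≤ m) (hρ : ρ ≠ 0) {s : ℝ} (hs : s ≤ (30 * ρ) ^ 2) :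
    m * (Real.exp (-(900 * A)) - Real.exp (-(1600 * A))) ≤ gaussianProfile A m ρ s := by
  have hexponent : A / ρ ^ 2 * s ≤ 900 * A :=
    calc A / ρ ^ 2 * s ≤ A / ρ ^ 2 * (30 * ρ) ^ 2 := by gcongr
      _ = 900 * A := by field_simp; ring
  unfold gaussianProfile
  gcongr

lemma norm_fderiv_gaussianProfile_le (hA : 0 ≤ A) (hm : 0 ≤ m) (hρ : 0 < ρ)
    (hz : ‖z - y‖ ≤ 40 * ρ) :
    ‖fderiv ℝ (fun z => gaussianProfile A m ρ (‖z - y‖ ^ 2)) z‖ ≤ m * (80 * A / ρ) := by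
  rw [(hasFDerivAt_comp_norm_sub_sq (contDiff_gaussianProfile.differentiable two_ne_zero _)).fderiv,
    norm_smul, innerSL_apply_norm, deriv_gaussianProfile, Real.norm_eq_abs]
  beta_reduce
  rw [neg_mul, mul_neg, abs_neg, abs_of_nonneg (by positivity)]
  calc _ ≤ 2 * (m * (A / ρ ^ 2) * 1) * (40 * ρ) := by
        gcongr
        exact exp_neg_div_sq_mul_le_one hA (sq_nonneg _)
    _ = m * (80 * A / ρ) := by field_simp; ring

lemma pucciMinus_hess_gaussianProfile_nonneg (hlam : 0 < lam) (hLam : lam ≤ Lam) (hm : 0 ≤ m)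
    (hρ : 0 < ρ) (hz : ρ ≤ ‖z - y‖) (hA : A = n * Lam / (2 * lam)) :
    0 ≤ pucciMinus n lam Lam (hess n (fun z => gaussianProfile A m ρ (‖z - y‖ ^ 2)) z) := by
  have hLam0 : 0 < Lam := hlam.trans_le hLam
  have hA0 : 0 ≤ A := hA ▸ by positivity
  have hAlam : n * Lam = 2 * lam * A := by rw [hA]; field_simp
  refine le_trans ?_ (le_pucciMinus_hess_comp_norm_sub_sq hlam.le hLam
    contDiff_gaussianProfile.contDiffAt ?_ ?_)
  · have hfar : A ≤ A / ρ ^ 2 * ‖z - y‖ ^ 2 :=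
      calc A = A / ρ ^ 2 * ρ ^ 2 := by field_simp
        _ ≤ A / ρ ^ 2 * ‖z - y‖ ^ 2 := by gcongr
    rw [deriv_deriv_gaussianProfile, deriv_gaussianProfile]
    set G := Real.exp (-(A / ρ ^ 2 * ‖z - y‖ ^ 2))
    calc 0 ≤ 4 * (lam * m * (A / ρ ^ 2) * G) * (A / ρ ^ 2 * ‖z - y‖ ^ 2 - A) :=
          mul_nonneg (by positivity) (sub_nonneg.2 hfar)
      _ = 4 * lam * (m * (A / ρ ^ 2) ^ 2 * G) * ‖z - y‖ ^ 2
          + 2 * (n * Lam) * (-(m * (A / ρ ^ 2)) * G) := by rw [hAlam]; ring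
      _ = _ := by ring
  · rw [deriv_gaussianProfile]
    exact mul_nonpos_of_nonpos_of_nonneg (neg_nonpos.2 (by positivity)) (Real.exp_nonneg _)
  · rw [deriv_deriv_gaussianProfile]
    positivity

end GaussianBarrier

section Propagation

/-- Comparison on `B_{40ρ}(y)` with the Gaussian barrier, which is at most `m` on `B_ρ(y)` and a
strict subsolution outside of it. -/
lemma sub_le_of_forall_ball_le [NeZero n] (hlam : 0 < lam) (hLam : lam ≤ Lam) {b h u : ℝ^n → ℝ}
    {y x : ℝ^n} {A ρ m H β : ℝ} (hA : A = n * Lam / (2 * lam)) (hρ : 0 < ρ) (hm : 0 ≤ m)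
    (hnonneg : ∀ x ∈ closedBall y (40 * ρ), 0 ≤ u x)
    (hsup : IsSupersolutionOn lam Lam b h u (closedBall y (40 * ρ)))
    (hb : PosPartLnLE b (ball y (40 * ρ)) β) (hβ0 : 0 ≤ β)
    (hβ : β ≤ lam * unitBallVolumeRoot n / 2)
    (hh : PosPartLnLE h (ball y (40 * ρ)) H) (hH : 0 ≤ H) (hu : ∀ x ∈ ball y ρ, m ≤ u x)
    (hx : x ∈ closedBall y (30 * ρ)) :
    m * (Real.exp (-(900 * A)) - Real.exp (-(1600 * A)))
      - 8 / (lam * unitBallVolumeRoot n) * (40 * ρ) * (H + m * (80 * A / ρ) * β) ≤ u x := by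
  have hLam0 : 0 < Lam := hlam.trans_le hLam
  have hA0 : 0 ≤ A := hA ▸ by positivity
  have hfar {z : ℝ^n} (hz : u z < gaussianProfile A m ρ (‖z - y‖ ^ 2)) : ρ ≤ ‖z - y‖ := by
    by_contra! hlt
    have hle := gaussianProfile_le (ρ := ρ) hA0 hm (sq_nonneg ‖z - y‖)
    linarith [hu z (mem_ball_iff_norm.2 hlt)]
  have hcomparison := IsSupersolutionOn.sub_le_of_barrier
    (v := fun z => gaussianProfile A m ρ (‖z - y‖ ^ 2)) hlam hLam (by positivity : 0 < 40 * ρ)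
    hsup.contDiffAt (hsup.mono_set (Set.inter_subset_left.trans ball_subset_closedBall))
    (fun _ _ => contDiffAt_comp_norm_sub_sq contDiff_gaussianProfile.contDiffAt)
    (fun z hz => by
      rw [mem_sphere_iff_norm.1 hz, gaussianProfile_eq_zero hρ.ne']
      exact hnonneg z (sphere_subset_closedBall hz))
    (fun z hz => pucciMinus_hess_gaussianProfile_nonneg hlam hLam hm hρ (hfar hz.2) hA)
    (fun z hz => norm_fderiv_gaussianProfile_le hA0 hm hρ (mem_ball_iff_norm.1 hz.1).le)
    (by positivity) hb hβ0 hβ hh hH (closedBall_subset_closedBall (by linarith) hx)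
  have hbarrier := le_gaussianProfile hA0 hm hρ.ne'
    (pow_le_pow_left₀ (norm_nonneg (x - y)) (mem_closedBall_iff_norm.1 hx) 2)
  linarith

theorem exists_forall_closedBall_le [NeZero n] (hlam : 0 < lam) (hLam : lam ≤ Lam) :
    ∃ δ c C : ℝ, 0 < δ ∧ 0 < c ∧ c ≤ 1 ∧ 0 < C ∧
      ∀ (u b h : ℝ^n → ℝ) (y : ℝ^n) (ρ m H : ℝ), 0 < ρ →
        (∀ x ∈ closedBall y (40 * ρ), 0 ≤ u x) →
        IsSupersolutionOn lam Lam b h u (closedBall y (40 * ρ)) →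
        PosPartLnLE b (ball y (40 * ρ)) δ → PosPartLnLE h (ball y (40 * ρ)) H → 0 ≤ H →
        (∀ x ∈ ball y ρ, m ≤ u x) → ∀ x ∈ closedBall y (30 * ρ), c * m - C * ρ * H ≤ u x := by
  have hLam0 : 0 < Lam := hlam.trans_le hLam
  have hω : 0 < lam * unitBallVolumeRoot n := mul_pos hlam unitBallVolumeRoot_pos
  have hn : 0 < (n : ℝ) := Nat.cast_pos.2 (NeZero.pos n)
  set A := n * Lam / (2 * lam) with hA
  have hA0 : 0 < A := by positivity
  set C₀ := 8 / (lam * unitBallVolumeRoot n)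
  have hC₀ : 0 < C₀ := by positivity
  set c := Real.exp (-(900 * A)) - Real.exp (-(1600 * A))
  have hc0 : 0 < c := sub_pos.2 (Real.exp_lt_exp.2 (by linarith))
  have hc1 : c ≤ 1 :=
    (sub_le_self _ (Real.exp_nonneg _)).trans (Real.exp_le_one_iff.2 (by linarith))
  set δ := min (lam * unitBallVolumeRoot n / 2) (c / (6400 * C₀ * A))
  have hδ0 : 0 < δ := by positivity
  refine ⟨δ, c / 2, 40 * C₀, hδ0, by positivity, by linarith, by positivity, ?_⟩
  intro u b h y ρ m H hρ hnonneg hsup hb hh hH hu x hx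
  rcases le_or_gt m 0 with hm | hm
  · have hux := hnonneg x (closedBall_subset_closedBall (by linarith) hx)
    have hcm : c / 2 * m ≤ 0 := mul_nonpos_of_nonneg_of_nonpos (by positivity) hm
    have hsource : 0 ≤ 40 * C₀ * ρ * H := by positivity
    linarith
  · have hbound := sub_le_of_forall_ball_le hlam hLam hA hρ hm.le hnonneg hsup hb hδ0.le
      (min_le_left _ _) hh hH hu hx
    have hdrift : C₀ * (40 * ρ) * (m * (80 * A / ρ) * δ) ≤ m * (c / 2) :=
      calc C₀ * (40 * ρ) * (m * (80 * A / ρ) * δ) = m * (3200 * C₀ * A * δ) := by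
            field_simp
            ring
        _ ≤ m * (3200 * C₀ * A * (c / (6400 * C₀ * A))) := by
            gcongr
            exact min_le_right _ _
        _ = m * (c / 2) := by
            field_simp
            ring
    linarith

end Propagation

section Chain

variable {E : Type*} [NormedAddCommGroup E] [NormedSpace ℝ E] {u : E → ℝ}
  {c D r₀ ρ m M : ℝ} {v x y : E}

/-- A lower bound for `u` on a ball in the unit ball propagates to the concentric ball that is
thirty times larger, with a multiplicative loss `c` and an additive loss `D` times the radius. Only
radii up to `r₀` are considered, because the drift has to be small on the balls involved. -/
def ExpandsPositivity (c D r₀ : ℝ) (u : E → ℝ) : Prop :=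
  ∀ (y : E) (ρ m : ℝ), 0 < ρ → ρ ≤ r₀ → ‖y‖ + 40 * ρ < 1 → (∀ x ∈ ball y ρ, m ≤ u x) →
    ∀ x ∈ closedBall y (30 * ρ), c * m - D * ρ ≤ u x

namespace ExpandsPositivity

lemma exists_ball_three_halves (hu : ExpandsPositivity c D r₀ u)
    (hu0 : ∀ x ∈ ball 0 1, 0 ≤ u x) (hr₀ : r₀ ≤ 1 / 140) (hρ : 0 < ρ) (hρr₀ : ρ ≤ r₀)
    (hy : ‖y‖ + 40 * ρ < 1) (hm : ∀ x ∈ ball y ρ, m ≤ u x) :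
    ∃ y' : E, ‖y'‖ + 40 * (3 / 2 * ρ) < 1 ∧
      ∀ x ∈ ball y' (3 / 2 * ρ), max (c * m - D * ρ) 0 ≤ u x := by
  have hρ140 : ρ ≤ 1 / 140 := hρr₀.trans hr₀
  have hfactor : 0 < 1 - 28 * ρ := by linarith
  have hnorm : ‖(1 - 28 * ρ) • y‖ = (1 - 28 * ρ) * ‖y‖ := by
    rw [norm_smul, Real.norm_of_nonneg hfactor.le]
  have hdist : dist ((1 - 28 * ρ) • y) y ≤ 28 * ρ := by
    rw [dist_eq_norm, show (1 - 28 * ρ) • y - y = -((28 * ρ) • y) by module, norm_neg, norm_smul,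
      Real.norm_of_nonneg (by positivity)]
    exact mul_le_of_le_one_right (by positivity) (by linarith)
  refine ⟨(1 - 28 * ρ) • y, ?_, fun x hx => ?_⟩
  · have hlt := mul_lt_mul_of_pos_left (show ‖y‖ < 1 - 40 * ρ by linarith) hfactor
    have hρsq := mul_nonneg hρ.le (sub_nonneg.2 hρ140)
    rw [hnorm]
    linarith
  · have hx' : x ∈ closedBall y (30 * ρ) :=
      ball_subset_closedBall (ball_subset_ball' (by linarith) hx)
    exact max_le (hu y ρ m hρ hρr₀ hy hm x hx')
      (hu0 x (closedBall_subset_ball' (by rw [dist_zero_right]; linarith) hx'))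

lemma exists_large_ball (hu : ExpandsPositivity c D r₀ u) (hu0 : ∀ x ∈ ball 0 1, 0 ≤ u x)
    (hc : 0 ≤ c) (hc1 : c ≤ 1) (hD : 0 ≤ D) (hr₀ : r₀ ≤ 1 / 140) {k : ℕ} (hρ : 0 < ρ)
    (hρr₀ : ρ ≤ r₀) (hk : (2 / 3) ^ (k + 1) * r₀ < ρ) (hy : ‖y‖ + 40 * ρ < 1) (hm0 : 0 ≤ m)
    (hm : ∀ x ∈ ball y ρ, m ≤ u x) :
    ∃ (y' : E) (ρ' : ℝ), ρ ≤ ρ' ∧ 2 / 3 * r₀ < ρ' ∧ ρ' ≤ r₀ ∧ ‖y'‖ + 40 * ρ' < 1 ∧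
      ∀ x ∈ ball y' ρ', c ^ k * m - 2 * D * (ρ' - ρ) ≤ u x := by
  rcases lt_or_ge (2 / 3 * r₀) ρ with hlarge | hsmall
  · refine ⟨y, ρ, le_rfl, hlarge, hρr₀, hy, fun x hx => ?_⟩
    rw [sub_self, mul_zero, sub_zero]
    exact (mul_le_of_le_one_left hm0 (pow_le_one₀ hc hc1)).trans (hm x hx)
  induction k generalizing y ρ m with
  | zero => linarith
  | succ k ih =>
    obtain ⟨y₁, hy₁, hm₁⟩ := hu.exists_ball_three_halves hu0 hr₀ hρ hρr₀ hy hm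
    have hloss : c ^ k * (D * ρ) ≤ D * ρ :=
      mul_le_of_le_one_left (by positivity) (pow_le_one₀ hc hc1)
    have hmax : c ^ (k + 1) * m - c ^ k * (D * ρ) ≤ c ^ k * max (c * m - D * ρ) 0 :=
      calc _ = c ^ k * (c * m - D * ρ) := by ring
        _ ≤ _ := by gcongr; exact le_max_left _ _
    rcases lt_or_ge (2 / 3 * r₀) (3 / 2 * ρ) with hlarge₁ | hsmall₁
    · refine ⟨y₁, 3 / 2 * ρ, by linarith, hlarge₁, by linarith, hy₁, fun x hx => ?_⟩
      have := (mul_le_of_le_one_left (le_max_right (c * m - D * ρ) 0)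
        (pow_le_one₀ (n := k) hc hc1)).trans (hm₁ x hx)
      linarith
    · obtain ⟨y', ρ', hρ', hlarge', hρ'r₀, hy', hm'⟩ := ih (by positivity) (by linarith)
        (by rw [pow_succ] at hk; linarith) hy₁ (le_max_right _ _) hm₁ hsmall₁
      refine ⟨y', ρ', le_trans (by linarith) hρ', hlarge', hρ'r₀, hy', fun x hx => ?_⟩
      linarith [hm' x hx]

lemma pow_mul_sub_le_of_mem_ball_add_smul (hu : ExpandsPositivity c D r₀ u) (hc : 0 ≤ c)
    (hc1 : c ≤ 1) (hD : 0 ≤ D) (hρ : 0 < ρ) (hρr₀ : ρ ≤ r₀) (hv : ‖v‖ ≤ 28 * ρ) {k : ℕ}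
    (hy : ‖y‖ + 40 * ρ < 1) (hy' : ‖y + (k : ℝ) • v‖ + 40 * ρ < 1)
    (hm : ∀ x ∈ ball y ρ, m ≤ u x) (hx : x ∈ ball (y + (k : ℝ) • v) ρ) :
    c ^ k * m - k * D ≤ u x := by
  induction k generalizing y m with
  | zero => simpa using hm x (by simpa using hx)
  | succ k ih =>
    have hstep : y + ((k + 1 : ℕ) : ℝ) • v = y + v + (k : ℝ) • v := by
      push_cast
      module
    have hyv : y + v ∈ ball 0 (1 - 40 * ρ) := by
      have hy₀ : y ∈ ball 0 (1 - 40 * ρ) := mem_ball_zero_iff.2 (by linarith)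
      have hend : y + ((k + 1 : ℕ) : ℝ) • v ∈ ball 0 (1 - 40 * ρ) :=
        mem_ball_zero_iff.2 (by linarith)
      have hmem := (convex_ball (0 : E) (1 - 40 * ρ)).add_smul_mem hy₀ hend
        (t := 1 / (k + 1)) ⟨by positivity, (div_le_one (by positivity)).2 (by linarith)⟩
      rwa [smul_smul, Nat.cast_succ, one_div_mul_cancel (by positivity), one_smul] at hmem
    have hsub : ball (y + v) ρ ⊆ closedBall y (30 * ρ) :=
      ball_subset_closedBall.trans (closedBall_subset_closedBall' (by
        rw [dist_self_add_left]
        linarith))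
    have hchain := ih (by linarith [mem_ball_zero_iff.1 hyv]) (hstep ▸ hy')
      (fun z hz => hu y ρ m hρ hρr₀ hy hm z (hsub hz)) (hstep ▸ hx)
    have hloss : c ^ k * (D * ρ) ≤ D :=
      (mul_le_of_le_one_left (by positivity) (pow_le_one₀ hc hc1)).trans
        (mul_le_of_le_one_right hD (by linarith [norm_nonneg y]))
    calc c ^ (k + 1) * m - (k + 1 : ℕ) * D = c ^ k * (c * m) - D - k * D := by
          push_cast
          ring
      _ ≤ c ^ k * (c * m - D * ρ) - k * D := by linarith
      _ ≤ u x := hchain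

/-- Growing balls by factors `3/2` reaches the scale `r₀` at the cost of a power of the initial
radius; `N` further steps at that scale reach every other point. -/
theorem pow_mul_pow_mul_sub_le (hu : ExpandsPositivity c D r₀ u) (hu0 : ∀ x ∈ ball 0 1, 0 ≤ u x)
    (hc : 0 ≤ c) (hc1 : c ≤ 1) (hD : 0 ≤ D) (hr₀0 : 0 < r₀) (hr₀ : r₀ ≤ 1 / 140) {γ N : ℕ}
    (hγ : (2 / 3) ^ γ ≤ c) (hN : 1 / (9 * r₀) < N) (hρ : 0 < ρ) (hρr₀ : ρ ≤ r₀)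
    (hy : ‖y‖ + 40 * ρ < 1) (hm0 : 0 ≤ m) (hm : ∀ x ∈ ball y ρ, m ≤ u x)
    (hx : ‖x‖ + 40 * r₀ < 1) : c ^ N * ρ ^ γ * m - (2 + N) * D ≤ u x := by
  have hN0 : (0 : ℝ) < N := lt_trans (by positivity) hN
  obtain ⟨k, hk, hk'⟩ := exists_nat_pow_near_of_lt_one (x := ρ / r₀) (y := 2 / 3) (by positivity)
    ((div_le_one hr₀0).2 hρr₀) (by norm_num) (by norm_num)
  obtain ⟨y', ρ', hρρ', hlarge, hρ'r₀, hy', hm'⟩ := hu.exists_large_ball hu0 hc hc1 hD hr₀ hρ hρr₀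
    ((lt_div_iff₀ hr₀0).1 hk) hy hm0 hm
  have hend : y' + (N : ℝ) • (N : ℝ)⁻¹ • (x - y') = x := by
    rw [smul_inv_smul₀ hN0.ne', add_sub_cancel]
  have hstep : ‖(N : ℝ)⁻¹ • (x - y')‖ ≤ 28 * ρ' := by
    rw [norm_smul, norm_inv, RCLike.norm_natCast, inv_mul_le_iff₀ hN0]
    rw [div_lt_iff₀ (by positivity)] at hN
    have hlargeN : N * (28 * (2 / 3 * r₀)) ≤ N * (28 * ρ') := by gcongr
    linarith [norm_sub_le x y']
  have hline := hu.pow_mul_sub_le_of_mem_ball_add_smul hc hc1 hD (hρ.trans_le hρρ') hρ'r₀ hstep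
    (x := x) hy' (by rw [hend]; linarith) hm'
    (by rw [hend]; exact mem_ball_self (hρ.trans_le hρρ'))
  have hpow : ρ ^ γ ≤ c ^ k :=
    calc ρ ^ γ ≤ (ρ / r₀) ^ γ := by
          gcongr
          exact le_div_self hρ.le hr₀0 (by linarith)
      _ ≤ ((2 / 3) ^ k) ^ γ := by gcongr
      _ = ((2 / 3) ^ γ) ^ k := pow_right_comm _ _ _
      _ ≤ c ^ k := by gcongr
  have hloss : c ^ N * (2 * D * (ρ' - ρ)) ≤ 2 * D := by
    refine (mul_le_of_le_one_left ?_ (pow_le_one₀ hc hc1)).trans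
      (mul_le_of_le_one_right (by positivity) (by linarith))
    exact mul_nonneg (by positivity) (sub_nonneg.2 hρρ')
  calc c ^ N * ρ ^ γ * m - (2 + N) * D ≤ c ^ N * c ^ k * m - (2 + N) * D := by gcongr
    _ ≤ c ^ N * (c ^ k * m - 2 * D * (ρ' - ρ)) - N * D := by linarith
    _ ≤ u x := hline

lemma exists_mem_ball_lt (hu : ExpandsPositivity c D r₀ u) (hu0 : ∀ x ∈ ball 0 1, 0 ≤ u x)
    (hc : 0 < c) (hc1 : c ≤ 1) (hD : 0 ≤ D) (hr₀0 : 0 < r₀) (hr₀ : r₀ ≤ 1 / 140) {γ N : ℕ}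
    (hγ : (2 / 3) ^ γ ≤ c) (hN : 1 / (9 * r₀) < N) (hρ : 0 < ρ) (hρr₀ : ρ ≤ r₀)
    (hy : ‖y‖ + 40 * ρ < 1) (hx : ‖x‖ + 40 * r₀ < 1) (hM : u x < M) :
    ∃ z ∈ ball y ρ, u z < (M + (2 + N) * D) / (c ^ N * ρ ^ γ) := by
  by_contra! hge
  have hM0 : 0 ≤ M := (hu0 x (mem_ball_zero_iff.2 (by linarith))).trans hM.le
  have hle := hu.pow_mul_pow_mul_sub_le hu0 hc.le hc1 hD hr₀0 hr₀ hγ hN hρ hρr₀ hy (by positivity)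
    hge hx
  rw [mul_div_cancel₀ _ (by positivity)] at hle
  linarith

end ExpandsPositivity

end Chain

section NonnegSupersolution

/-- The standing hypotheses in the unit ball. The bound on the `Lⁿ` norm of the drift on small balls
follows from its `L^q` norm and Hölder's inequality, with `α = 1 - n/q`. -/
structure IsNonnegSupersolution (lam Lam K α : ℝ) (b h u : ℝ^n → ℝ) : Prop
    extends IsSupersolutionOn lam Lam b h u (ball 0 1) where
  nonneg : ∀ x ∈ ball 0 1, 0 ≤ u x
  drift_le : ∀ (x : ℝ^n) (r : ℝ), 0 < r → PosPartLnLE b (ball x r) (K * r ^ α)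

variable {K α r r' δ : ℝ} {b h u : ℝ^n → ℝ} {x : ℝ^n}

lemma IsNonnegSupersolution.drift_le_of_le (hu : IsNonnegSupersolution lam Lam K α b h u)
    (hα : 0 ≤ α) (hK : 0 ≤ K) (hr : 0 < r) (hr' : r ≤ r') (hδ : K * r' ^ α ≤ δ) :
    PosPartLnLE b (ball x r) δ :=
  (hu.drift_le x r hr).mono (le_trans (by gcongr) hδ)

theorem exists_expandsPositivity [NeZero n] (hlam : 0 < lam) (hLam : lam ≤ Lam) :
    ∃ δ c C : ℝ, 0 < δ ∧ 0 < c ∧ c ≤ 1 ∧ 0 < C ∧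
      ∀ (K α r₀ H : ℝ) (b h u : ℝ^n → ℝ), 0 ≤ K → 0 ≤ α → K * (40 * r₀) ^ α ≤ δ →
        IsNonnegSupersolution lam Lam K α b h u → PosPartLnLE h (ball 0 1) H → 0 ≤ H →
        ExpandsPositivity c (C * H) r₀ u := by
  obtain ⟨δ, c, C, hδ, hc, hc1, hC, hpropagate⟩ := exists_forall_closedBall_le (n := n) hlam hLam
  refine ⟨δ, c, C, hδ, hc, hc1, hC, fun K α r₀ H b h u hK hα hdrift hu hh hH => ?_⟩
  intro y ρ m hρ hρr₀ hy hm x hx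
  have hsub : closedBall y (40 * ρ) ⊆ ball 0 1 :=
    closedBall_subset_ball' (by rw [dist_zero_right]; linarith)
  rw [mul_right_comm]
  exact hpropagate u b h y ρ m H hρ (fun x hx => hu.nonneg x (hsub hx))
    (hu.toIsSupersolutionOn.mono_set hsub)
    (hu.drift_le_of_le hα hK (by positivity) (by linarith) hdrift)
    (hh.mono_set (ball_subset_closedBall.trans hsub)) hH hm x hx

end NonnegSupersolution

/-! ### Growth of contact sets -/

section TouchingParaboloid

variable {F : Type*} [NormedAddCommGroup F] [InnerProductSpace ℝ F] {u : F → ℝ} {U : Set F}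
  {a κ : ℝ} {x x₁ : F}

/-- The concave paraboloid of opening `a` with the value and slope of `u` at `x₁`. -/
noncomputable def touchingParaboloid (a : ℝ) (u : F → ℝ) (x₁ z : F) : ℝ :=
  u x₁ + fderiv ℝ u x₁ (z - x₁) - a / 2 * ‖z - x₁‖ ^ 2

lemma contDiff_touchingParaboloid : ContDiff ℝ 2 (touchingParaboloid a u x₁) :=
  (contDiff_const.add ((fderiv ℝ u x₁).contDiff.comp (contDiff_id.sub contDiff_const))).sub
    (contDiff_const.mul ((contDiff_id.sub contDiff_const).norm_sq ℝ))

lemma fderiv_touchingParaboloid :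
    fderiv ℝ (touchingParaboloid a u x₁) x = fderiv ℝ u x₁ - a • innerSL ℝ (x - x₁) := by
  have haffine : HasFDerivAt (fun z => u x₁ + fderiv ℝ u x₁ (z - x₁)) (fderiv ℝ u x₁) x := by
    simpa using ((fderiv ℝ u x₁).hasFDerivAt.comp x ((hasFDerivAt_id x).sub_const x₁)).const_add
      (u x₁)
  have hsq : HasFDerivAt (fun z => a / 2 * ‖z - x₁‖ ^ 2) (a • innerSL ℝ (x - x₁)) x := by
    refine (hasFDerivAt_comp_norm_sub_sq (g := fun s => a / 2 * s) (by fun_prop)).congr_fderiv ?_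
    rw [deriv_const_mul_field, deriv_id'', mul_one, mul_div_cancel₀ a two_ne_zero]
  exact (haffine.sub hsq).fderiv

lemma norm_fderiv_touchingParaboloid_le (ha : 0 ≤ a) :
    ‖fderiv ℝ (touchingParaboloid a u x₁) x‖ ≤ ‖fderiv ℝ u x₁‖ + a * ‖x - x₁‖ := by
  rw [fderiv_touchingParaboloid]
  refine (norm_sub_le _ _).trans_eq ?_
  rw [norm_smul, innerSL_apply_norm, Real.norm_of_nonneg ha]

lemma touchingParaboloid_eq (x z : F) : touchingParaboloid a u x₁ z =
    touchingParaboloid a u x₁ x + fderiv ℝ (touchingParaboloid a u x₁) x (z - x)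
      - a / 2 * ‖z - x‖ ^ 2 := by
  have hsplit : z - x₁ = (z - x) + (x - x₁) := (sub_add_sub_cancel z x x₁).symm
  rw [fderiv_touchingParaboloid, touchingParaboloid, touchingParaboloid, hsplit, map_add,
    norm_add_sq_real, real_inner_comm]
  simp only [sub_apply, smul_apply, innerSL_apply_apply, smul_eq_mul]
  ring

lemma contactSet_sub_touchingParaboloid_subset (hu : ∀ x ∈ U, DifferentiableAt ℝ u x) :
    contactSet κ (u - touchingParaboloid a u x₁) U ⊆ contactSet (κ + a) u U := by
  refine fun x hx => ⟨hx.1, fun z hz => ?_⟩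
  have htouch := hx.2 z hz
  have hparaboloid : DifferentiableAt ℝ (touchingParaboloid a u x₁) x :=
    contDiff_touchingParaboloid.contDiffAt.differentiableAt two_ne_zero
  rw [fderiv_sub (hu x hx.1) hparaboloid] at htouch
  simp only [Pi.sub_apply, sub_apply] at htouch
  linarith [touchingParaboloid_eq (a := a) (u := u) (x₁ := x₁) x z]

lemma hess_touchingParaboloid {u : ℝ^n → ℝ} {x₁ : ℝ^n} (x : ℝ^n) :
    hess n (touchingParaboloid a u x₁) x = -a • (1 : Matrix (Fin n) (Fin n) ℝ) := by
  have haffine : hess n (fun z => u x₁ + fderiv ℝ u x₁ (z - x₁)) x = 0 := by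
    ext i j
    simp [hess, fderiv_sub_const]
  have heq : touchingParaboloid a u x₁ =
      (fun z => u x₁ + fderiv ℝ u x₁ (z - x₁)) - fun z => a / 2 * ‖z - x₁‖ ^ 2 := rfl
  have hsq : ContDiffAt ℝ 2 (fun z => a / 2 * ‖z - x₁‖ ^ 2) x :=
    contDiffAt_const.mul ((contDiffAt_id.sub contDiffAt_const).norm_sq ℝ)
  rw [heq, hess_sub (by fun_prop) hsq, haffine, hess_mul_norm_sub_sq, zero_sub,
    mul_div_cancel₀ a two_ne_zero, neg_smul]

end TouchingParaboloid

section Sliding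

/-- Sliding paraboloids with vertices near `x'` from below, the first contact takes place near
`x'`, because the value of `w` at `x₂` is small. -/
lemma ball_subset_image_contactSet {F : Type*} [NormedAddCommGroup F] [InnerProductSpace ℝ F]
    [CompleteSpace F] {w : F → ℝ} {U : Set F} {x' x₂ : F} {κ d : ℝ} (hU : IsCompact U)
    (hw : ∀ x ∈ U, DifferentiableAt ℝ w x) (hnonneg : ∀ x ∈ U, 0 ≤ w x) (hκ : 0 < κ) (hd : 0 < d)
    (hball : closedBall x' (d / 4) ⊆ U) (hx₂ : x₂ ∈ closedBall x' (d / 16))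
    (hwx₂ : w x₂ ≤ κ * d ^ 2 / 52) :
    ball (κ • x') (κ * d / 32) ⊆ shiftedGradient κ w ''
      (contactSet κ w U ∩ ball x' (d / 4) ∩ {z | ‖fderiv ℝ w z‖ ≤ κ * d / 2}) := by
  intro ξ hξ
  obtain ⟨y, rfl⟩ : ∃ y, ξ = κ • y := ⟨κ⁻¹ • ξ, (smul_inv_smul₀ hκ.ne' ξ).symm⟩
  have hy : dist y x' < d / 32 := by
    rw [mem_ball, dist_smul₀, Real.norm_of_nonneg hκ.le, mul_div_assoc] at hξ
    exact lt_of_mul_lt_mul_left hξ hκ.le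
  have hx₂U : x₂ ∈ U := hball (closedBall_subset_closedBall (by linarith) hx₂)
  have hcont : ContinuousOn (fun z => w z + κ / 2 * ‖z‖ ^ 2 - inner ℝ (κ • y) z) U :=
    (ContinuousOn.add (fun z hz => (hw z hz).continuousAt.continuousWithinAt)
      (by fun_prop)).sub (by fun_prop)
  obtain ⟨z, hzU, hmin⟩ := hU.exists_isMinOn ⟨x₂, hx₂U⟩ hcont
  have hsquare (z : F) :
      κ / 2 * ‖z‖ ^ 2 - inner ℝ (κ • y) z = κ / 2 * dist z y ^ 2 - κ / 2 * ‖y‖ ^ 2 := by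
    rw [dist_eq_norm, norm_sub_sq_real, real_inner_smul_left, real_inner_comm]
    ring
  have hx₂y : dist x₂ y ≤ 3 * d / 32 := by
    linarith [mem_closedBall.1 hx₂, dist_triangle_right x₂ y x']
  have hzy : dist z y < 7 * d / 32 := by
    have hle : κ / 2 * dist x₂ y ^ 2 ≤ κ / 2 * (3 * d / 32) ^ 2 := by gcongr
    have hzx₂ := isMinOn_iff.1 hmin x₂ hx₂U
    by_contra! hge
    have hge : κ / 2 * (7 * d / 32) ^ 2 ≤ κ / 2 * dist z y ^ 2 := by gcongr
    linarith [hsquare z, hsquare x₂, hnonneg z hzU, mul_pos hκ (pow_pos hd 2)]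
  have hzball : z ∈ ball x' (d / 4) := by
    rw [mem_ball]
    linarith [dist_triangle z y x']
  have hUz : U ∈ nhds z :=
    Filter.mem_of_superset (isOpen_ball.mem_nhds hzball) (ball_subset_closedBall.trans hball)
  have himage := shiftedGradient_eq_of_isMinOn hUz (hw z hzU) hmin
  refine ⟨z, ⟨⟨mem_contactSet_of_isMinOn hUz (hw z hzU) hmin, hzball⟩, ?_⟩, himage⟩
  rw [Set.mem_ofPred_eq, norm_fderiv_eq_norm_shiftedGradient_sub (κ := κ), himage, ← dist_eq_norm,
    dist_smul₀, Real.norm_of_nonneg hκ.le, mul_div_assoc, dist_comm]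
  gcongr
  linarith

variable {b g h u v : ℝ^n → ℝ} {U : Set (ℝ^n)} {x x₁ x₂ x' : ℝ^n}
  {κ d C β H ρ a : ℝ}

lemma IsSupersolutionOn.sub_touchingParaboloid (hu : IsSupersolutionOn lam Lam b h u U)
    (hlam : 0 ≤ lam) (hLam : lam ≤ Lam) (ha : 0 ≤ a) (hU : ∀ x ∈ U, dist x x₁ ≤ d) :
    IsSupersolutionOn lam Lam b (fun x => h x + (‖fderiv ℝ u x₁‖ + a * d) * b x + n * Lam * a)
      (u - touchingParaboloid a u x₁) U := by
  refine hu.sub hlam hLam (fun x _ => contDiff_touchingParaboloid.contDiffAt) (fun x _ => ?_)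
    fun x hx => (norm_fderiv_touchingParaboloid_le ha).trans ?_
  · rw [hess_touchingParaboloid]
    exact le_pucciMinus_neg_smul_one hLam ha
  · rw [← dist_eq_norm]
    gcongr
    exact hU x hx

lemma pow_lt_volume_contactSet_inter_ball [NeZero n] (hlam : 0 < lam) (hLam : lam ≤ Lam)
    (hU : IsCompact U) (hv : ∀ x ∈ U, ContDiffAt ℝ 2 v x) (hnonneg : ∀ x ∈ U, 0 ≤ v x)
    (hκ : 0 < κ) (hd : 0 < d)
    (hball : closedBall x' (d / 4) ⊆ U) (hx₂ : x₂ ∈ closedBall x' (d / 16))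
    (hvx₂ : v x₂ ≤ κ * d ^ 2 / 52) (hC : 0 ≤ C)
    (hsup : IsSupersolutionOn lam Lam b (fun x => g x + C) v (ball x' (d / 4)))
    (hg : Measurable g) (hbL : PosPartLnLE b (ball x' (d / 4)) β) (hβ : 0 ≤ β)
    (hgL : PosPartLnLE g (ball x' (d / 4)) H) (hH : 0 ≤ H) (hρ : 0 ≤ ρ)
    (hsmall : κ * d / 2 * β + H + (C + n * Lam * κ) * ρ <
      lam * unitBallVolumeRoot n * (κ * d / 32)) :
    ENNReal.ofReal ρ ^ n < volume (contactSet κ v U ∩ ball x' (d / 4)) := by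
  have hLam0 : 0 < Lam := hlam.trans_le hLam
  by_contra! hvolume
  set Z := contactSet κ v U ∩ ball x' (d / 4) ∩ {z | ‖fderiv ℝ v z‖ ≤ κ * d / 2}
  have hZball : Z ⊆ ball x' (d / 4) := fun x hx => hx.1.2
  have hZU : Z ⊆ U := fun x hx => hx.1.1.1
  have hZ : MeasurableSet Z :=
    ((isClosed_contactSet hU.isClosed (fun x hx => (hv x hx).of_le one_le_two) κ
      ).measurableSet.inter measurableSet_ball).inter
      (measurableSet_le (measurable_fderiv ℝ v).norm measurable_const)
  have hsource : PosPartLnLE (fun x => (κ * d / 2 * b x + g x) + (C + n * Lam * κ)) Z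
      (κ * d / 2 * β + H + (C + n * Lam * κ) * ρ) :=
    (((hbL.const_mul (by positivity)).add hgL (hsup.measurable_drift.const_mul _) hg
      (by positivity) hH).mono_set hZball).add
      (.const (by positivity) ((measure_mono Set.inter_subset_left).trans hvolume))
      ((hsup.measurable_drift.const_mul _).add hg) measurable_const (by positivity) (by positivity)
  refine hsmall.not_ge (mul_radius_le_of_ball_subset_image hlam hLam hκ.le hZ
    (fun x hx => hv x (hZU hx)) (fun x hx => ?_) (fun x hx => ?_) hsource (by positivity)
    (by positivity) (ball_subset_image_contactSet hU
      (fun x hx => (hv x hx).differentiableAt two_ne_zero) hnonneg hκ hd hball hx₂ hvx₂))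
  · exact posSemidef_hess_add_smul_one hx.1.1 (Filter.mem_of_superset
      (isOpen_ball.mem_nhds (hZball hx)) (ball_subset_closedBall.trans hball)) (hv x (hZU hx))
  · have hgradient : ‖fderiv ℝ v x‖ ≤ κ * d / 2 := hx.2
    linarith [hsup.pucci_le x (hZball hx),
      mul_le_mul_of_nonneg_left hgradient (hsup.drift_nonneg x)]

/-- If a point `x₁` near `x` is touched by a paraboloid of opening `a`, then the points touched by
paraboloids of opening `M * a` fill a fixed fraction of a ball near `x`. -/
def SpreadsContact (M η c : ℝ) (b h u : ℝ^n → ℝ) (U : Set (ℝ^n)) : Prop :=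
  ∀ (x x₁ x' : ℝ^n) (a d : ℝ), 0 < a → 0 < d → x₁ ∈ contactSet a u U → dist x₁ x ≤ d →
    dist x' x ≤ d / 4 → closedBall x (3 * d) ⊆ U → PosPartLnLE b (ball x (3 * d)) η →
    PosPartLnLE (fun z => h z + ‖fderiv ℝ u x₁‖ * b z) (ball x (3 * d)) (η * a * d) →
    ENNReal.ofReal (c * d) ^ n < volume (contactSet (M * a) u U ∩ ball x' (d / 4))

lemma exists_mem_ball_le_of_eq_zero [NeZero n] (hlam : 0 < lam) (hLam : lam ≤ Lam) :
    ∃ δ C : ℝ, 0 < δ ∧ 0 < C ∧ ∀ (u b h : ℝ^n → ℝ) (y x : ℝ^n) (ρ H : ℝ), 0 < ρ →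
      (∀ x ∈ closedBall y (40 * ρ), 0 ≤ u x) →
      IsSupersolutionOn lam Lam b h u (closedBall y (40 * ρ)) →
      PosPartLnLE b (ball y (40 * ρ)) δ → PosPartLnLE h (ball y (40 * ρ)) H → 0 < H →
      x ∈ closedBall y (30 * ρ) → u x = 0 → ∃ z ∈ ball y ρ, u z ≤ C * ρ * H := by
  obtain ⟨δ, c, C, hδ, hc, -, hC, hpropagate⟩ := exists_forall_closedBall_le (n := n) hlam hLam
  refine ⟨δ, 2 * C / c, hδ, by positivity, fun u b h y x ρ H hρ hu hsup hb hh hH hx hux => ?_⟩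
  by_contra! hlt
  have hle := hpropagate u b h y ρ _ H hρ hu hsup hb hh hH.le (fun z hz => (hlt z hz).le) x hx
  have hcancel : c * (2 * C / c * ρ * H) = 2 * (C * ρ * H) := by field_simp
  have hpos : 0 < C * ρ * H := by positivity
  linarith

lemma posPartLnLE_source_add_drift [NeZero n] {S : Set (ℝ^n)} {p η : ℝ} (hh : Measurable h)
    (hb : Measurable b) (hη : 0 ≤ η) (ha : 0 ≤ a) (hd : 0 ≤ d) (hbL : PosPartLnLE b S η)
    (hhL : PosPartLnLE (fun z => h z + p * b z) S (η * a * d)) :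
    PosPartLnLE (fun z => h z + (p + a * (4 * d)) * b z) S (5 * η * a * d) := by
  have hsum := hhL.add (hbL.const_mul (c := a * (4 * d)) (by positivity))
    (hh.add (hb.const_mul p)) (hb.const_mul _) (by positivity) (by positivity)
  convert hsum using 2 <;> ring

lemma closedBall_subset_ball_of_dist_le (hd : 0 < d) (hx' : dist x' x ≤ d / 4) :
    closedBall x' (40 * (d / 16)) ⊆ ball x (3 * d) :=
  closedBall_subset_ball' (by linarith)

/-- Subtracting the paraboloid that touches at `x₁` gives a nonnegative supersolution vanishing at
`x₁`. -/
lemma exists_sub_touchingParaboloid_le [NeZero n] (hlam : 0 < lam) (hLam : lam ≤ Lam) :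
    ∃ δ C : ℝ, 0 < δ ∧ 0 < C ∧ ∀ (b h u : ℝ^n → ℝ) (U : Set (ℝ^n)) (x x₁ x' : ℝ^n) (a d η : ℝ),
      IsSupersolutionOn lam Lam b h u U → 0 < a → 0 < d → 0 ≤ η → η ≤ δ →
      x₁ ∈ contactSet a u U → dist x₁ x ≤ d → dist x' x ≤ d / 4 → closedBall x (3 * d) ⊆ U →
      PosPartLnLE b (ball x (3 * d)) η →
      PosPartLnLE (fun z => h z + ‖fderiv ℝ u x₁‖ * b z) (ball x (3 * d)) (η * a * d) →
      ∃ x₂ ∈ ball x' (d / 16), (u - touchingParaboloid a u x₁) x₂ ≤ C * a * d ^ 2 := by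
  obtain ⟨δ, C, hδ, hC, hsmall⟩ := exists_mem_ball_le_of_eq_zero (n := n) hlam hLam
  have hn : (0 : ℝ) < n := Nat.cast_pos.2 (NeZero.pos n)
  have hLam0 : 0 < Lam := hlam.trans_le hLam
  have hω := unitBallVolumeRoot_pos (n := n)
  set ω := unitBallVolumeRoot n
  refine ⟨δ, C * (5 * δ + 3 * (n * Lam * ω)) / 16, hδ, by positivity, ?_⟩
  intro b h u U x x₁ x' a d η hu ha hd hη hηδ hx₁ hx₁x hx' hxU hbL hhL
  have hsubset := closedBall_subset_ball_of_dist_le hd hx'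
  have hsubset' := ball_subset_closedBall.trans hsubset
  have hU : ball x (3 * d) ⊆ U := ball_subset_closedBall.trans hxU
  have hsup := (hu.mono_set hU).sub_touchingParaboloid hlam.le hLam ha.le (x₁ := x₁) (d := 4 * d)
    fun z hz => by linarith [mem_ball.1 hz, dist_triangle_right z x₁ x]
  have hsource : PosPartLnLE
      (fun z => h z + (‖fderiv ℝ u x₁‖ + a * (4 * d)) * b z + n * Lam * a) (ball x (3 * d))
      ((5 * δ + 3 * (n * Lam * ω)) * a * d) := by
    refine ((posPartLnLE_source_add_drift hu.measurable_source hu.measurable_drift hη ha.le hd.le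
      hbL hhL).add (.const (H := ω * (3 * d)) (by positivity) ?_) ?_ measurable_const
      (by positivity) (by positivity)).mono ?_
    · exact (volume_ball_eq_pow x (by positivity)).le
    · exact hu.measurable_source.add (hu.measurable_drift.const_mul _)
    · have hle : 5 * η * a * d ≤ 5 * δ * a * d := by gcongr
      linarith
  obtain ⟨x₂, hx₂, hle⟩ := hsmall (u - touchingParaboloid a u x₁) b _ x' x₁ (d / 16) _
    (by positivity) (fun z hz => sub_nonneg.2 (hx₁.2 z (hU (hsubset hz)))) (hsup.mono_set hsubset)
    ((hbL.mono hηδ).mono_set hsubset') (hsource.mono_set hsubset') (by positivity)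
    (mem_closedBall.2 (by linarith [dist_triangle_right x₁ x' x]))
    (by simp [touchingParaboloid])
  exact ⟨x₂, hx₂, hle.trans_eq (by ring)⟩

/-- Paraboloids slid under the difference of `u` and the paraboloid touching at `x₁`, from a point
`x₂` where this difference is small, touch on a large set. -/
lemma pow_lt_volume_of_sub_touchingParaboloid_le [NeZero n] {N η c : ℝ} (hlam : 0 < lam)
    (hLam : lam ≤ Lam) (hU : IsCompact U) (hu : IsSupersolutionOn lam Lam b h u U) (ha : 0 < a)
    (hd : 0 < d) (hN : 0 < N) (hη : 0 ≤ η) (hc : 0 ≤ c)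
    (hx₁ : x₁ ∈ contactSet a u U) (hx₁x : dist x₁ x ≤ d) (hx' : dist x' x ≤ d / 4)
    (hxU : closedBall x (3 * d) ⊆ U) (hbL : PosPartLnLE b (ball x (3 * d)) η)
    (hhL : PosPartLnLE (fun z => h z + ‖fderiv ℝ u x₁‖ * b z) (ball x (3 * d)) (η * a * d))
    (hx₂ : x₂ ∈ ball x' (d / 16))
    (hle : (u - touchingParaboloid a u x₁) x₂ ≤ N * a * d ^ 2 / 52)
    (hsmall : η * (N / 2 + 5) + n * Lam * (N + 1) * c < lam * unitBallVolumeRoot n * N / 32) :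
    ENNReal.ofReal (c * d) ^ n < volume (contactSet ((N + 1) * a) u U ∩ ball x' (d / 4)) := by
  have hLam0 : 0 < Lam := hlam.trans_le hLam
  have hsubset := closedBall_subset_ball_of_dist_le hd hx'
  have hsubset' : ball x' (d / 4) ⊆ ball x (3 * d) :=
    (ball_subset_closedBall.trans (closedBall_subset_closedBall (by linarith))).trans hsubset
  have hball : ball x (3 * d) ⊆ U := ball_subset_closedBall.trans hxU
  have hsup := (hu.mono_set (hsubset'.trans hball)).sub_touchingParaboloid hlam.le hLam ha.le
    (x₁ := x₁) (d := 4 * d) fun z hz => by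
      linarith [mem_ball.1 (hsubset' hz), dist_triangle_right z x₁ x]
  have hsourceL := posPartLnLE_source_add_drift hu.measurable_source hu.measurable_drift hη ha.le
    hd.le hbL hhL
  have hcontact := contactSet_sub_touchingParaboloid_subset (κ := N * a) (a := a) (x₁ := x₁)
    fun z hz => (hu.contDiffAt z hz).differentiableAt two_ne_zero
  rw [← add_one_mul] at hcontact
  refine (pow_lt_volume_contactSet_inter_ball hlam hLam hU (fun z hz => (hu.contDiffAt z hz).sub
    contDiff_touchingParaboloid.contDiffAt) (fun z hz => sub_nonneg.2 (hx₁.2 z hz))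
    (mul_pos hN ha) hd
    ((closedBall_subset_closedBall (by linarith)).trans (hsubset.trans hball))
    (ball_subset_closedBall hx₂) hle (by positivity) hsup
    (hu.measurable_source.add (hu.measurable_drift.const_mul _)) (hbL.mono_set hsubset') hη
    (hsourceL.mono_set hsubset') (by positivity) (by positivity) ?_).trans_le
    (measure_mono (Set.inter_subset_inter_left _ hcontact))
  calc N * a * d / 2 * η + 5 * η * a * d + (n * Lam * a + n * Lam * (N * a)) * (c * d)
      = (η * (N / 2 + 5) + n * Lam * (N + 1) * c) * (a * d) := by ring
    _ < lam * unitBallVolumeRoot n * N / 32 * (a * d) := by gcongr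
    _ = lam * unitBallVolumeRoot n * (N * a * d / 32) := by ring

theorem exists_spreadsContact [NeZero n] (hlam : 0 < lam) (hLam : lam ≤ Lam) :
    ∃ M₀ : ℝ, ∀ M, M₀ ≤ M → ∃ η c : ℝ, 0 < η ∧ 0 < c ∧
      ∀ (b h u : ℝ^n → ℝ) (U : Set (ℝ^n)), IsCompact U → IsSupersolutionOn lam Lam b h u U →
        SpreadsContact M η c b h u U := by
  obtain ⟨δ, C, hδ, hC, hsmall⟩ := exists_sub_touchingParaboloid_le (n := n) hlam hLam
  have hn : (0 : ℝ) < n := Nat.cast_pos.2 (NeZero.pos n)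
  have hLam0 : 0 < Lam := hlam.trans_le hLam
  have hω := unitBallVolumeRoot_pos (n := n)
  refine ⟨52 * C + 1, fun M hM => ?_⟩
  obtain ⟨N, rfl⟩ : ∃ N, M = N + 1 := ⟨M - 1, by ring⟩
  have hN : 0 < N := by linarith
  set ω := unitBallVolumeRoot n
  set η := min δ (lam * ω * N / (128 * (N / 2 + 5)))
  have hη : 0 < η := by positivity
  have hη' : η * (N / 2 + 5) ≤ lam * ω * N / 128 := by
    rw [← le_div_iff₀ (by positivity), div_div]
    exact min_le_right _ _
  set c := lam * ω * N / (128 * (n * Lam * (N + 1))) with hc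
  have hc' : n * Lam * (N + 1) * c = lam * ω * N / 128 := by
    rw [hc]
    field_simp
  refine ⟨η, c, hη, by positivity, fun b h u U hU hu => ?_⟩
  intro x x₁ x' a d ha hd hx₁ hx₁x hx' hxU hbL hhL
  obtain ⟨x₂, hx₂, hle⟩ := hsmall b h u U x x₁ x' a d η hu ha hd hη.le (min_le_left _ _) hx₁ hx₁x
    hx' hxU hbL hhL
  refine pow_lt_volume_of_sub_touchingParaboloid_le hlam hLam hU hu ha hd hN hη.le (by positivity)
    hx₁ hx₁x hx' hxU hbL hhL hx₂ (hle.trans ?_) ?_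
  · linarith [mul_le_mul_of_nonneg_right hM (by positivity : 0 ≤ a * d ^ 2)]
  · linarith [show 0 < lam * ω * N by positivity]

end Sliding

/-! ### Decay of the measure of the untouched set -/

section Covering

lemma volume_le_of_forall_le_measure_closedBall [NeZero n] {D : Set (ℝ^n)} {r : ℝ^n → ℝ}
    {R c : ℝ} {ν : Measure (ℝ^n)} (hc : 0 < c) (hr : ∀ x ∈ D, 0 < r x) (hrR : ∀ x ∈ D, r x ≤ R)
    (hν : ∀ x ∈ D, ENNReal.ofReal (c * r x) ^ n ≤ ν (closedBall x (r x))) :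
    volume D ≤ ENNReal.ofReal (5 * unitBallVolumeRoot n / c) ^ n * ν Set.univ := by
  obtain ⟨t, htD, hdisjoint, hcover⟩ :=
    Vitali.exists_disjoint_subfamily_covering_enlargement_closedBall D (fun x => x) r R hrR 5
      (by norm_num)
  have hcount : t.Countable := hdisjoint.countable_of_nonempty_interior fun x hx =>
    ⟨x, ball_subset_interior_closedBall (mem_ball_self (hr x (htD hx)))⟩
  have hsubset : D ⊆ ⋃ x ∈ t, closedBall x (5 * r x) := fun x hx => by
    obtain ⟨y, hy, hxy⟩ := hcover x hx
    exact Set.mem_biUnion hy (hxy (mem_closedBall_self (hr x hx).le))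
  have hω := unitBallVolumeRoot_pos (n := n)
  have := hcount.to_subtype
  calc volume D ≤ ∑' x : t, volume (closedBall (x : ℝ^n) (5 * r x)) :=
        (measure_mono hsubset).trans (measure_biUnion_le _ hcount _)
    _ ≤ ∑' x : t, ENNReal.ofReal (5 * unitBallVolumeRoot n / c) ^ n
          * ν (closedBall (x : ℝ^n) (r x)) := by
        refine ENNReal.tsum_le_tsum fun x => ?_
        have hrx := hr x (htD x.2)
        have hscale : unitBallVolumeRoot n * (5 * r x)
            = 5 * unitBallVolumeRoot n / c * (c * r x) := by field_simp
        rw [volume_closedBall_eq_pow _ (by positivity), hscale, ENNReal.ofReal_mul (by positivity),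
          mul_pow]
        gcongr
        exact hν x (htD x.2)
    _ = ENNReal.ofReal (5 * unitBallVolumeRoot n / c) ^ n * ν (⋃ x ∈ t, closedBall x (r x)) := by
        rw [ENNReal.tsum_mul_left,
          measure_biUnion hcount hdisjoint fun x _ => isClosed_closedBall.measurableSet]
    _ ≤ ENNReal.ofReal (5 * unitBallVolumeRoot n / c) ^ n * ν Set.univ := by
        gcongr
        exact Set.subset_univ _

lemma volume_le_add_of_forall_or [NeZero n] {D : Set (ℝ^n)} {r : ℝ^n → ℝ} {R c₁ c₂ : ℝ}
    {ν₁ ν₂ : Measure (ℝ^n)} (hc₁ : 0 < c₁) (hc₂ : 0 < c₂) (hr : ∀ x ∈ D, 0 < r x)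
    (hrR : ∀ x ∈ D, r x ≤ R)
    (hν : ∀ x ∈ D, ENNReal.ofReal (c₁ * r x) ^ n ≤ ν₁ (closedBall x (r x)) ∨
      ENNReal.ofReal (c₂ * r x) ^ n ≤ ν₂ (closedBall x (r x))) :
    volume D ≤ ENNReal.ofReal (5 * unitBallVolumeRoot n / c₁) ^ n * ν₁ Set.univ
      + ENNReal.ofReal (5 * unitBallVolumeRoot n / c₂) ^ n * ν₂ Set.univ := by
  set D₁ := {x ∈ D | ENNReal.ofReal (c₁ * r x) ^ n ≤ ν₁ (closedBall x (r x))}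
  set D₂ := {x ∈ D | ENNReal.ofReal (c₂ * r x) ^ n ≤ ν₂ (closedBall x (r x))}
  have hunion : D ⊆ D₁ ∪ D₂ := fun x hx => (hν x hx).imp (⟨hx, ·⟩) (⟨hx, ·⟩)
  have hD₁ := volume_le_of_forall_le_measure_closedBall (D := D₁) hc₁ (fun x hx => hr x hx.1)
    (fun x hx => hrR x hx.1) fun x hx => hx.2
  have hD₂ := volume_le_of_forall_le_measure_closedBall (D := D₂) hc₂ (fun x hx => hr x hx.1)
    (fun x hx => hrR x hx.1) fun x hx => hx.2
  exact (measure_mono hunion).trans ((measure_union_le _ _).trans (add_le_add hD₁ hD₂))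

lemma exists_ball_subset_closedBall {F : Type*} [SeminormedAddCommGroup F] [NormedSpace ℝ F]
    {x : F} {d R : ℝ} (hx : ‖x‖ ≤ R) (hd : 0 ≤ d) (hdR : d ≤ R) (hR : 0 < R) :
    ∃ x', dist x' x ≤ d ∧ ball x' d ⊆ closedBall 0 R := by
  have hle : d / R ≤ 1 := (div_le_one hR).2 hdR
  refine ⟨(1 - d / R) • x, ?_, fun z hz => ?_⟩
  · have hsub : (1 - d / R) • x - x = -((d / R) • x) := by module
    calc dist ((1 - d / R) • x) x = d / R * ‖x‖ := by
          rw [dist_eq_norm, hsub, norm_neg, norm_smul, Real.norm_of_nonneg (by positivity)]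
      _ ≤ d / R * R := by gcongr
      _ = d := by field_simp
  · have hnorm : ‖(1 - d / R) • x‖ ≤ R - d :=
      calc ‖(1 - d / R) • x‖ = (1 - d / R) * ‖x‖ := by
            rw [norm_smul, Real.norm_of_nonneg (sub_nonneg.2 hle)]
        _ ≤ (1 - d / R) * R := by gcongr
        _ = R - d := by field_simp
    rw [mem_closedBall_zero_iff]
    linarith [norm_sub_norm_le z ((1 - d / R) • x), mem_ball_iff_norm.1 hz]

lemma closedBall_subset_closedBall_zero {F : Type*} [SeminormedAddCommGroup F] {x : F} {r R : ℝ}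
    (h : ‖x‖ + r ≤ R) : closedBall x r ⊆ closedBall 0 R :=
  closedBall_subset_closedBall' (by rw [dist_zero_right]; linarith)

end Covering

section UntouchedSet

variable {M η c P H a δ : ℝ} {u b h : ℝ^n → ℝ} {x x' : ℝ^n}

/-- The points of the ball of radius `1 - δ` which are not touched from below by a paraboloid of
opening `a` lying below `u` on the slightly larger ball of radius `1 - δ / 2`. -/
def untouchedSet (a δ : ℝ) (u : ℝ^n → ℝ) : Set (ℝ^n) :=
  closedBall 0 (1 - δ) \ contactSet a u (closedBall 0 (1 - δ / 2))

lemma untouchedSet_subset_untouchedSet {a' : ℝ} (h : a ≤ a') :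
    untouchedSet a' δ u ⊆ untouchedSet a δ u :=
  Set.sdiff_subset_sdiff_right (contactSet_subset_contactSet h)

lemma measurableSet_untouchedSet (hu : ∀ x ∈ closedBall 0 (1 - δ / 2), ContDiffAt ℝ 2 u x) :
    MeasurableSet (untouchedSet a δ u) :=
  isClosed_closedBall.measurableSet.diff (isClosed_contactSet isClosed_closedBall
    (fun x hx => (hu x hx).of_le one_le_two) a).measurableSet

lemma volume_untouchedSet_ne_top : volume (untouchedSet a δ u) ≠ ∞ :=
  measure_ne_top_of_subset Set.sdiff_subset (measure_closedBall_lt_top).ne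

lemma contactSet_inter_ball_subset {d : ℝ}
    (hd : d ≤ infDist x (contactSet a u (closedBall 0 (1 - δ / 2))))
    (hx' : dist x' x ≤ d / 4) (hball : ball x' (d / 4) ⊆ closedBall 0 (1 - δ)) :
    contactSet (M * a) u (closedBall 0 (1 - δ / 2)) ∩ ball x' (d / 4) ⊆
      closedBall x (3 * d) ∩ (untouchedSet a δ u \ untouchedSet (M * a) δ u) := by
  rintro z ⟨hz, hzx'⟩
  have hzx : dist z x ≤ d / 2 := by linarith [dist_triangle z x' x, mem_ball.1 hzx']
  have hd_pos : 0 < d := by linarith [mem_ball.1 hzx', dist_nonneg (x := z) (y := x')]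
  refine ⟨mem_closedBall.2 (by linarith), ⟨hball hzx', fun hzT => ?_⟩, fun hz' => hz'.2 hz⟩
  linarith [infDist_le_dist_of_mem (x := x) hzT, dist_comm z x]

lemma pow_le_volume_or_pow_le_lintegral (hδ' : δ ≤ 1 / 2) (ha : 0 < a)
    (hu : IsSupersolutionOn lam Lam b h u (closedBall 0 (1 - δ / 2)))
    (hspread : SpreadsContact M η c b h u (closedBall 0 (1 - δ / 2)))
    (hx : x ∈ untouchedSet a δ u)
    (hcontact : ∃ x₁ ∈ contactSet a u (closedBall 0 (1 - δ / 2)), dist x₁ x ≤ δ / 16)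
    (hgrad : ∀ x₁ ∈ contactSet a u (closedBall 0 (1 - δ / 2)), ‖x₁‖ ≤ 1 - 15 / 16 * δ →
      ‖fderiv ℝ u x₁‖ ≤ P)
    (hb : PosPartLnLE b (ball x δ) η) {d : ℝ}
    (hd : d = infDist x (contactSet a u (closedBall 0 (1 - δ / 2)))) :
    ENNReal.ofReal (c * d) ^ n ≤
        volume (closedBall x (3 * d) ∩ (untouchedSet a δ u \ untouchedSet (M * a) δ u)) ∨
      ENNReal.ofReal (η * a * d) ^ n ≤ ∫⁻ z in closedBall x (3 * d) ∩ closedBall 0 (1 - δ / 2),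
        ENNReal.ofReal (h z + P * b z) ^ n := by
  have hT : IsClosed (contactSet a u (closedBall 0 (1 - δ / 2))) :=
    isClosed_contactSet isClosed_closedBall (fun x hx => (hu.contDiffAt x hx).of_le one_le_two) a
  obtain ⟨y, hy, hyx⟩ := hcontact
  have hd_pos : 0 < d := hd ▸ (hT.notMem_iff_infDist_pos ⟨y, hy⟩).1 hx.2
  have hdδ : d ≤ δ / 16 := hd ▸ (infDist_le_dist_of_mem hy).trans (dist_comm y x ▸ hyx)
  obtain ⟨x₁, hx₁, hx₁d⟩ := hT.exists_infDist_eq_dist ⟨y, hy⟩ x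
  have hx₁x : dist x₁ x ≤ d := by rw [hd, hx₁d, dist_comm]
  have hxnorm : ‖x‖ ≤ 1 - δ := mem_closedBall_zero_iff.1 hx.1
  have hball : closedBall x (3 * d) ⊆ closedBall 0 (1 - δ / 2) :=
    closedBall_subset_closedBall_zero (by linarith)
  have hP : ‖fderiv ℝ u x₁‖ ≤ P := hgrad x₁ hx₁ (by
    linarith [norm_sub_norm_le x₁ x, dist_eq_norm x₁ x])
  rw [or_iff_not_imp_right, not_le]
  intro hsource
  obtain ⟨x', hx'x, hx'ball⟩ := exists_ball_subset_closedBall (d := d / 4) hxnorm (by positivity)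
    (by linarith) (by linarith)
  have hF : PosPartLnLE (fun z => h z + P * b z) (ball x (3 * d)) (η * a * d) :=
    (lintegral_mono_set (Set.subset_inter ball_subset_closedBall
      (ball_subset_closedBall.trans hball))).trans hsource.le
  exact (hspread x x₁ x' a d ha hd_pos hx₁ hx₁x hx'x hball
    (hb.mono_set (ball_subset_ball (by linarith)))
    (hF.mono_fun isOpen_ball.measurableSet fun z _ => by
      gcongr
      exact hu.drift_nonneg z)).le.trans
    (measure_mono (contactSet_inter_ball_subset hd.le hx'x hx'ball))

/-- Cover the untouched set by balls reaching the touched one: those where the touched set grows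
are paid for by the measure which is lost, the others by the `L^n` norm of the source. -/
lemma volume_untouchedSet_le [NeZero n] (hη : 0 < η) (hc : 0 < c) (hδ : 0 < δ) (hδ' : δ ≤ 1 / 2)
    (ha : 0 < a) (hu : IsSupersolutionOn lam Lam b h u (closedBall 0 (1 - δ / 2)))
    (hspread : SpreadsContact M η c b h u (closedBall 0 (1 - δ / 2)))
    (hcontact : ∀ x ∈ closedBall 0 (1 - δ),
      ∃ x₁ ∈ contactSet a u (closedBall 0 (1 - δ / 2)), dist x₁ x ≤ δ / 16)
    (hgrad : ∀ x₁ ∈ contactSet a u (closedBall 0 (1 - δ / 2)), ‖x₁‖ ≤ 1 - 15 / 16 * δ →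
      ‖fderiv ℝ u x₁‖ ≤ P)
    (hb : ∀ x ∈ closedBall 0 (1 - δ), PosPartLnLE b (ball x δ) η)
    (hF : PosPartLnLE (fun z => h z + P * b z) (closedBall 0 (1 - δ / 2)) H) :
    volume (untouchedSet a δ u) ≤
      ENNReal.ofReal (15 * unitBallVolumeRoot n / c) ^ n
          * volume (untouchedSet a δ u \ untouchedSet (M * a) δ u)
        + ENNReal.ofReal (15 * unitBallVolumeRoot n / (η * a)) ^ n * ENNReal.ofReal H ^ n := by
  set T := contactSet a u (closedBall 0 (1 - δ / 2))
  set lost := untouchedSet a δ u \ untouchedSet (M * a) δ u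
  set source := fun z => ENNReal.ofReal (h z + P * b z) ^ n
  have hT : IsClosed T :=
    isClosed_contactSet isClosed_closedBall (fun x hx => (hu.contDiffAt x hx).of_le one_le_two) a
  have hpos (x) (hx : x ∈ untouchedSet a δ u) : 0 < 3 * infDist x T := by
    obtain ⟨x₁, hx₁, -⟩ := hcontact x hx.1
    exact mul_pos three_pos ((hT.notMem_iff_infDist_pos ⟨x₁, hx₁⟩).1 hx.2)
  have hle (x) (hx : x ∈ untouchedSet a δ u) : 3 * infDist x T ≤ δ := by
    obtain ⟨x₁, hx₁, hx₁x⟩ := hcontact x hx.1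
    linarith [infDist_le_dist_of_mem (x := x) hx₁, dist_comm x x₁]
  have hcover := volume_le_add_of_forall_or (c₁ := c / 3) (c₂ := η * a / 3)
    (ν₁ := volume.restrict lost)
    (ν₂ := (volume.restrict (closedBall 0 (1 - δ / 2))).withDensity source)
    (by positivity) (by positivity) hpos hle fun x hx => by
      have hcancel (t : ℝ) : t / 3 * (3 * infDist x T) = t * infDist x T := by ring
      rw [Measure.restrict_apply isClosed_closedBall.measurableSet,
        withDensity_apply _ isClosed_closedBall.measurableSet,
        Measure.restrict_restrict isClosed_closedBall.measurableSet, hcancel, hcancel]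
      exact pow_le_volume_or_pow_le_lintegral hδ' ha hu hspread hx (hcontact x hx.1) hgrad
        (hb x hx.1) rfl
  have hratio (t : ℝ) : 5 * unitBallVolumeRoot n / (t / 3) = 15 * unitBallVolumeRoot n / t := by
    rw [div_div_eq_mul_div]
    ring
  rw [Measure.restrict_apply_univ, withDensity_apply _ MeasurableSet.univ, Measure.restrict_univ,
    hratio, hratio] at hcover
  exact hcover.trans (by gcongr; exact hF)

end UntouchedSet

section SmallValues

variable {K α r₀ C τ δ A a s m : ℝ} {γ : ℕ} {u b h : ℝ^n → ℝ} {x : ℝ^n}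

/-- Each ball of radius `ρ ≤ r₀` that stays at distance of order `ρ` from the unit sphere contains
a point where `u ≤ C / ρ ^ γ`. -/
def HasSmallValues (r₀ C : ℝ) (γ : ℕ) (u : ℝ^n → ℝ) : Prop :=
  ∀ y ρ, 0 < ρ → ρ ≤ r₀ → ‖y‖ + 40 * ρ < 1 → ∃ x ∈ ball y ρ, u x ≤ C / ρ ^ γ

/-- Moving a distance `s` along the gradient, the touching paraboloid grows by a multiple of
`‖Du(x)‖ * s`, so it would exceed the value of `u` at some nearby point. -/
lemma norm_fderiv_le_of_mem_contactSet {F : Type*} [NormedAddCommGroup F] [InnerProductSpace ℝ F]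
    [CompleteSpace F] {u : F → ℝ} {U : Set F} {x : F} (hx : x ∈ contactSet a u U) (hux : 0 ≤ u x)
    (ha : 0 ≤ a) (hs : 0 < s) (hball : closedBall x (9 / 8 * s) ⊆ U)
    (hsmall : ∀ y, dist y x = s → ∃ z ∈ ball y (s / 8), u z ≤ m) :
    ‖fderiv ℝ u x‖ ≤ max (a * s) (5 * m / s) := by
  by_contra! hlt
  obtain ⟨hlt_as, hlt_m⟩ := max_lt_iff.1 hlt
  set p := fderiv ℝ u x
  have hp : 0 < ‖p‖ := lt_of_le_of_lt (by positivity) hlt_as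
  have hnorm : ‖∇ u x‖ = ‖p‖ := LinearIsometryEquiv.norm_map _ _
  set e := ‖p‖⁻¹ • ∇ u x
  have he : ‖e‖ = 1 := by
    rw [norm_smul, norm_inv, norm_norm, hnorm, inv_mul_cancel₀ hp.ne']
  have hpe : p e = ‖p‖ := by
    have hgrad : p (∇ u x) = ‖p‖ ^ 2 := by
      rw [← hnorm, ← real_inner_self_eq_norm_sq, inner_gradient_left]
    rw [map_smul, hgrad, smul_eq_mul]
    field_simp
  obtain ⟨z, hz, huz⟩ := hsmall (x + s • e) (by
    rw [dist_self_add_left, norm_smul, he, mul_one, Real.norm_of_nonneg hs.le])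
  rw [mem_ball_iff_norm] at hz
  have hzx : z - x = s • e + (z - (x + s • e)) := by abel
  have hzx_norm : ‖z - x‖ ≤ 9 / 8 * s := by
    have hle := norm_add_le (s • e) (z - (x + s • e))
    rw [← hzx, norm_smul, he, mul_one, Real.norm_of_nonneg hs.le] at hle
    linarith
  have hpz : ‖p‖ * (7 / 8 * s) ≤ p (z - x) := by
    have hopNorm := (abs_le.1 (p.le_opNorm (z - (x + s • e)))).1
    have hle : ‖p‖ * ‖z - (x + s • e)‖ ≤ ‖p‖ * (s / 8) := by gcongr
    rw [hzx, map_add, map_smul, hpe, smul_eq_mul]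
    linarith
  have htouch := hx.2 z (hball (mem_closedBall_iff_norm.2 hzx_norm))
  have hsq : a / 2 * ‖z - x‖ ^ 2 ≤ a / 2 * (9 / 8 * s) ^ 2 := by gcongr
  have has : a * s * s ≤ ‖p‖ * s := by gcongr
  rw [div_lt_iff₀ hs] at hlt_m
  nlinarith

lemma HasSmallValues.norm_fderiv_le (hsmall : HasSmallValues r₀ C γ u) {U : Set (ℝ^n)}
    (hx : x ∈ contactSet a u U) (hux : 0 ≤ u x) (ha : 0 ≤ a) (hs : 0 < s) (hsr : s ≤ 8 * r₀)
    (hball : closedBall x (9 / 8 * s) ⊆ U) (hxs : ‖x‖ + 6 * s < 1) :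
    ‖fderiv ℝ u x‖ ≤ max (a * s) (5 * 8 ^ γ * C / s ^ (γ + 1)) := by
  have hle := norm_fderiv_le_of_mem_contactSet (m := C / (s / 8) ^ γ) hx hux ha hs hball
    fun y hy => hsmall y (s / 8) (by positivity) (by linarith) (by
      linarith [norm_sub_norm_le y x, dist_eq_norm y x])
  convert hle using 2
  rw [div_pow, pow_succ]
  field_simp

lemma exists_mem_contactSet_dist_lt [NeZero n] (hlam : 0 < lam) (hLam : lam ≤ Lam)
    {U : Set (ℝ^n)} {x₂ : ℝ^n} {d H : ℝ} (hU : IsCompact U) (hu₂ : ∀ z ∈ U, ContDiffAt ℝ 2 u z)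
    (hu0 : ∀ z ∈ U, 0 ≤ u z) (hball : closedBall x (d / 4) ⊆ U)
    (hu : IsSupersolutionOn lam Lam b h u (ball x (d / 4))) (ha : 0 < a) (hd : 0 < d)
    (hx₂ : x₂ ∈ closedBall x (d / 16)) (hux₂ : u x₂ ≤ a * d ^ 2 / 52)
    (hb : PosPartLnLE b (ball x (d / 4)) (lam * unitBallVolumeRoot n / 64))
    (hh : PosPartLnLE h (ball x (d / 4)) H) (hH : 0 ≤ H)
    (hHa : H ≤ lam * unitBallVolumeRoot n / 64 * (a * d)) :
    ∃ x₁ ∈ contactSet a u U, dist x₁ x < d / 4 := by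
  have hω : 0 < lam * unitBallVolumeRoot n := mul_pos hlam unitBallVolumeRoot_pos
  have hvolume := pow_lt_volume_contactSet_inter_ball (ρ := 0) (C := 0) hlam hLam hU hu₂ hu0 ha hd
    hball hx₂ hux₂ le_rfl (by simpa using hu) hu.measurable_source hb (by positivity) hh hH le_rfl
    (by
      have : 0 < lam * unitBallVolumeRoot n * (a * d) := by positivity
      linarith)
  exact nonempty_of_measure_ne_zero hvolume.ne_bot

lemma HasSmallValues.exists_mem_contactSet [NeZero n] (hsmall : HasSmallValues r₀ (C * τ) γ u)
    (hlam : 0 < lam) (hLam : lam ≤ Lam) (hα : 0 ≤ α) (hK : 0 ≤ K)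
    (hu : IsNonnegSupersolution lam Lam K α b h u) (hh : PosPartLnLE h (ball 0 1) τ) (hτ : 0 < τ)
    (hδ : 0 < δ) (hδ' : δ ≤ 1 / 2) (hδr₀ : δ ≤ r₀)
    (hKδ : K * δ ^ α ≤ lam * unitBallVolumeRoot n / 64)
    (hA : 832 * 64 ^ γ * C ≤ A) (hA' : 256 / (lam * unitBallVolumeRoot n) ≤ A)
    (hx : x ∈ closedBall 0 (1 - δ)) :
    ∃ x₁ ∈ contactSet (A * τ / δ ^ (γ + 2)) u (closedBall 0 (1 - δ / 2)), dist x₁ x ≤ δ / 16 := by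
  rw [mem_closedBall_zero_iff] at hx
  have hω : 0 < lam * unitBallVolumeRoot n := mul_pos hlam unitBallVolumeRoot_pos
  have hA_pos : 0 < A := (by positivity : 0 < 256 / (lam * unitBallVolumeRoot n)).trans_le hA'
  have hU : closedBall (0 : ℝ^n) (1 - δ / 2) ⊆ ball 0 1 := closedBall_subset_ball (by linarith)
  have hball : closedBall x (δ / 4 / 4) ⊆ closedBall 0 (1 - δ / 2) :=
    closedBall_subset_closedBall_zero (by linarith)
  have hball' : ball x (δ / 4 / 4) ⊆ ball 0 1 := ball_subset_closedBall.trans (hball.trans hU)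
  obtain ⟨x₂, hx₂, hux₂⟩ := hsmall x (δ / 64) (by positivity) (by linarith) (by linarith)
  have hvalue : u x₂ ≤ A * τ / δ ^ (γ + 2) * (δ / 4) ^ 2 / 52 :=
    calc u x₂ ≤ C * τ / (δ / 64) ^ γ := hux₂
      _ = 832 * 64 ^ γ * C * τ / δ ^ (γ + 2) * (δ / 4) ^ 2 / 52 := by
        rw [div_pow]; field_simp; ring
      _ ≤ A * τ / δ ^ (γ + 2) * (δ / 4) ^ 2 / 52 := by gcongr
  have hsource : τ ≤ lam * unitBallVolumeRoot n / 64 * (A * τ / δ ^ (γ + 2) * (δ / 4)) :=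
    calc τ ≤ lam * unitBallVolumeRoot n / 256 * (A * τ) := by
          rw [div_le_iff₀ hω] at hA'
          nlinarith
      _ ≤ lam * unitBallVolumeRoot n / 256 * (A * τ / δ ^ (γ + 1)) := by
          gcongr
          exact le_div_self (by positivity) (by positivity) (pow_le_one₀ hδ.le (by linarith))
      _ = lam * unitBallVolumeRoot n / 64 * (A * τ / δ ^ (γ + 2) * (δ / 4)) := by
          field_simp; ring
  obtain ⟨x₁, hx₁, hx₁x⟩ := exists_mem_contactSet_dist_lt hlam hLam
    (isCompact_closedBall 0 (1 - δ / 2)) (fun z hz => hu.contDiffAt z (hU hz))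
    (fun z hz => hu.nonneg z (hU hz)) hball (hu.toIsSupersolutionOn.mono_set hball')
    (by positivity) (by positivity) (ball_subset_closedBall (by convert hx₂ using 2; ring)) hvalue
    (hu.drift_le_of_le hα hK (by positivity) (by linarith) hKδ) (hh.mono_set hball') hτ.le hsource
  exact ⟨x₁, hx₁, by linarith⟩

end SmallValues

section Decay

lemma le_mul_pow_of_le_mul_sub_add {y : ℕ → ℝ} {A B V : ℝ} (hA : 1 ≤ A) (hB : 0 ≤ B) (hV : 0 ≤ V)
    (hy0 : y 0 ≤ V) (hy : ∀ k, y k ≤ A * (y k - y (k + 1)) + B * (1 / 2) ^ k) (k : ℕ) :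
    y k ≤ (V + 2 * B) * (1 - 1 / (2 * A)) ^ k := by
  set μ := 1 - 1 / (2 * A) with hμdef
  have hA_pos : 0 < A := one_pos.trans_le hA
  have hμ : 1 / 2 ≤ μ := by
    have : 1 / (2 * A) ≤ 1 / 2 := by
      apply one_div_le_one_div_of_le <;> linarith
    linarith
  have hAμ : A * μ = A - 1 / 2 := by rw [hμdef]; field_simp
  induction k with
  | zero => simpa using hy0.trans (by linarith)
  | succ k ih =>
    have hpow : B * (1 / 2 : ℝ) ^ k ≤ B * μ ^ k := by gcongr
    have hVpow : 0 ≤ V * μ ^ k := by positivity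
    have hih := mul_le_mul_of_nonneg_left ih (sub_nonneg.2 hA)
    have hsplit : A * ((V + 2 * B) * μ ^ (k + 1)) = (V + 2 * B) * μ ^ k * (A * μ) := by ring
    refine le_of_mul_le_mul_left ?_ hA_pos
    rw [hsplit, hAμ]
    linarith [hy k]

lemma exists_forall_mul_rpow_le {α m : ℝ} (hα : 0 < α) (hm : 0 < m) (K : ℝ) :
    ∃ δ > 0, ∀ r, 0 ≤ r → r ≤ δ → K * r ^ α ≤ m := by
  have hlim : Filter.Tendsto (fun r : ℝ => K * r ^ α) (nhds 0) (nhds 0) := by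
    have hcont : ContinuousAt (fun r : ℝ => K * r ^ α) 0 :=
      (Real.continuousAt_rpow_const 0 α (.inr hα.le)).const_mul K
    simpa [ContinuousAt, Real.zero_rpow hα.ne'] using hcont
  obtain ⟨δ, hδ, hball⟩ := Metric.eventually_nhds_iff.1 (hlim.eventually_le_const hm)
  refine ⟨δ / 2, by positivity, fun r hr hrδ => hball ?_⟩
  rw [Real.dist_0_eq_abs, abs_of_nonneg hr]
  linarith

end Decay

section Iteration

variable {K α r₀ C τ δ A M η c : ℝ} {γ : ℕ} {u b h : ℝ^n → ℝ} {x : ℝ^n}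

/-- After `k` steps the gradient is estimated at scale `δ / 2 ^ k`; this gains a factor `2 ^ k` over
the trivial bound because the openings grow faster than `2 ^ ((γ + 2) * k)`. -/
lemma HasSmallValues.norm_fderiv_le_of_pow (hsmall : HasSmallValues r₀ (C * τ) γ u)
    (hu : ∀ x ∈ ball 0 1, 0 ≤ u x) (hC : 0 ≤ C) (hτ : 0 ≤ τ) (hδ : 0 < δ) (hδ' : δ ≤ 1 / 2)
    (hδr₀ : δ ≤ r₀) (hM : 2 ^ (γ + 2) ≤ M) (hA : 40 * 64 ^ γ * C ≤ A) (k : ℕ)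
    (hx : x ∈ contactSet (A * τ * M ^ k / δ ^ (γ + 2)) u (closedBall 0 (1 - δ / 2)))
    (hxδ : ‖x‖ ≤ 1 - 15 / 16 * δ) :
    ‖fderiv ℝ u x‖ ≤ A * τ * M ^ k / δ ^ (γ + 2) / 2 ^ k := by
  have hs : δ / 8 / 2 ^ k ≤ δ / 8 := div_le_self (by positivity) (one_le_pow₀ one_le_two)
  have hA0 : 0 ≤ A := le_trans (by positivity) hA
  have hM0 : 0 ≤ M := le_trans (by positivity) hM
  have ha : 0 ≤ A * τ * M ^ k / δ ^ (γ + 2) := by positivity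
  refine (hsmall.norm_fderiv_le (s := δ / 8 / 2 ^ k) hx
    (hu x (closedBall_subset_ball (by linarith) hx.1)) ha (by positivity) (by linarith)
    (closedBall_subset_closedBall_zero (by linarith)) (by linarith)).trans (max_le ?_ ?_)
  · rw [← mul_div_assoc]
    gcongr
    exact mul_le_of_le_one_right ha (by linarith)
  · have hpow : ((2 : ℝ) ^ (γ + 2)) ^ k = (2 ^ k) ^ (γ + 1) * 2 ^ k := by
      rw [← pow_mul, ← pow_mul, ← pow_add]
      congr 1
      ring
    calc 5 * 8 ^ γ * (C * τ) / (δ / 8 / 2 ^ k) ^ (γ + 1)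
        = 40 * 64 ^ γ * C * τ * (2 ^ (γ + 2)) ^ k / δ ^ (γ + 1) / 2 ^ k := by
          have h64 : (64 : ℝ) ^ γ = 8 ^ γ * 8 ^ γ := by rw [← mul_pow]; norm_num
          rw [div_pow, div_pow, hpow, h64]
          field_simp
          ring
      _ ≤ A * τ * M ^ k / δ ^ (γ + 2) / 2 ^ k := by
          have hδpow : δ ^ (γ + 2) ≤ δ ^ (γ + 1) :=
            pow_le_pow_of_le_one hδ.le (by linarith) (by lia)
          gcongr

lemma IsNonnegSupersolution.source_add_drift_le [NeZero n]
    (hu : IsNonnegSupersolution lam Lam K α b h u) (hK : 0 ≤ K) (hh : PosPartLnLE h (ball 0 1) τ)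
    (hτ : 0 ≤ τ) {t : ℝ} (ht : τ ≤ t) :
    PosPartLnLE (fun z => h z + t * b z) (ball 0 1) ((1 + K) * t) := by
  have ht0 : 0 ≤ t := hτ.trans ht
  have hdrift := (hu.drift_le 0 1 one_pos).const_mul ht0
  rw [Real.one_rpow, mul_one] at hdrift
  refine (hh.add hdrift hu.measurable_source (hu.measurable_drift.const_mul t) hτ
    (by positivity)).mono ?_
  linarith

lemma IsNonnegSupersolution.isSupersolutionOn_closedBall {R : ℝ}
    (hu : IsNonnegSupersolution lam Lam K α b h u) (hR : R < 1) :
    IsSupersolutionOn lam Lam b h u (closedBall 0 R) :=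
  hu.toIsSupersolutionOn.mono_set (closedBall_subset_ball hR)

lemma volumeReal_untouchedSet_anti {a a' : ℝ} (h : a ≤ a') :
    volume.real (untouchedSet a' δ u) ≤ volume.real (untouchedSet a δ u) :=
  measureReal_mono (untouchedSet_subset_untouchedSet h) volume_untouchedSet_ne_top

lemma volumeReal_untouchedSet_le [NeZero n] {a H P : ℝ} (hη : 0 < η) (hc : 0 < c) (hδ : 0 < δ)
    (hδ' : δ ≤ 1 / 2) (ha : 0 < a) (hM : 1 ≤ M)
    (hu : IsSupersolutionOn lam Lam b h u (closedBall 0 (1 - δ / 2)))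
    (hspread : SpreadsContact M η c b h u (closedBall 0 (1 - δ / 2)))
    (hcontact : ∀ x ∈ closedBall 0 (1 - δ),
      ∃ x₁ ∈ contactSet a u (closedBall 0 (1 - δ / 2)), dist x₁ x ≤ δ / 16)
    (hgrad : ∀ x₁ ∈ contactSet a u (closedBall 0 (1 - δ / 2)), ‖x₁‖ ≤ 1 - 15 / 16 * δ →
      ‖fderiv ℝ u x₁‖ ≤ P)
    (hb : ∀ x ∈ closedBall 0 (1 - δ), PosPartLnLE b (ball x δ) η)
    (hF : PosPartLnLE (fun z => h z + P * b z) (closedBall 0 (1 - δ / 2)) H) (hH : 0 ≤ H) :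
    volume.real (untouchedSet a δ u) ≤ (15 * unitBallVolumeRoot n / c) ^ n *
        (volume.real (untouchedSet a δ u) - volume.real (untouchedSet (M * a) δ u))
      + (15 * unitBallVolumeRoot n / (η * a) * H) ^ n := by
  have hω := unitBallVolumeRoot_pos (n := n)
  have hsubset : untouchedSet (M * a) δ u ⊆ untouchedSet a δ u :=
    untouchedSet_subset_untouchedSet (le_mul_of_one_le_left ha.le hM)
  have hle := volume_untouchedSet_le hη hc hδ hδ' ha hu hspread hcontact hgrad hb hF
  have hfin : volume (untouchedSet a δ u \ untouchedSet (M * a) δ u) ≠ ∞ :=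
    measure_ne_top_of_subset Set.sdiff_subset volume_untouchedSet_ne_top
  rw [← measureReal_sdiff hsubset (measurableSet_untouchedSet hu.contDiffAt)
    volume_untouchedSet_ne_top, ← ENNReal.ofReal_le_ofReal_iff (by positivity)]
  rw [ENNReal.ofReal_add (by positivity) (by positivity), ENNReal.ofReal_mul (by positivity),
    ofReal_measureReal hfin, ofReal_measureReal volume_untouchedSet_ne_top, mul_pow,
    ENNReal.ofReal_mul (by positivity), ENNReal.ofReal_pow (by positivity),
    ENNReal.ofReal_pow (by positivity), ENNReal.ofReal_pow (by positivity)]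
  exact hle

lemma HasSmallValues.volumeReal_untouchedSet_le [NeZero n] (hsmall : HasSmallValues r₀ (C * τ) γ u)
    (hlam : 0 < lam) (hLam : lam ≤ Lam) (hα : 0 ≤ α) (hK : 0 ≤ K)
    (hu : IsNonnegSupersolution lam Lam K α b h u) (hh : PosPartLnLE h (ball 0 1) τ) (hτ : 0 < τ)
    (hC : 0 ≤ C) (hη : 0 < η) (hc : 0 < c)
    (hspread : SpreadsContact M η c b h u (closedBall 0 (1 - δ / 2)))
    (hδ : 0 < δ) (hδ' : δ ≤ 1 / 2) (hδr₀ : δ ≤ r₀)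
    (hKδ : K * δ ^ α ≤ min η (lam * unitBallVolumeRoot n / 64)) (hM : 2 ^ (γ + 2) ≤ M)
    (hA : 832 * 64 ^ γ * C ≤ A) (hA' : 256 / (lam * unitBallVolumeRoot n) ≤ A) (hA₁ : 1 ≤ A)
    (k : ℕ) :
    volume.real (untouchedSet (A * τ * M ^ k / δ ^ (γ + 2)) δ u) ≤
      (15 * unitBallVolumeRoot n / c) ^ n *
          (volume.real (untouchedSet (A * τ * M ^ k / δ ^ (γ + 2)) δ u)
            - volume.real (untouchedSet (A * τ * M ^ (k + 1) / δ ^ (γ + 2)) δ u))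
        + (15 * unitBallVolumeRoot n * (1 + K) / η) ^ n * (1 / 2) ^ k := by
  have hω := unitBallVolumeRoot_pos (n := n)
  have hM₂ : 2 ≤ M := (le_self_pow₀ one_le_two (by lia)).trans hM
  set a := A * τ * M ^ k / δ ^ (γ + 2)
  have ha : 0 < a := by positivity
  have hMa : A * τ * M ^ (k + 1) / δ ^ (γ + 2) = M * a := by simp only [a]; ring
  have hAτa : A * τ / δ ^ (γ + 2) ≤ a / 2 ^ k := by
    rw [le_div_iff₀ (by positivity), div_mul_eq_mul_div]
    simp only [a]
    gcongr
  have hτa : τ ≤ a / 2 ^ k := le_trans (by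
    rw [mul_div_right_comm]
    exact le_mul_of_one_le_left hτ.le
      (hA₁.trans (le_div_self (by positivity) (by positivity) (pow_le_one₀ hδ.le (by linarith)))))
    hAτa
  have hstep := Pucci.volumeReal_untouchedSet_le (P := a / 2 ^ k) hη hc hδ hδ' ha (by linarith)
    (hu.isSupersolutionOn_closedBall (by linarith)) hspread
    (fun x hx => by
      obtain ⟨x₁, hx₁, hx₁x⟩ := hsmall.exists_mem_contactSet hlam hLam hα hK hu hh hτ hδ hδ' hδr₀
        (hKδ.trans (min_le_right _ _)) hA hA' hx
      exact ⟨x₁, contactSet_subset_contactSet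
        (hAτa.trans (div_le_self ha.le (one_le_pow₀ one_le_two))) hx₁, hx₁x⟩)
    (fun x₁ hx₁ hx₁δ => hsmall.norm_fderiv_le_of_pow hu.nonneg hC hτ.le hδ hδ' hδr₀ hM
      (hA.trans' (by gcongr; norm_num)) k hx₁ hx₁δ)
    (fun x _ => hu.drift_le_of_le hα hK hδ le_rfl (hKδ.trans (min_le_left _ _)))
    ((hu.source_add_drift_le hK hh hτ.le hτa).mono_set (closedBall_subset_ball (by linarith)))
    (by positivity)
  have hsource : 15 * unitBallVolumeRoot n / (η * a) * ((1 + K) * (a / 2 ^ k))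
      = 15 * unitBallVolumeRoot n * (1 + K) / η * (1 / 2) ^ k := by
    rw [div_pow, one_pow]
    field_simp
  rw [hsource, mul_pow] at hstep
  rw [hMa]
  refine hstep.trans ?_
  gcongr
  exact pow_le_of_le_one (by positivity) (pow_le_one₀ (by norm_num) (by norm_num)) (NeZero.ne n)

theorem exists_volume_untouchedSet_le [NeZero n] (hlam : 0 < lam) (hLam : lam ≤ Lam)
    (hα : 0 < α) (hK : 0 ≤ K) (hr₀ : 0 < r₀) (hC : 0 ≤ C) (γ : ℕ) :
    ∃ M A μ V δ₀ : ℝ, 1 ≤ M ∧ 1 ≤ A ∧ 0 < μ ∧ μ < 1 ∧ 0 < V ∧ 0 < δ₀ ∧ δ₀ ≤ 1 / 2 ∧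
      ∀ (b h u : ℝ^n → ℝ) (τ : ℝ), IsNonnegSupersolution lam Lam K α b h u → 0 < τ →
        PosPartLnLE h (ball 0 1) τ → HasSmallValues r₀ (C * τ) γ u →
        ∀ δ, 0 < δ → δ ≤ δ₀ → ∀ k : ℕ,
          volume (untouchedSet (A * τ * M ^ k / δ ^ (γ + 2)) δ u) ≤ ENNReal.ofReal (V * μ ^ k) ∧
          ∀ x ∈ contactSet (A * τ * M ^ k / δ ^ (γ + 2)) u (closedBall 0 (1 - δ / 2)),
            ‖x‖ ≤ 1 - 15 / 16 * δ → ‖fderiv ℝ u x‖ ≤ A * τ * M ^ k / δ ^ (γ + 2) / 2 ^ k := by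
  have hω := unitBallVolumeRoot_pos (n := n)
  obtain ⟨M₀, hspreads⟩ := exists_spreadsContact (n := n) hlam hLam
  set M := max M₀ (2 ^ (γ + 2))
  obtain ⟨η, c, hη, hc, hspread⟩ := hspreads M (le_max_left _ _)
  obtain ⟨δ₁, hδ₁, hKδ₁⟩ := exists_forall_mul_rpow_le hα
    (lt_min hη (by positivity : 0 < lam * unitBallVolumeRoot n / 64)) K
  set A := 832 * 64 ^ γ * C + 256 / (lam * unitBallVolumeRoot n) + 1
  set A₁ := 1 + (15 * unitBallVolumeRoot n / c) ^ n
  set A₂ := (15 * unitBallVolumeRoot n * (1 + K) / η) ^ n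
  have hC' : 0 ≤ 832 * 64 ^ γ * C := by positivity
  have hω' : 0 < 256 / (lam * unitBallVolumeRoot n) := by positivity
  have hA₁ : 1 ≤ A₁ := le_add_of_nonneg_right (by positivity)
  have hM : 2 ^ (γ + 2) ≤ M := le_max_right _ _
  have hM₁ : 1 ≤ M := (one_le_pow₀ one_le_two).trans hM
  have hinv : 1 / (2 * A₁) < 1 := by rw [div_lt_one (by positivity)]; linarith
  have hV : 0 < volume.real (ball (0 : ℝ^n) 1) :=
    ENNReal.toReal_pos (measure_ball_pos volume _ one_pos).ne' measure_ball_lt_top.ne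
  refine ⟨M, A, 1 - 1 / (2 * A₁), volume.real (ball (0 : ℝ^n) 1) + 2 * A₂,
    min δ₁ (min r₀ (1 / 2)), hM₁, by linarith, by linarith,
    sub_lt_self _ (by positivity), by positivity, by positivity,
    (min_le_right _ _).trans (min_le_right _ _), fun b h u τ hu hτ hh hsmall δ hδ hδ₀ k => ?_⟩
  obtain ⟨hδδ₁, hδr₀, hδ'⟩ := by simpa only [le_min_iff] using hδ₀
  refine ⟨?_, fun x hx hxδ => hsmall.norm_fderiv_le_of_pow hu.nonneg hC hτ.le hδ hδ' hδr₀ hM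
    (by linarith) k hx hxδ⟩
  rw [← ofReal_measureReal volume_untouchedSet_ne_top]
  refine ENNReal.ofReal_le_ofReal (le_mul_pow_of_le_mul_sub_add
    (y := fun k => volume.real (untouchedSet (A * τ * M ^ k / δ ^ (γ + 2)) δ u)) hA₁
    (by positivity) hV.le ?_ (fun k => ?_) k)
  · exact measureReal_mono (Set.sdiff_subset.trans (closedBall_subset_ball (by linarith)))
      measure_ball_lt_top.ne
  · have hstep := hsmall.volumeReal_untouchedSet_le (A := A) hlam hLam hα.le hK hu hh hτ hC hη hc
      (hspread b h u _ (isCompact_closedBall _ _) (hu.isSupersolutionOn_closedBall (by linarith)))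
      hδ hδ' hδr₀ (hKδ₁ δ hδ.le hδδ₁) hM (by linarith) (by linarith) (by linarith) k
    have hanti := volumeReal_untouchedSet_anti (n := n) (u := u) (δ := δ)
      (by gcongr; exact k.le_succ : A * τ * M ^ k / δ ^ (γ + 2) ≤ A * τ * M ^ (k + 1) / δ ^ (γ + 2))
    rw [one_add_mul]
    linarith

end Iteration

/-! ### The Hopf barrier -/

section HopfProfile

variable {s β t ρ r : ℝ}

/-- The profile, as a function of `ρ = ‖x‖²`, of a barrier that vanishes on the unit sphere with
nonzero slope. The term `(1 - ρ) ^ (1 + β)` makes it strictly convex, more and more so near the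
sphere. -/
noncomputable def hopfProfile (s β ρ : ℝ) : ℝ := s * ((1 - ρ) + (1 - ρ) ^ (1 + β))

lemma contDiffAt_hopfProfile (hρ : ρ < 1) : ContDiffAt ℝ 2 (hopfProfile s β) ρ := by
  have hsub : ContDiffAt ℝ 2 (fun ρ : ℝ => 1 - ρ) ρ := by fun_prop
  exact contDiffAt_const.mul (hsub.add (hsub.rpow_const_of_ne (sub_pos.2 hρ).ne'))

lemma hasDerivAt_hopfProfile (hρ : ρ < 1) :
    HasDerivAt (hopfProfile s β) (-(s * (1 + (1 + β) * (1 - ρ) ^ β))) ρ := by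
  have hsub : HasDerivAt (fun ρ : ℝ => 1 - ρ) (-1) ρ := (hasDerivAt_id ρ).const_sub 1
  have hpow := hsub.rpow_const (p := 1 + β) (.inl (sub_pos.2 hρ).ne')
  rw [add_sub_cancel_left] at hpow
  exact ((hsub.add hpow).const_mul s).congr_deriv (by ring)

lemma deriv_deriv_hopfProfile (hρ : ρ < 1) :
    deriv (deriv (hopfProfile s β)) ρ = s * ((1 + β) * β * (1 - ρ) ^ (β - 1)) := by
  have hderiv : deriv (hopfProfile s β) =ᶠ[nhds ρ]
      fun ρ => -(s * (1 + (1 + β) * (1 - ρ) ^ β)) := by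
    filter_upwards [Iio_mem_nhds hρ] with z hz using (hasDerivAt_hopfProfile hz).deriv
  have hsub : HasDerivAt (fun ρ : ℝ => 1 - ρ) (-1) ρ := (hasDerivAt_id ρ).const_sub 1
  have hpow := hsub.rpow_const (p := β) (.inl (sub_pos.2 hρ).ne')
  rw [hderiv.deriv_eq]
  exact ((((hpow.const_mul (1 + β)).const_add 1).const_mul s).neg.congr_deriv (by ring)).deriv

lemma abs_deriv_hopfProfile_le (hs : 0 ≤ s) (hβ : 0 ≤ β) (hβ1 : β ≤ 1) (hρ : 0 ≤ ρ)
    (hρ1 : ρ < 1) : |deriv (hopfProfile s β) ρ| ≤ 3 * s := by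
  have hpow : (1 - ρ) ^ β ≤ 1 := Real.rpow_le_one (sub_pos.2 hρ1).le (sub_le_self _ hρ) hβ
  have : 0 ≤ (1 - ρ) ^ β := Real.rpow_nonneg (sub_pos.2 hρ1).le β
  rw [(hasDerivAt_hopfProfile hρ1).deriv, abs_neg, abs_of_nonneg (by positivity)]
  calc s * (1 + (1 + β) * (1 - ρ) ^ β) ≤ s * (1 + (1 + 1) * 1) := by gcongr
    _ = 3 * s := by ring

lemma mul_one_sub_le_hopfProfile_sq (hs : 0 ≤ s) (hr : 0 ≤ r) (hr1 : r < 1) :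
    s * (1 - r) ≤ hopfProfile s β (r ^ 2) := by
  have hr2 : r ^ 2 ≤ r := pow_le_of_le_one hr hr1.le two_ne_zero
  have hpow : 0 ≤ (1 - r ^ 2) ^ (1 + β) := Real.rpow_nonneg (by linarith) _
  exact mul_le_mul_of_nonneg_left (by linarith) hs

lemma hopfProfile_sq_le (hs : 0 ≤ s) (hβ : 0 ≤ β) (hr : 0 ≤ r) (hr1 : r < 1) :
    hopfProfile s β (r ^ 2) ≤ 4 * s * (1 - r) := by
  have hr2 : r ^ 2 ≤ r := pow_le_of_le_one hr hr1.le two_ne_zero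
  have hpow : (1 - r ^ 2) ^ (1 + β) ≤ 1 - r ^ 2 := Real.rpow_le_self_of_le_one (by linarith)
    (sub_le_self 1 (sq_nonneg r)) (le_add_of_nonneg_right hβ)
  calc hopfProfile s β (r ^ 2) ≤ s * ((1 - r ^ 2) + (1 - r ^ 2)) :=
        mul_le_mul_of_nonneg_left (by linarith) hs
    _ = s * (2 * (1 + r) * (1 - r)) := by ring
    _ ≤ s * (2 * (1 + 1) * (1 - r)) := by
      have : 0 ≤ 1 - r := by linarith
      gcongr
    _ = 4 * s * (1 - r) := by ring

lemma le_deriv_deriv_hopfProfile_sq (hs : 0 ≤ s) (hβ : 0 ≤ β) (hβ1 : β ≤ 1) (hr : 0 ≤ r)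
    (hr1 : r < 1) (ht : 0 < t) (hrt : 1 - r ≤ 3 / 2 * t) :
    s * β * t ^ (β - 1) / 3 ≤ deriv (deriv (hopfProfile s β)) (r ^ 2) := by
  have hr2 : r ^ 2 < 1 := pow_lt_one₀ hr hr1 two_ne_zero
  have hdist : 1 - r ^ 2 ≤ 3 * t := by nlinarith
  have hthird : (3 : ℝ)⁻¹ ≤ 3 ^ (β - 1) := by
    rw [← Real.rpow_neg_one]
    exact Real.rpow_le_rpow_of_exponent_le (by norm_num) (by linarith)
  have hpow : 3⁻¹ * t ^ (β - 1) ≤ (1 - r ^ 2) ^ (β - 1) :=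
    calc 3⁻¹ * t ^ (β - 1) ≤ 3 ^ (β - 1) * t ^ (β - 1) := by gcongr
      _ = (3 * t) ^ (β - 1) := (Real.mul_rpow (by norm_num) ht.le).symm
      _ ≤ (1 - r ^ 2) ^ (β - 1) :=
        Real.rpow_le_rpow_of_nonpos (by linarith) hdist (by linarith)
  rw [deriv_deriv_hopfProfile hr2]
  calc s * β * t ^ (β - 1) / 3 = s * (1 * β * (3⁻¹ * t ^ (β - 1))) := by ring
    _ ≤ s * ((1 + β) * β * (1 - r ^ 2) ^ (β - 1)) := by
      gcongr
      linarith

end HopfProfile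

section HopfBarrier

variable {s β κ e t : ℝ} {x x₀ : ℝ^n}

/-- The Hopf profile, pushed below its tangent position away from `x₀` by a paraboloid. -/
noncomputable def hopfBarrier (s β κ e : ℝ) (x₀ x : ℝ^n) : ℝ :=
  hopfProfile s β (‖x‖ ^ 2) + (e - κ * ‖x - x₀‖ ^ 2)

lemma contDiffAt_hopfProfile_norm_sq (hx : ‖x‖ < 1) :
    ContDiffAt ℝ 2 (fun y : ℝ^n => hopfProfile s β (‖y‖ ^ 2)) x := by
  simpa only [sub_zero] using contDiffAt_comp_norm_sub_sq (x₀ := (0 : ℝ^n)) (x := x)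
    (contDiffAt_hopfProfile (by rw [sub_zero]; exact pow_lt_one₀ (norm_nonneg x) hx two_ne_zero))

lemma contDiffAt_sub_mul_norm_sub_sq : ContDiffAt ℝ 2 (fun y => e - κ * ‖y - x₀‖ ^ 2) x :=
  contDiffAt_comp_norm_sub_sq (g := fun ρ => e - κ * ρ) (by fun_prop)

lemma contDiffAt_hopfBarrier (hx : ‖x‖ < 1) : ContDiffAt ℝ 2 (hopfBarrier s β κ e x₀) x :=
  (contDiffAt_hopfProfile_norm_sq hx).add contDiffAt_sub_mul_norm_sub_sq

lemma deriv_sub_mul : deriv (fun ρ : ℝ => e - κ * ρ) = fun _ => -κ := by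
  ext ρ
  simp

lemma norm_fderiv_hopfBarrier_le (hs : 0 ≤ s) (hβ : 0 ≤ β) (hβ1 : β ≤ 1) (hκ : 0 ≤ κ)
    (hx : ‖x‖ < 1) (hκx : 2 * κ * ‖x - x₀‖ ≤ s) :
    ‖fderiv ℝ (hopfBarrier s β κ e x₀) x‖ ≤ 7 * s := by
  have hx2 : ‖x‖ ^ 2 < 1 := pow_lt_one₀ (norm_nonneg x) hx two_ne_zero
  have hprofile := hasFDerivAt_comp_norm_sub_sq (x₀ := (0 : ℝ^n)) (x := x) (g := hopfProfile s β)
    (by rw [sub_zero]; exact (hasDerivAt_hopfProfile hx2).differentiableAt)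
  have hparaboloid := hasFDerivAt_comp_norm_sub_sq (x₀ := x₀) (x := x) (g := fun ρ => e - κ * ρ)
    (by fun_prop)
  simp only [sub_zero] at hprofile
  have hbarrier : HasFDerivAt (hopfBarrier s β κ e x₀) _ x := hprofile.add hparaboloid
  rw [hbarrier.fderiv, deriv_sub_mul]
  refine (norm_add_le _ _).trans ?_
  rw [norm_smul, norm_smul, innerSL_apply_norm, innerSL_apply_norm, Real.norm_eq_abs,
    Real.norm_eq_abs, abs_mul, abs_mul, abs_two, abs_neg, abs_of_nonneg hκ]
  have hderiv := abs_deriv_hopfProfile_le hs hβ hβ1 (sq_nonneg ‖x‖) hx2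
  calc 2 * |deriv (hopfProfile s β) (‖x‖ ^ 2)| * ‖x‖ + 2 * κ * ‖x - x₀‖
      ≤ 2 * (3 * s) * 1 + s := by gcongr
    _ = 7 * s := by ring

lemma le_pucciMinus_hess_hopfProfile (hlam : 0 ≤ lam) (hLam : lam ≤ Lam) (hs : 0 ≤ s)
    (hβ : 0 ≤ β) (hβ1 : β ≤ 1) (ht : 0 < t) (hx : 3 / 4 ≤ ‖x‖) (hx1 : ‖x‖ < 1)
    (hxt : 1 - ‖x‖ ≤ 3 / 2 * t) :
    s * (2 / 3 * (lam * β * t ^ (β - 1)) - 6 * n * Lam) ≤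
      pucciMinus n lam Lam (hess n (fun y => hopfProfile s β (‖y‖ ^ 2)) x) := by
  have hLam0 : 0 ≤ Lam := hlam.trans hLam
  have hx2 : ‖x‖ ^ 2 < 1 := pow_lt_one₀ (norm_nonneg x) hx1 two_ne_zero
  have hderiv := neg_le_of_abs_le (abs_deriv_hopfProfile_le hs hβ hβ1 (sq_nonneg ‖x‖) hx2)
  have hderiv₂ := le_deriv_deriv_hopfProfile_sq hs hβ hβ1 (norm_nonneg x) hx1 ht hxt
  have hconvex : 0 ≤ deriv (deriv (hopfProfile s β)) (‖x‖ ^ 2) := hderiv₂.trans' (by positivity)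
  have : 0 ≤ (1 - ‖x‖ ^ 2) ^ β := Real.rpow_nonneg (by linarith) β
  have hle := le_pucciMinus_hess_comp_norm_sub_sq (x₀ := (0 : ℝ^n)) (x := x)
    (g := hopfProfile s β) hlam hLam
    (by rw [sub_zero]; exact contDiffAt_hopfProfile hx2)
    (by
      rw [sub_zero, (hasDerivAt_hopfProfile hx2).deriv, neg_nonpos]
      positivity)
    (by rw [sub_zero]; exact hconvex)
  simp only [sub_zero] at hle
  refine le_trans ?_ hle
  calc s * (2 / 3 * (lam * β * t ^ (β - 1)) - 6 * n * Lam)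
      = 4 * lam * (s * β * t ^ (β - 1) / 3) * (1 / 2) + 2 * n * Lam * -(3 * s) := by ring
    _ ≤ 4 * lam * deriv (deriv (hopfProfile s β)) (‖x‖ ^ 2) * ‖x‖ ^ 2
        + 2 * n * Lam * deriv (hopfProfile s β) (‖x‖ ^ 2) := by
      have hx_half : 1 / 2 ≤ ‖x‖ ^ 2 := by nlinarith
      gcongr

lemma le_pucciMinus_hess_sub_mul_norm_sub_sq (hlam : 0 ≤ lam) (hLam : lam ≤ Lam) (hκ : 0 ≤ κ) :
    -(2 * n * Lam * κ) ≤ pucciMinus n lam Lam (hess n (fun y => e - κ * ‖y - x₀‖ ^ 2) x) := by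
  have hle := le_pucciMinus_hess_comp_norm_sub_sq (x₀ := x₀) (x := x)
    (g := fun ρ => e - κ * ρ) hlam hLam (by fun_prop)
    (by rw [deriv_sub_mul]; exact neg_nonpos.2 hκ)
    (by rw [deriv_sub_mul, deriv_const])
  simpa only [deriv_sub_mul, deriv_const, mul_zero, zero_mul, zero_add, mul_neg] using hle

lemma pucciMinus_hess_hopfBarrier_nonneg (hlam : 0 ≤ lam) (hLam : lam ≤ Lam) (hs : 0 ≤ s)
    (hβ : 0 ≤ β) (hβ1 : β ≤ 1) (hκ : 0 ≤ κ) (ht : 0 < t) (hx : 3 / 4 ≤ ‖x‖) (hx1 : ‖x‖ < 1)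
    (hxt : 1 - ‖x‖ ≤ 3 / 2 * t) (hκt : 6 * n * Lam * κ ≤ lam * β * s * t ^ (β - 1))
    (ht' : 18 * n * Lam ≤ lam * β * t ^ (β - 1)) :
    0 ≤ pucciMinus n lam Lam (hess n (hopfBarrier s β κ e x₀) x) := by
  have hadd := pucciMinus_add_le hlam hLam (hess n (fun y => hopfProfile s β (‖y‖ ^ 2)) x)
    (hess n (fun y => e - κ * ‖y - x₀‖ ^ 2) x)
  rw [← hess_add (contDiffAt_hopfProfile_norm_sq hx1) contDiffAt_sub_mul_norm_sub_sq] at hadd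
  have hprofile := le_pucciMinus_hess_hopfProfile hlam hLam hs hβ hβ1 ht hx hx1 hxt
  have hparaboloid :=
    le_pucciMinus_hess_sub_mul_norm_sub_sq (e := e) (x₀ := x₀) (x := x) hlam hLam hκ
  refine le_trans ?_ hadd
  linarith [mul_le_mul_of_nonneg_left ht' hs]

end HopfBarrier

section HopfComparison

lemma exists_forall_shell_le {F : Type*} [NormedAddCommGroup F] [ProperSpace F] {φ : F → ℝ}
    {C r : ℝ} {x₀ : F} (hφ : ContinuousOn φ (ball 0 1)) (hC : 0 < C)
    (hlower : ∀ z ∈ ball 0 1, -(C * (1 - ‖z‖)) ≤ φ z)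
    (hshell : ∀ z, r ≤ 1 - ‖z‖ → 1 - ‖z‖ ≤ 2 * r → 0 ≤ φ z) (hx₀ : ‖x₀‖ < 1)
    (hx₀r : 1 - ‖x₀‖ < r) (hneg : φ x₀ < 0) :
    ∃ x, ‖x‖ < 1 ∧ 1 - ‖x‖ < r ∧ ∀ z ∈ ball 0 1, 1 - ‖z‖ ≤ 2 * r → φ x ≤ φ z := by
  set t := min (1 - ‖x₀‖) (-φ x₀ / C)
  have ht : 0 < t := lt_min (sub_pos.2 hx₀) (div_pos (neg_pos.2 hneg) hC)
  have hx₀t : ‖x₀‖ ≤ 1 - t := by linarith [min_le_left (1 - ‖x₀‖) (-φ x₀ / C)]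
  have hx₀mem : x₀ ∈ closedBall 0 (1 - t) ∩ {z | 1 - ‖z‖ ≤ 2 * r} :=
    ⟨mem_closedBall_zero_iff.2 hx₀t,
      (by linarith [sub_pos.2 hx₀] : 1 - ‖x₀‖ ≤ 2 * r)⟩
  have hcompact : IsCompact (closedBall (0 : F) (1 - t) ∩ {z | 1 - ‖z‖ ≤ 2 * r}) :=
    (isCompact_closedBall _ _).inter_right (isClosed_le (by fun_prop) (by fun_prop))
  obtain ⟨x, hx, hmin⟩ := hcompact.exists_isMinOn ⟨x₀, hx₀mem⟩
    (hφ.mono (Set.inter_subset_left.trans (closedBall_subset_ball (by linarith))))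
  have hxx₀ : φ x ≤ φ x₀ := hmin hx₀mem
  refine ⟨x, by linarith [mem_closedBall_zero_iff.1 hx.1], ?_, fun z hz hzr => ?_⟩
  · by_contra! hxr
    linarith [hshell x hxr hx.2]
  · rcases le_or_gt ‖z‖ (1 - t) with hzt | hzt
    · exact hmin ⟨mem_closedBall_zero_iff.2 hzt, hzr⟩
    · have hCt : C * t ≤ -φ x₀ := by
        rw [mul_comm]
        exact (le_div_iff₀ hC).1 (min_le_right _ _)
      linarith [hlower z hz, mul_le_mul_of_nonneg_left (by linarith : 1 - ‖z‖ ≤ t) hC.le]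

variable {s β κ t H B K : ℝ} {b h u : ℝ^n → ℝ} {x₀ x : ℝ^n}

lemma norm_mem_Icc_of_mem_closedBall (hx₀ : 1 - ‖x₀‖ = t) (hx : x ∈ closedBall x₀ (t / 2)) :
    ‖x‖ ∈ Set.Icc (1 - 3 / 2 * t) (1 - t / 2) := by
  have hdist := abs_le.1 ((abs_norm_sub_norm_le x x₀).trans (mem_closedBall_iff_norm.1 hx))
  constructor <;> linarith [hdist.1, hdist.2]

lemma IsSupersolutionOn.mul_sq_le_of_isMinOn_sub_hopfProfile [NeZero n] (hlam : 0 < lam)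
    (hLam : lam ≤ Lam) (hu : IsSupersolutionOn lam Lam b h u (ball 0 1)) (hs : 0 ≤ s) (hβ : 0 ≤ β)
    (hβ1 : β ≤ 1) (hκ : 0 ≤ κ) (ht : 0 < t) (ht8 : t ≤ 1 / 8) (hx₀ : 1 - ‖x₀‖ = t)
    (hκs : κ * t ≤ s) (hκt : 6 * n * Lam * κ ≤ lam * β * s * t ^ (β - 1))
    (htβ : 18 * n * Lam ≤ lam * β * t ^ (β - 1))
    (hb : PosPartLnLE b (ball x₀ (t / 2)) B) (hB0 : 0 ≤ B) (hB : B ≤ lam * unitBallVolumeRoot n / 2)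
    (hh : PosPartLnLE h (ball x₀ (t / 2)) H) (hH : 0 ≤ H)
    (hmin : IsMinOn (fun z => u z - hopfProfile s β (‖z‖ ^ 2)) (closedBall x₀ (t / 2)) x₀) :
    κ * (t / 2) ^ 2 ≤ 8 / (lam * unitBallVolumeRoot n) * (t / 2) * (H + 7 * s * B) := by
  have hnorm : ∀ x ∈ closedBall x₀ (t / 2), 3 / 4 ≤ ‖x‖ ∧ ‖x‖ < 1 ∧ 1 - ‖x‖ ≤ 3 / 2 * t :=
    fun x hx => by
      have := norm_mem_Icc_of_mem_closedBall hx₀ hx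
      refine ⟨?_, ?_, ?_⟩ <;> linarith [this.1, this.2]
  have hsub : closedBall x₀ (t / 2) ⊆ ball 0 1 := fun x hx =>
    mem_ball_zero_iff.2 (hnorm x hx).2.1
  set e := u x₀ - hopfProfile s β (‖x₀‖ ^ 2) + κ * (t / 2) ^ 2 with he
  have hcomparison := IsSupersolutionOn.sub_le_of_barrier (v := hopfBarrier s β κ e x₀)
    (y := x₀) hlam hLam (by positivity : 0 < t / 2) (fun x hx => hu.contDiffAt x (hsub hx))
    (hu.mono_set (Set.inter_subset_left.trans (ball_subset_closedBall.trans hsub)))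
    (fun x hx => contDiffAt_hopfBarrier (hnorm x hx).2.1)
    (fun x hx => by
      have hle : u x₀ - hopfProfile s β (‖x₀‖ ^ 2) ≤ u x - hopfProfile s β (‖x‖ ^ 2) :=
        hmin (sphere_subset_closedBall hx)
      rw [hopfBarrier, mem_sphere_iff_norm.1 hx]
      linarith)
    (fun x hx => by
      obtain ⟨hx34, hx1, hxt⟩ := hnorm x (ball_subset_closedBall hx.1)
      exact pucciMinus_hess_hopfBarrier_nonneg hlam.le hLam hs hβ hβ1 hκ ht hx34 hx1 hxt hκt htβ)
    (fun x hx => by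
      refine norm_fderiv_hopfBarrier_le hs hβ hβ1 hκ (hnorm x (ball_subset_closedBall hx.1)).2.1 ?_
      linarith [mul_le_mul_of_nonneg_left (mem_ball_iff_norm.1 hx.1).le hκ])
    (by positivity) hb hB0 hB hh hH (mem_closedBall_self (by positivity))
  rw [hopfBarrier, sub_self, norm_zero] at hcomparison
  linarith

lemma mul_rpow_sub_one_mul_le {c : ℝ} (hs : 0 ≤ s) (hβ : 0 ≤ β) (hc1 : c ≤ 1) (ht : 0 < t)
    (ht1 : t ≤ 1) : c * s * t ^ (β - 1) * t ≤ s :=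
  calc c * s * t ^ (β - 1) * t = c * s * t ^ β := by
        rw [mul_assoc, ← Real.rpow_add_one ht.ne', sub_add_cancel]
    _ ≤ 1 * s * 1 := by
        gcongr
        exact Real.rpow_le_one ht.le ht1 hβ
    _ = s := by ring

lemma le_mul_rpow_sub_one {A : ℝ} (ht : 0 < t) (h : A * t ^ (1 - β) ≤ B) :
    A ≤ B * t ^ (β - 1) :=
  calc A = A * t ^ (1 - β) * t ^ (β - 1) := by
        rw [mul_assoc, ← Real.rpow_add ht, sub_add_sub_cancel', sub_self, Real.rpow_zero, mul_one]
    _ ≤ B * t ^ (β - 1) := by gcongr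

/-- The paraboloid that is subtracted in the barrier gains `κt²` with `κ ∼ s t ^ (β - 1)`, hence
`s t ^ (1 + β)`, whereas drift and source cost only `s t ^ (1 + 2β)`. -/
lemma drift_source_cost_lt {c ρ : ℝ} (hc : 0 < c) (hs : 0 < s) (ht : 0 < t)
    (h : 2 * ρ * (1 + 7 * K) * t ^ β ≤ c / 2) :
    ρ * (t / 2) * (s * t ^ (2 * β) + 7 * s * (K * t ^ (2 * β)))
      < c * s * t ^ (β - 1) * (t / 2) ^ 2 := by
  have hpos : 0 < s * (t * t ^ β) := by positivity
  have hgain : c * s * t ^ (β - 1) * (t / 2) ^ 2 = c * (s * (t * t ^ β)) / 4 := by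
    rw [Real.rpow_sub_one ht.ne']
    field_simp
    ring
  have hcost : ρ * (t / 2) * (s * t ^ (2 * β) + 7 * s * (K * t ^ (2 * β)))
      = 2 * ρ * (1 + 7 * K) * t ^ β * (s * (t * t ^ β)) / 4 := by
    rw [two_mul, Real.rpow_add ht]
    ring
  linarith [mul_le_mul_of_nonneg_right h hpos.le, mul_pos hc hpos]

lemma IsNonnegSupersolution.not_isMinOn_sub_hopfProfile [NeZero n] (hlam : 0 < lam)
    (hLam : lam ≤ Lam) (hu : IsNonnegSupersolution lam Lam K (2 * β) b h u) (hs : 0 < s)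
    (hβ : 0 < β) (hβ1 : β ≤ 1) (hK : 0 ≤ K) (ht : 0 < t) (ht8 : t ≤ 1 / 8) (hx₀ : 1 - ‖x₀‖ = t)
    (hconvex : 18 * n * Lam * t ^ (1 - β) ≤ lam * β)
    (hsource : 2 * (8 / (lam * unitBallVolumeRoot n)) * (1 + 7 * K) * t ^ β
      ≤ lam * β / (6 * n * Lam) / 2)
    (hdrift : K * t ^ (2 * β) ≤ lam * unitBallVolumeRoot n / 2)
    (hh : PosPartLnLE h (ball x₀ (t / 2)) (s * t ^ (2 * β))) :
    ¬ IsMinOn (fun z => u z - hopfProfile s β (‖z‖ ^ 2)) (closedBall x₀ (t / 2)) x₀ := by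
  intro hmin
  have hLam0 : 0 < Lam := hlam.trans_le hLam
  have hn : 0 < (n : ℝ) := Nat.cast_pos.2 (NeZero.pos n)
  set c := lam * β / (6 * n * Lam) with hc
  have hc0 : 0 < c := by positivity
  have hc1 : c ≤ 1 := by
    have hn1 : (1 : ℝ) ≤ n := Nat.one_le_cast.2 NeZero.one_le
    rw [hc, div_le_one (by positivity)]
    calc lam * β ≤ Lam * 1 := by gcongr
      _ ≤ 6 * n * Lam := by nlinarith
  have hcκ : 6 * n * Lam * (c * s * t ^ (β - 1)) = lam * β * s * t ^ (β - 1) := by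
    rw [hc]
    field_simp
  have hcomparison := hu.toIsSupersolutionOn.mul_sq_le_of_isMinOn_sub_hopfProfile hlam hLam hs.le
    hβ.le hβ1 (by positivity) ht ht8 hx₀
    (mul_rpow_sub_one_mul_le hs.le hβ.le hc1 ht (by linarith)) hcκ.le
    (le_mul_rpow_sub_one ht hconvex)
    (hu.drift_le_of_le (by positivity) hK (by positivity) (by linarith) le_rfl) (by positivity)
    hdrift hh (by positivity) hmin
  exact hcomparison.not_gt (drift_source_cost_lt hc0 hs ht hsource)

end HopfComparison

section HopfLemma

variable {K α d₀ : ℝ}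

lemma sub_hopfProfile_nonneg_of_le {s β m r w v : ℝ} (hs : 0 ≤ s) (hβ : 0 ≤ β) (hv : 0 ≤ v)
    (hv1 : v < 1) (hvr : 1 - v ≤ 2 * r) (hm : 8 * r * s ≤ m) (hw : m ≤ w) :
    0 ≤ w - hopfProfile s β (v ^ 2) := by
  have := hopfProfile_sq_le hs hβ hv hv1
  nlinarith

theorem exists_forall_mul_one_sub_norm_le [NeZero n] (hlam : 0 < lam) (hLam : lam ≤ Lam)
    (hα : 0 < α) (hα1 : α ≤ 1) (hK : 0 ≤ K) (hd₀ : 0 < d₀) :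
    ∃ r₁ : ℝ, 0 < r₁ ∧ r₁ ≤ 1 / 8 ∧ ∀ (b h u : ℝ^n → ℝ) (s m : ℝ),
      IsNonnegSupersolution lam Lam K α b h u → 0 < s →
      (∀ (x : ℝ^n) (r : ℝ), 0 < r → (∀ z ∈ ball x r, 1 - d₀ < ‖z‖ ∧ ‖z‖ < 1) →
        PosPartLnLE h (ball x r) (s * r ^ α)) →
      8 * r₁ * s ≤ m → (∀ x, ‖x‖ ≤ 1 - r₁ → m ≤ u x) →
      ∀ x, ‖x‖ < 1 → 1 - ‖x‖ < r₁ → s * (1 - ‖x‖) ≤ u x := by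
  obtain ⟨β, rfl⟩ : ∃ β, α = 2 * β := ⟨α / 2, by ring⟩
  have hβ : 0 < β := by linarith
  have hLam0 : 0 < Lam := hlam.trans_le hLam
  have hω : 0 < lam * unitBallVolumeRoot n := mul_pos hlam unitBallVolumeRoot_pos
  have hn : 0 < (n : ℝ) := Nat.cast_pos.2 (NeZero.pos n)
  obtain ⟨ra, hra, hconvex⟩ := exists_forall_mul_rpow_le (α := 1 - β) (m := lam * β)
    (by linarith) (by positivity) (18 * n * Lam)
  obtain ⟨rb, hrb, hsource⟩ := exists_forall_mul_rpow_le (m := lam * β / (6 * n * Lam) / 2)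
    hβ (by positivity) (2 * (8 / (lam * unitBallVolumeRoot n)) * (1 + 7 * K))
  obtain ⟨rc, hrc, hdrift⟩ := exists_forall_mul_rpow_le hα (half_pos hω) K
  set r₁ := min (min ra rb) (min rc (min (d₀ / 2) (1 / 8))) with hr₁
  have hr₁0 : 0 < r₁ := by positivity
  refine ⟨r₁, hr₁0, by simp [hr₁], fun b h u s m hu hs hh hm hmu x₀ hx₀ hx₀r => ?_⟩
  have hle := hr₁.le
  simp only [le_min_iff] at hle
  by_contra! hlt
  obtain ⟨x, hx, hxr, hmin⟩ := exists_forall_shell_le (C := 4 * s)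
    (φ := fun z => u z - hopfProfile s β (‖z‖ ^ 2))
    (fun z hz => ((hu.contDiffAt z hz).sub (contDiffAt_hopfProfile_norm_sq
      (mem_ball_zero_iff.1 hz))).continuousAt.continuousWithinAt) (by positivity)
    (fun z hz => by
      linarith [hu.nonneg z hz,
        hopfProfile_sq_le hs.le hβ.le (norm_nonneg z) (mem_ball_zero_iff.1 hz)])
    (fun z hz hzr => sub_hopfProfile_nonneg_of_le hs.le hβ.le (norm_nonneg z) (by linarith) hzr hm
      (hmu z (by linarith)))
    hx₀ hx₀r (by linarith [mul_one_sub_le_hopfProfile_sq (β := β) hs.le (norm_nonneg x₀) hx₀])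
  have ht : 0 < 1 - ‖x‖ := sub_pos.2 hx
  have hnorm := fun z (hz : z ∈ closedBall x ((1 - ‖x‖) / 2)) =>
    norm_mem_Icc_of_mem_closedBall rfl hz
  refine hu.not_isMinOn_sub_hopfProfile hlam hLam hs hβ (by linarith) hK ht (by linarith) rfl
    (hconvex _ ht.le (by linarith)) (hsource _ ht.le (by linarith)) (hdrift _ ht.le (by linarith))
    ((hh x _ (half_pos ht) fun z hz => ?_).mono (by gcongr; linarith)) fun z hz => ?_
  · have := hnorm z (ball_subset_closedBall hz)
    constructor <;> linarith [this.1, this.2]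
  · have := hnorm z hz
    exact hmin z (mem_ball_zero_iff.2 (by linarith [this.2])) (by linarith [this.1])

end HopfLemma

/-! ### Lebesgue norms and level sets -/

section LpNorm

variable {p q m H r t δ : ℝ} {g : ℝ^n → ℝ} {B E E' : Set (ℝ^n)} {x : ℝ^n}

lemma lpNormE_eq_eLpNorm' (hp : 0 ≤ p) :
    LpNormE n p g E = eLpNorm' g p (volume.restrict E) := by
  simp only [LpNormE, eLpNorm', Real.enorm_eq_ofReal_abs,
    ENNReal.ofReal_rpow_of_nonneg (abs_nonneg _) hp]

lemma lpNormE_indicator_le (hp : 0 < p) (hB : MeasurableSet B) (hBE : B ∩ E ⊆ E') :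
    LpNormE n p (B.indicator g) E ≤ LpNormE n p g E' := by
  have hindicator (x : ℝ^n) : ENNReal.ofReal (|B.indicator g x| ^ p)
      = B.indicator (fun x => ENNReal.ofReal (|g x| ^ p)) x := by
    by_cases hx : x ∈ B <;> simp [hx, Real.zero_rpow hp.ne']
  simp only [LpNormE, hindicator]
  rw [setLIntegral_indicator hB]
  gcongr

lemma PosPartLnLE.of_lpNormE_le [NeZero n] (hg : Measurable g) (hq : (n : ℝ) ≤ q) (hm : 0 ≤ m)
    (hE : volume E ≤ ENNReal.ofReal m ^ n) (hH : 0 ≤ H)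
    (hnorm : LpNormE n q g E ≤ ENNReal.ofReal H) : PosPartLnLE g E (H * m ^ (1 - n / q)) := by
  have hn : (0 : ℝ) < n := Nat.cast_pos.2 (NeZero.pos n)
  have hq0 : 0 < q := hn.trans_le hq
  have hexp : 0 ≤ 1 / (n : ℝ) - 1 / q := sub_nonneg.2 (one_div_le_one_div_of_le hn hq)
  have hexp_mul : (n : ℝ) * (1 / (n : ℝ) - 1 / q) = 1 - n / q := by field_simp
  have hholder : LpNormE n n g E ≤ ENNReal.ofReal (H * m ^ (1 - n / q)) :=
    calc LpNormE n n g E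
        ≤ LpNormE n q g E * volume E ^ (1 / (n : ℝ) - 1 / q) := by
          rw [lpNormE_eq_eLpNorm' hn.le, lpNormE_eq_eLpNorm' hq0.le,
            ← Measure.restrict_apply_univ E]
          exact eLpNorm'_le_eLpNorm'_mul_rpow_measure_univ hn hq hg.aestronglyMeasurable
      _ ≤ ENNReal.ofReal H * (ENNReal.ofReal m ^ n) ^ (1 / (n : ℝ) - 1 / q) := by gcongr
      _ = ENNReal.ofReal (H * m ^ (1 - n / q)) := by
          rw [← ENNReal.rpow_natCast, ← ENNReal.rpow_mul, hexp_mul, ENNReal.ofReal_mul hH,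
            ENNReal.ofReal_rpow_of_nonneg hm (hexp_mul ▸ by positivity)]
  calc ∫⁻ x in E, ENNReal.ofReal (g x) ^ n
      ≤ ∫⁻ x in E, ENNReal.ofReal (|g x| ^ (n : ℝ)) := by
        gcongr with x
        rw [Real.rpow_natCast, ENNReal.ofReal_pow (abs_nonneg _)]
        gcongr
        exact le_abs_self _
    _ = LpNormE n n g E ^ n := by
        rw [LpNormE, ← ENNReal.rpow_natCast, ← ENNReal.rpow_mul, one_div_mul_cancel hn.ne',
          ENNReal.rpow_one]
    _ ≤ ENNReal.ofReal (H * m ^ (1 - n / q)) ^ n := by gcongr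

lemma PosPartLnLE.indicator_ball [NeZero n] (hg : Measurable (B.indicator g)) (hq : (n : ℝ) ≤ q)
    (hr : 0 ≤ r) (hB : MeasurableSet B) (hH : 0 ≤ H) (hBE : B ∩ ball x r ⊆ E)
    (hnorm : LpNormE n q g E ≤ ENNReal.ofReal H) :
    PosPartLnLE (B.indicator g) (ball x r)
      (H * unitBallVolumeRoot n ^ (1 - n / q) * r ^ (1 - n / q)) := by
  have hω := unitBallVolumeRoot_pos (n := n)
  have hq0 : 0 < q := (Nat.cast_pos.2 (NeZero.pos n)).trans_le hq
  rw [mul_assoc, ← Real.mul_rpow hω.le hr]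
  exact .of_lpNormE_le hg hq (by positivity) (volume_ball_eq_pow x hr).le hH
    ((lpNormE_indicator_le hq0 hB hBE).trans hnorm)

lemma PosPartLnLE.volume_inter_lt_le (hg : Measurable g) (hgE : PosPartLnLE g E H) (hH : 0 ≤ H)
    (ht : 0 < t) : volume (E ∩ {x | t < g x}) ≤ ENNReal.ofReal ((H / t) ^ n) := by
  have ht' : ENNReal.ofReal t ^ n ≠ 0 := pow_ne_zero n (by simpa using ht)
  have hmarkov : ENNReal.ofReal t ^ n
      * volume.restrict E {x | ENNReal.ofReal t ^ n ≤ ENNReal.ofReal (g x) ^ n}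
      ≤ ENNReal.ofReal H ^ n :=
    (mul_meas_ge_le_lintegral (by fun_prop) _).trans hgE
  rw [div_pow, ENNReal.ofReal_div_of_pos (by positivity), ENNReal.ofReal_pow hH,
    ENNReal.ofReal_pow ht.le, ENNReal.le_div_iff_mul_le (.inl ht') (.inl (by finiteness)), mul_comm]
  refine le_trans ?_ hmarkov
  rw [Measure.restrict_apply (measurableSet_le measurable_const (by fun_prop))]
  gcongr _ * volume ?_
  rintro x ⟨hxE, hxt : t < g x⟩
  refine ⟨?_, hxE⟩
  change ENNReal.ofReal t ^ n ≤ ENNReal.ofReal (g x) ^ n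
  gcongr

lemma volume_ball_sdiff_closedBall_le [NeZero n] (hδ : 0 < δ) (hδ1 : δ ≤ 1) :
    volume (ball (0 : ℝ^n) 1 \ closedBall 0 (1 - δ))
      ≤ ENNReal.ofReal (unitBallVolumeRoot n ^ n * n * δ) := by
  have hω := unitBallVolumeRoot_pos (n := n)
  have hδ' : 0 ≤ 1 - δ := sub_nonneg.2 hδ1
  have hbernoulli : 1 - n * δ ≤ (1 - δ) ^ n := by
    simpa [sub_eq_add_neg] using one_add_mul_le_pow (a := -δ) (by linarith) n
  rw [measure_sdiff (closedBall_subset_ball (by linarith))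
    isClosed_closedBall.measurableSet.nullMeasurableSet measure_closedBall_lt_top.ne,
    volume_ball_eq_pow _ zero_le_one, volume_closedBall_eq_pow _ hδ',
    ← ENNReal.ofReal_pow (by positivity), ← ENNReal.ofReal_pow (by positivity),
    ← ENNReal.ofReal_sub _ (by positivity)]
  refine ENNReal.ofReal_le_ofReal ?_
  calc (unitBallVolumeRoot n * 1) ^ n - (unitBallVolumeRoot n * (1 - δ)) ^ n
      = unitBallVolumeRoot n ^ n * (1 - (1 - δ) ^ n) := by rw [mul_pow, mul_pow]; ring
    _ ≤ unitBallVolumeRoot n ^ n * (n * δ) := by gcongr; linarith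
    _ = unitBallVolumeRoot n ^ n * n * δ := by ring

end LpNorm

section LayerCake

variable {Ω : Type*} [MeasurableSpace Ω] {μ : Measure Ω} {g : Ω → ℝ} {a L C V ε σ y : ℝ}

lemma exists_rpow_mul_lt_one (hL : 0 < L) (hσ : σ < 1) : ∃ ε : ℝ, 0 < ε ∧ L ^ ε * σ < 1 := by
  have hlim : Filter.Tendsto (fun ε : ℝ => L ^ ε * σ) (nhdsWithin 0 (Set.Ioi 0)) (nhds σ) := by
    have hcont : ContinuousAt (fun ε : ℝ => L ^ ε * σ) 0 :=
      (Real.continuousAt_const_rpow hL.ne').mul continuousAt_const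
    simpa using hcont.tendsto.mono_left nhdsWithin_le_nhds
  obtain ⟨ε, hlt, hε⟩ := ((hlim.eventually (gt_mem_nhds hσ)).and self_mem_nhdsWithin).exists
  exact ⟨ε, hε, hlt⟩

lemma ofReal_rpow_le_add_tsum_indicator (hL : 1 < L) (ha : 0 < a) (hε : 0 ≤ ε) (hy : 0 ≤ y) :
    ENNReal.ofReal (y ^ ε) ≤ ENNReal.ofReal (a ^ ε) + ∑' k : ℕ,
      Set.indicator {y | a * L ^ k < y}
        (fun _ => ENNReal.ofReal (a ^ ε * (L ^ ε) ^ (k + 1))) y := by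
  classical
  have hL0 : 0 < L := one_pos.trans hL
  have hex : ∃ k : ℕ, y ≤ a * L ^ k := by
    obtain ⟨k, hk⟩ := pow_unbounded_of_one_lt (y / a) hL
    exact ⟨k, (div_le_iff₀' ha).1 hk.le⟩
  have hle := Nat.find_spec hex
  rcases hfind : Nat.find hex with _ | k
  · rw [hfind, pow_zero, mul_one] at hle
    exact le_add_right (by gcongr)
  · rw [hfind] at hle
    have hlt : a * L ^ k < y := not_le.1 (Nat.find_min hex (by omega))
    refine le_add_left (le_trans ?_ (ENNReal.le_tsum k))
    rw [Set.indicator_of_mem (show y ∈ {y | a * L ^ k < y} from hlt)]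
    refine ENNReal.ofReal_le_ofReal ?_
    calc y ^ ε ≤ (a * L ^ (k + 1)) ^ ε := by gcongr
      _ = a ^ ε * (L ^ ε) ^ (k + 1) := by
        rw [Real.mul_rpow ha.le (by positivity), Real.rpow_pow_comm hL0.le]

lemma lintegral_rpow_le_of_geometric_decay (hL : 1 < L) (ha : 0 < a) (hε : 0 < ε) (hC : 0 ≤ C)
    (hσ : 0 ≤ σ) (hLσ : L ^ ε * σ < 1) (hV : 0 ≤ V) (hg : Measurable g) (hg0 : ∀ x, 0 ≤ g x)
    (hμ : μ Set.univ ≤ ENNReal.ofReal V)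
    (hdecay : ∀ k : ℕ, μ {x | a * L ^ k < g x} ≤ ENNReal.ofReal (C * σ ^ k)) :
    ∫⁻ x, ENNReal.ofReal (g x ^ ε) ∂μ
      ≤ ENNReal.ofReal (a ^ ε * (V + L ^ ε * C / (1 - L ^ ε * σ))) := by
  have : 0 < L := one_pos.trans hL
  have hmeas (k : ℕ) : MeasurableSet {x | a * L ^ k < g x} := measurableSet_lt measurable_const hg
  set c : ℕ → ℝ≥0∞ := fun k => ENNReal.ofReal (a ^ ε * (L ^ ε) ^ (k + 1))
  have hterm (k : ℕ) : c k * μ {x | a * L ^ k < g x}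
      ≤ ENNReal.ofReal (a ^ ε * (L ^ ε * C) * (L ^ ε * σ) ^ k) :=
    calc c k * μ {x | a * L ^ k < g x}
        ≤ ENNReal.ofReal (a ^ ε * (L ^ ε) ^ (k + 1)) * ENNReal.ofReal (C * σ ^ k) := by
          gcongr
          exact hdecay k
      _ = ENNReal.ofReal (a ^ ε * (L ^ ε * C) * (L ^ ε * σ) ^ k) := by
          rw [← ENNReal.ofReal_mul (by positivity)]
          congr 1
          ring
  have : 0 < 1 - L ^ ε * σ := sub_pos.2 hLσ
  calc ∫⁻ x, ENNReal.ofReal (g x ^ ε) ∂μ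
      ≤ ∫⁻ x, (ENNReal.ofReal (a ^ ε)
          + ∑' k, Set.indicator {x | a * L ^ k < g x} (fun _ => c k) x) ∂μ :=
        lintegral_mono fun x => ofReal_rpow_le_add_tsum_indicator hL ha hε.le (hg0 x)
    _ = ENNReal.ofReal (a ^ ε) * μ Set.univ + ∑' k, c k * μ {x | a * L ^ k < g x} := by
        rw [lintegral_add_left measurable_const, lintegral_const,
          lintegral_tsum fun k => (measurable_const.indicator (hmeas k)).aemeasurable]
        simp only [lintegral_indicator_const (hmeas _)]
    _ ≤ ENNReal.ofReal (a ^ ε) * ENNReal.ofReal V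
          + ∑' k : ℕ, ENNReal.ofReal (a ^ ε * (L ^ ε * C) * (L ^ ε * σ) ^ k) := by
        gcongr with k
        exact hterm k
    _ = ENNReal.ofReal (a ^ ε * (V + L ^ ε * C / (1 - L ^ ε * σ))) := by
        rw [← ENNReal.ofReal_tsum_of_nonneg (fun k => by positivity)
          ((summable_geometric_of_lt_one (by positivity) hLσ).mul_left _), tsum_mul_left,
          tsum_geometric_of_lt_one (by positivity) hLσ, ← ENNReal.ofReal_mul (by positivity),
          ← ENNReal.ofReal_add (by positivity) (by positivity)]
        congr 1
        ring

lemma exists_lintegral_rpow_le_of_geometric_decay (μ : Measure Ω) [IsFiniteMeasure μ]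
    (hL : 1 < L) (ha : 0 < a) (hC : 0 < C) (hσ : 0 ≤ σ) (hσ1 : σ < 1) :
    ∃ ε D : ℝ, 0 < ε ∧ 0 < D ∧ ∀ (g : Ω → ℝ) (τ : ℝ), Measurable g → (∀ x, 0 ≤ g x) → 0 < τ →
      (∀ k : ℕ, μ {x | a * τ * L ^ k < g x} ≤ ENNReal.ofReal (C * σ ^ k)) →
      ∫⁻ x, ENNReal.ofReal (g x ^ ε) ∂μ ≤ ENNReal.ofReal (D * τ ^ ε) := by
  have hL0 : 0 < L := one_pos.trans hL
  obtain ⟨ε, hε, hLσ⟩ := exists_rpow_mul_lt_one hL0 hσ1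
  have : 0 < 1 - L ^ ε * σ := sub_pos.2 hLσ
  refine ⟨ε, a ^ ε * (μ.real Set.univ + L ^ ε * C / (1 - L ^ ε * σ)), hε, by positivity,
    fun g τ hg hg0 hτ hdecay => ?_⟩
  rw [mul_right_comm, ← Real.mul_rpow ha.le hτ.le]
  exact lintegral_rpow_le_of_geometric_decay hL (by positivity) hε hC.le hσ hLσ
    measureReal_nonneg hg hg0 (ofReal_measureReal (measure_ne_top μ _)).ge hdecay

end LayerCake

/-! ### Integrability of the negative part of the right-hand side -/

section Distribution

variable {K α r₀ C δ κ μ a t : ℝ} {b f u : ℝ^n → ℝ} {x : ℝ^n}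

lemma neg_le_pucciMinus_hess_of_mem_contactSet {U : Set (ℝ^n)} (hlam : 0 ≤ lam)
    (hLam : lam ≤ Lam) (hκ : 0 ≤ κ) (hx : x ∈ contactSet κ u U) (hU : U ∈ nhds x)
    (hu : ContDiffAt ℝ 2 u x) : -(n * Lam * κ) ≤ pucciMinus n lam Lam (hess n u x) := by
  have hpos := posSemidef_hess_add_smul_one hx hU hu
  linarith [mul_trace_add_smul_one_le hlam hLam hκ hpos, mul_nonneg hlam hpos.trace_nonneg]

lemma inter_lt_neg_subset (hlam : 0 ≤ lam) (hLam : lam ≤ Lam) (ha : 0 ≤ a) (ht : 0 < t)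
    (hδ : 0 < δ) (hu : ∀ x ∈ ball 0 1, ContDiffAt ℝ 2 u x)
    (hpucci : ∀ x ∈ ball 0 1,
      pucciMinus n lam Lam (hess n u x) ≤ b x * ‖fderiv ℝ u x‖ + f x)
    (hgrad : ∀ x ∈ contactSet a u (closedBall 0 (1 - δ / 2)),
      ‖x‖ ≤ 1 - 15 / 16 * δ → ‖fderiv ℝ u x‖ ≤ a / t) :
    ball 0 1 ∩ {x | (n * Lam + 1) * a < -f x} ⊆
      untouchedSet a δ u ∪ ball 0 1 ∩ {x | t < b x} ∪ ball 0 1 \ closedBall 0 (1 - δ) := by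
  rintro x ⟨hx, hfx : (n * Lam + 1) * a < -f x⟩
  by_contra hmem
  have hxδ : x ∈ closedBall 0 (1 - δ) := by
    by_contra hxδ
    exact hmem (.inr ⟨hx, hxδ⟩)
  have hbx : b x ≤ t := not_lt.1 fun hbx => hmem (.inl (.inr ⟨hx, hbx⟩))
  have hcontact : x ∈ contactSet a u (closedBall 0 (1 - δ / 2)) := by
    by_contra hcontact
    exact hmem (.inl (.inl ⟨hxδ, hcontact⟩))
  rw [mem_closedBall_zero_iff] at hxδ
  have hnhds : closedBall 0 (1 - δ / 2) ∈ nhds x :=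
    closedBall_mem_nhds_of_mem (mem_ball_zero_iff.2 (by linarith))
  have hdrift : b x * ‖fderiv ℝ u x‖ ≤ a :=
    calc b x * ‖fderiv ℝ u x‖ ≤ t * (a / t) := by
          gcongr
          exact hgrad x hcontact (by linarith)
      _ = a := mul_div_cancel₀ a ht.ne'
  linarith [neg_le_pucciMinus_hess_of_mem_contactSet hlam hLam ha hcontact hnhds (hu x hx),
    hpucci x hx]

lemma mul_pow_add_div_pow_add_le [NeZero n] {P Q : ℝ} (hμ : 0 ≤ μ) (hP : 0 ≤ P) (hQ : 0 ≤ Q)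
    (hK : 0 ≤ K) (k : ℕ) :
    P * μ ^ k + (K / 2 ^ k) ^ n + Q * μ ^ k ≤ (P + K ^ n + Q) * max μ (1 / 2) ^ k := by
  have hhalf : (K / 2 ^ k) ^ n ≤ K ^ n * max μ (1 / 2) ^ k :=
    calc (K / 2 ^ k) ^ n = K ^ n * ((1 / 2) ^ k) ^ n := by
          rw [← mul_pow, one_div, inv_pow, div_eq_mul_inv]
      _ ≤ K ^ n * (1 / 2) ^ k := by
          gcongr
          exact pow_le_of_le_one (by positivity)
            (pow_le_one₀ (by norm_num) (by norm_num)) (NeZero.ne n)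
      _ ≤ K ^ n * max μ (1 / 2) ^ k := by
          gcongr
          exact le_max_right _ _
  calc P * μ ^ k + (K / 2 ^ k) ^ n + Q * μ ^ k
      ≤ P * max μ (1 / 2) ^ k + K ^ n * max μ (1 / 2) ^ k + Q * max μ (1 / 2) ^ k := by
        gcongr <;> exact le_max_left _ _
    _ = (P + K ^ n + Q) * max μ (1 / 2) ^ k := by ring

theorem exists_volume_lt_neg_le [NeZero n] (hlam : 0 < lam) (hLam : lam ≤ Lam) (hα : 0 < α)
    (hK : 0 ≤ K) (hr₀ : 0 < r₀) (hC : 0 ≤ C) (γ : ℕ) :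
    ∃ L a V σ : ℝ, 1 < L ∧ 0 < a ∧ 0 < V ∧ 0 ≤ σ ∧ σ < 1 ∧
      ∀ (b f h u : ℝ^n → ℝ) (τ : ℝ), IsNonnegSupersolution lam Lam K α b h u → 0 < τ →
        PosPartLnLE h (ball 0 1) τ → HasSmallValues r₀ (C * τ) γ u →
        (∀ x ∈ ball 0 1, pucciMinus n lam Lam (hess n u x) ≤ b x * ‖fderiv ℝ u x‖ + f x) →
        ∀ k : ℕ, volume (ball 0 1 ∩ {x | a * τ * L ^ k < -f x}) ≤ ENNReal.ofReal (V * σ ^ k) := by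
  obtain ⟨M, A, μ, V, δ₀, hM, hA, hμ, hμ1, hV, hδ₀, hδ₀', huntouched⟩ :=
    exists_volume_untouchedSet_le (n := n) hlam hLam hα hK hr₀ hC γ
  have hω := unitBallVolumeRoot_pos (n := n)
  have hLam0 : 0 < Lam := hlam.trans_le hLam
  have hμγ : μ ^ (γ + 2) < 1 := pow_lt_one₀ hμ.le hμ1 (by omega)
  refine ⟨M / μ ^ (γ + 2), (n * Lam + 1) * (A / δ₀ ^ (γ + 2)),
    V + K ^ n + unitBallVolumeRoot n ^ n * n * δ₀, max μ (1 / 2),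
    (one_lt_div (by positivity)).2 (by linarith), by positivity, by positivity, by positivity,
    max_lt hμ1 (by norm_num), fun b f h u τ hu hτ hh hsmall hpucci k => ?_⟩
  have hδ : 0 < δ₀ * μ ^ k := by positivity
  have hδδ₀ : δ₀ * μ ^ k ≤ δ₀ := mul_le_of_le_one_right hδ₀.le (pow_le_one₀ hμ.le hμ1.le)
  obtain ⟨hvolume, hgrad⟩ := huntouched b h u τ hu hτ hh hsmall _ hδ hδδ₀ k
  set κ := A * τ * M ^ k / (δ₀ * μ ^ k) ^ (γ + 2) with hκ
  have hlevel : (n * Lam + 1) * (A / δ₀ ^ (γ + 2)) * τ * (M / μ ^ (γ + 2)) ^ k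
      = (n * Lam + 1) * κ := by
    rw [hκ, mul_pow, div_pow, ← pow_mul, ← pow_mul, mul_comm k]
    field_simp
  have hb : PosPartLnLE b (ball 0 1) K := by simpa using hu.drift_le 0 1 one_pos
  rw [hlevel]
  calc volume (ball 0 1 ∩ {x | (n * Lam + 1) * κ < -f x})
      ≤ volume (untouchedSet κ (δ₀ * μ ^ k) u) + volume (ball 0 1 ∩ {x | 2 ^ k < b x})
          + volume (ball (0 : ℝ^n) 1 \ closedBall 0 (1 - δ₀ * μ ^ k)) :=
        (measure_mono (inter_lt_neg_subset hlam.le hLam (by positivity) (by positivity) hδ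
          hu.contDiffAt hpucci hgrad)).trans
          ((measure_union_le _ _).trans (by gcongr; exact measure_union_le _ _))
    _ ≤ ENNReal.ofReal (V * μ ^ k) + ENNReal.ofReal ((K / 2 ^ k) ^ n)
          + ENNReal.ofReal (unitBallVolumeRoot n ^ n * n * (δ₀ * μ ^ k)) := by
        gcongr
        · exact hb.volume_inter_lt_le hu.measurable_drift hK (by positivity)
        · exact volume_ball_sdiff_closedBall_le hδ (by linarith)
    _ = ENNReal.ofReal (V * μ ^ k + (K / 2 ^ k) ^ n
          + unitBallVolumeRoot n ^ n * n * δ₀ * μ ^ k) := by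
        rw [← ENNReal.ofReal_add (by positivity) (by positivity),
          ← ENNReal.ofReal_add (by positivity) (by positivity), mul_assoc _ δ₀]
    _ ≤ _ := ENNReal.ofReal_le_ofReal
          (mul_pow_add_div_pow_add_le hμ.le hV.le (by positivity) hK k)

end Distribution

section NegativePart

variable {K α r₁ d₀ : ℝ}

theorem exists_hasSmallValues [NeZero n] (hlam : 0 < lam) (hLam : lam ≤ Lam) (hα : 0 < α)
    (hK : 0 ≤ K) (hr₁ : 0 < r₁) :
    ∃ (r₀ C : ℝ) (γ : ℕ), 0 < r₀ ∧ 0 < C ∧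
      ∀ (b h u : ℝ^n → ℝ) (τ : ℝ), IsNonnegSupersolution lam Lam K α b h u → 0 < τ →
        PosPartLnLE h (ball 0 1) τ → (∃ x, ‖x‖ ≤ 1 - r₁ ∧ u x ≤ τ) →
        HasSmallValues r₀ (C * τ) γ u := by
  obtain ⟨δ, c, D, hδ, hc, hc1, hD, hexpands⟩ := exists_expandsPositivity (n := n) hlam hLam
  obtain ⟨δ₁, hδ₁, hdrift⟩ := exists_forall_mul_rpow_le hα hδ K
  obtain ⟨γ, hγ⟩ := exists_pow_lt_of_lt_one hc (show (2 / 3 : ℝ) < 1 by norm_num)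
  set r₀ := min (δ₁ / 40) (min (r₁ / 80) (1 / 140)) with hr₀
  have hr₀0 : 0 < r₀ := by positivity
  obtain ⟨hr₀δ₁, hr₀r₁, hr₀1⟩ := by simpa only [le_min_iff] using hr₀.le
  obtain ⟨N, hN⟩ := exists_nat_gt (1 / (9 * r₀))
  refine ⟨r₀, (2 + (2 + N) * D) / c ^ N, γ, hr₀0, by positivity, ?_⟩
  rintro b h u τ hu hτ hh ⟨x, hx, hux⟩ y ρ hρ hρr₀ hy
  have hexp := hexpands K α r₀ τ b h u hK hα.le (hdrift _ (by positivity) (by linarith)) hu hh hτ.le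
  obtain ⟨z, hz, huz⟩ := hexp.exists_mem_ball_lt hu.nonneg hc hc1 (by positivity) hr₀0 hr₀1 hγ.le
    hN hρ hρr₀ hy (x := x) (M := 2 * τ) (by linarith) (by linarith)
  refine ⟨z, hz, huz.le.trans_eq ?_⟩
  field_simp

/-- A small value near the sphere forces one away from it, by the Hopf lemma. -/
lemma exists_norm_le_and_le [NeZero n] (hlam : 0 < lam) (hLam : lam ≤ Lam)
    (hα : 0 < α) (hα1 : α ≤ 1) (hK : 0 ≤ K) (hd₀ : 0 < d₀) :
    ∃ r₁ : ℝ, 0 < r₁ ∧ ∀ (b h u : ℝ^n → ℝ) (τ : ℝ),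
      IsNonnegSupersolution lam Lam K α b h u → 0 < τ →
      (∀ (x : ℝ^n) (r : ℝ), 0 < r → (∀ z ∈ ball x r, 1 - d₀ < ‖z‖ ∧ ‖z‖ < 1) →
        PosPartLnLE h (ball x r) (τ * r ^ α)) →
      (∃ x, ‖x‖ < 1 ∧ u x < τ * (1 - ‖x‖)) → ∃ x, ‖x‖ ≤ 1 - r₁ ∧ u x ≤ τ := by
  obtain ⟨r₁, hr₁, hr₁8, hhopf⟩ :=
    exists_forall_mul_one_sub_norm_le (n := n) hlam hLam hα hα1 hK hd₀
  refine ⟨r₁, hr₁, ?_⟩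
  rintro b h u τ hu hτ hh ⟨x, hx, hux⟩
  by_contra! hgt
  rcases le_or_gt ‖x‖ (1 - r₁) with hxr | hxr
  · nlinarith [hgt x hxr, norm_nonneg x]
  · exact hux.not_ge (hhopf b h u τ τ hu hτ hh (by nlinarith) (fun z hz => (hgt z hz).le) x hx
      (by linarith))

theorem exists_lintegral_neg_part_rpow_le [NeZero n] (hlam : 0 < lam) (hLam : lam ≤ Lam)
    (hα : 0 < α) (hα1 : α ≤ 1) (hK : 0 ≤ K) (hd₀ : 0 < d₀) :
    ∃ ε C : ℝ, 0 < ε ∧ 0 < C ∧ ∀ (b f h u : ℝ^n → ℝ) (τ : ℝ),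
      IsNonnegSupersolution lam Lam K α b h u → Measurable f →
      (∀ x ∈ ball 0 1, pucciMinus n lam Lam (hess n u x) ≤ b x * ‖fderiv ℝ u x‖ + f x) →
      0 < τ → PosPartLnLE h (ball 0 1) τ →
      (∀ (x : ℝ^n) (r : ℝ), 0 < r → (∀ z ∈ ball x r, 1 - d₀ < ‖z‖ ∧ ‖z‖ < 1) →
        PosPartLnLE h (ball x r) (τ * r ^ α)) →
      (∃ x, ‖x‖ < 1 ∧ u x < τ * (1 - ‖x‖)) →
      ∫⁻ x in ball 0 1, ENNReal.ofReal (max (-f x) 0 ^ ε) ≤ ENNReal.ofReal (C * τ ^ ε) := by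
  obtain ⟨r₁, hr₁, hinterior⟩ := exists_norm_le_and_le (n := n) hlam hLam hα hα1 hK hd₀
  obtain ⟨r₀, C, γ, hr₀, hC, hsmall⟩ := exists_hasSmallValues (n := n) hlam hLam hα hK hr₁
  obtain ⟨L, a, V, σ, hL, ha, hV, hσ, hσ1, hdecay⟩ :=
    exists_volume_lt_neg_le (n := n) hlam hLam hα hK hr₀ hC.le γ
  have : IsFiniteMeasure (volume.restrict (ball (0 : ℝ^n) 1)) :=
    isFiniteMeasure_restrict.2 measure_ball_lt_top.ne
  obtain ⟨ε, D, hε, hD, hlayer⟩ := exists_lintegral_rpow_le_of_geometric_decay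
    (volume.restrict (ball (0 : ℝ^n) 1)) hL ha hV hσ hσ1
  refine ⟨ε, D, hε, hD, fun b f h u τ hu hf hpucci hτ hh hcollar hx => ?_⟩
  refine hlayer _ τ (by fun_prop) (fun x => le_max_right _ _) hτ fun k => ?_
  have hlevel : {x | a * τ * L ^ k < max (-f x) 0} = {x | a * τ * L ^ k < -f x} := by
    have hnonneg : 0 ≤ a * τ * L ^ k := by positivity
    ext x
    simp only [Set.mem_ofPred_eq, lt_max_iff, hnonneg.not_gt, or_false]
  rw [hlevel, Measure.restrict_apply' measurableSet_ball, Set.inter_comm]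
  exact hdecay b f h u τ hu hτ hh (hsmall b h u τ hu hτ hh (hinterior b h u τ hu hτ hcollar hx))
    hpucci k

end NegativePart

section LebesgueData

variable {p q d₀ K C D τ ε : ℝ} {b f u : ℝ^n → ℝ} {P Q I : ℝ≥0∞}

lemma measurable_indicator_of_domRestrict {X Y : Type*} [MeasurableSpace X] [MeasurableSpace Y]
    [Zero Y] {g : X → Y} {S : Set X} (hS : MeasurableSet S) (hg : Measurable (S.domRestrict g)) :
    Measurable (S.indicator g) := by
  refine measurable_of_restrict_of_restrict_compl hS ?_ ?_
  · rwa [show S.domRestrict (S.indicator g) = S.domRestrict g from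
      funext fun x => Set.indicator_of_mem x.2 g]
  · rw [show Sᶜ.domRestrict (S.indicator g) = fun _ => 0 from
      funext fun x => Set.indicator_of_notMem x.2 g]
    exact measurable_const

lemma le_ofReal_div_of_mul_add_le (hC : 0 < C)
    (h : ENNReal.ofReal C * (P + Q) ≤ ENNReal.ofReal τ) :
    P ≤ ENNReal.ofReal (τ / C) ∧ Q ≤ ENNReal.ofReal (τ / C) := by
  have hadd : P + Q ≤ ENNReal.ofReal (τ / C) := by
    rwa [ENNReal.ofReal_div_of_pos hC, ENNReal.le_div_iff_mul_le (.inl (by simpa using hC))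
      (.inl ENNReal.ofReal_ne_top), mul_comm]
  exact ⟨le_self_add.trans hadd, le_add_self.trans hadd⟩

lemma ofReal_inv_rpow_mul_rpow_le (hD : 0 < D) (hτ : 0 < τ) (hε : 0 < ε)
    (hI : I ≤ ENNReal.ofReal (D * τ ^ ε)) :
    ENNReal.ofReal ((D ^ (1 / ε))⁻¹) * I ^ (1 / ε) ≤ ENNReal.ofReal τ :=
  calc ENNReal.ofReal ((D ^ (1 / ε))⁻¹) * I ^ (1 / ε)
      ≤ ENNReal.ofReal ((D ^ (1 / ε))⁻¹) * ENNReal.ofReal (D * τ ^ ε) ^ (1 / ε) := by gcongr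
    _ = ENNReal.ofReal ((D ^ (1 / ε))⁻¹ * (D ^ (1 / ε) * τ)) := by
        rw [ENNReal.ofReal_rpow_of_nonneg (by positivity) (by positivity),
          ← ENNReal.ofReal_mul (by positivity), Real.mul_rpow hD.le (by positivity),
          ← Real.rpow_mul hτ.le, mul_one_div_cancel hε.ne', Real.rpow_one]
    _ = ENNReal.ofReal τ := by rw [inv_mul_cancel_left₀ (by positivity)]

lemma isNonnegSupersolution_indicator [NeZero n] (hq : (n : ℝ) ≤ q) (hK : 0 ≤ K)
    (hb : Measurable ((ball 0 1).domRestrict b)) (hf : Measurable ((ball 0 1).domRestrict f))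
    (hb0 : ∀ x ∈ ball 0 1, 0 ≤ b x) (hbK : LpNormE n q b (ball 0 1) ≤ ENNReal.ofReal K)
    (hu : ContDiffOn ℝ 2 u (ball 0 1)) (hu0 : ∀ x ∈ ball 0 1, 0 ≤ u x)
    (hpucci : ∀ x ∈ ball 0 1,
      pucciMinus n lam Lam (hess n u x) ≤ b x * ‖fderiv ℝ u x‖ + f x) :
    IsNonnegSupersolution lam Lam (K * unitBallVolumeRoot n ^ (1 - n / q)) (1 - n / q)
      ((ball 0 1).indicator b) ((ball 0 1).indicator fun x => max (f x) 0) u where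
  contDiffAt x hx := hu.contDiffAt (isOpen_ball.mem_nhds hx)
  pucci_le x hx := by
    simp only [Set.indicator_of_mem hx]
    exact (hpucci x hx).trans (by gcongr; exact le_max_left _ _)
  measurable_drift := measurable_indicator_of_domRestrict measurableSet_ball hb
  drift_nonneg := Set.indicator_nonneg hb0
  measurable_source :=
    measurable_indicator_of_domRestrict measurableSet_ball (hf.max measurable_const)
  nonneg := hu0
  drift_le _ _ hr := .indicator_ball (measurable_indicator_of_domRestrict measurableSet_ball hb) hq
    hr.le measurableSet_ball hK Set.inter_subset_left hbK

theorem exists_lintegral_neg_part_rpow_le_of_lpNormE_le [NeZero n] (hlam : 0 < lam)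
    (hLam : lam ≤ Lam) (hq : (n : ℝ) < q) (hp : (n : ℝ) ≤ p) (hd₀ : 0 < d₀) (hK : 0 ≤ K) :
    ∃ ε D C : ℝ, 0 < ε ∧ 0 < D ∧ 0 < C ∧ ∀ (b f u : ℝ^n → ℝ) (τ : ℝ),
      Measurable ((ball 0 1).domRestrict b) → Measurable ((ball 0 1).domRestrict f) →
      (∀ x ∈ ball 0 1, 0 ≤ b x) → LpNormE n q b (ball 0 1) ≤ ENNReal.ofReal K →
      ContDiffOn ℝ 2 u (ball 0 1) → (∀ x ∈ ball 0 1, 0 ≤ u x) →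
      (∀ x ∈ ball 0 1, pucciMinus n lam Lam (hess n u x) ≤ b x * ‖fderiv ℝ u x‖ + f x) →
      0 < τ →
      ENNReal.ofReal C * (LpNormE n p (fun x => max (f x) 0) (ball 0 1)
        + LpNormE n q (fun x => max (f x) 0) {x ∈ ball 0 1 | 1 - ‖x‖ < d₀}) ≤ ENNReal.ofReal τ →
      (∃ x, ‖x‖ < 1 ∧ u x < τ * (1 - ‖x‖)) →
      ∫⁻ x in ball 0 1, ENNReal.ofReal (max (-f x) 0 ^ ε) ≤ ENNReal.ofReal (D * τ ^ ε) := by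
  have hω := unitBallVolumeRoot_pos (n := n)
  have hq0 : 0 < q := (Nat.cast_nonneg n).trans_lt hq
  obtain ⟨ε, D, hε, hD, hestimate⟩ := exists_lintegral_neg_part_rpow_le (n := n) hlam hLam
    (sub_pos.2 ((div_lt_one hq0).2 hq)) (sub_le_self 1 (by positivity))
    (by positivity : 0 ≤ K * unitBallVolumeRoot n ^ (1 - n / q)) hd₀
  set C := max (unitBallVolumeRoot n ^ (1 - n / p)) (unitBallVolumeRoot n ^ (1 - n / q))
  have hC : 0 < C := by positivity
  refine ⟨ε, D, C, hε, hD, hC, fun b f u τ hb hf hb0 hbK hu hu0 hpucci hτ hnorm hx => ?_⟩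
  obtain ⟨hnorm_p, hnorm_q⟩ := le_ofReal_div_of_mul_add_le hC hnorm
  have hmul_le {v : ℝ} (hv : v ≤ C) : τ / C * v ≤ τ :=
    (mul_le_mul_of_nonneg_left hv (div_pos hτ hC).le).trans_eq (div_mul_cancel₀ τ hC.ne')
  have hmeas := measurable_indicator_of_domRestrict measurableSet_ball
    (show Measurable ((ball 0 1).domRestrict fun x => max (f x) 0) from hf.max measurable_const)
  have hestimate := hestimate ((ball 0 1).indicator b) ((ball 0 1).indicator f) _ u τ
    (isNonnegSupersolution_indicator hq.le hK hb hf hb0 hbK hu hu0 hpucci)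
    (measurable_indicator_of_domRestrict measurableSet_ball hf)
    (fun x hx => by simpa only [Set.indicator_of_mem hx] using hpucci x hx) hτ ?_ ?_ hx
  · refine (setLIntegral_congr_fun measurableSet_ball fun x hx => ?_).trans_le hestimate
    simp only [Set.indicator_of_mem hx]
  · refine (PosPartLnLE.indicator_ball hmeas hp zero_le_one measurableSet_ball
      (div_pos hτ hC).le Set.inter_subset_left hnorm_p).mono ?_
    rw [Real.one_rpow, mul_one]
    exact hmul_le (le_max_left _ _)
  · intro x r hr hcollar
    have hsubset : ball 0 1 ∩ ball x r ⊆ {z ∈ ball (0 : ℝ^n) 1 | 1 - ‖z‖ < d₀} :=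
      fun z hz => ⟨hz.1, by linarith [(hcollar z hz.2).1]⟩
    refine (PosPartLnLE.indicator_ball hmeas hq.le hr.le measurableSet_ball (div_pos hτ hC).le
      hsubset hnorm_q).mono ?_
    gcongr
    exact hmul_le (le_max_right _ _)

end LebesgueData

end Pucci

theorem quantitative_strong_maximum_principle_with_rhs_general
    (n : ℕ) (hn : n ≠ 0) (lam Lam : ℝ) (hlam : 0 < lam) (hLam : lam ≤ Lam)
    (p q d0 K : ℝ) (hq : (n : ℝ) < q) (hp : (n : ℝ) ≤ p) (hd0 : 0 < d0) (hK : 0 ≤ K) :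
    ∃ ε c C : ℝ, 0 < ε ∧ 0 < c ∧ 0 < C ∧
      ∀ b f u : EuclideanSpace ℝ (Fin n) → ℝ,
        Measurable ((Metric.ball 0 1).domRestrict b) →
        Measurable ((Metric.ball 0 1).domRestrict f) →
        (∀ x ∈ Metric.ball (0 : EuclideanSpace ℝ (Fin n)) 1, 0 ≤ b x) →
        LpNormE n q b (Metric.ball 0 1) ≤ ENNReal.ofReal K →
        ContDiffOn ℝ 2 u (Metric.ball 0 1) →
        (∀ x ∈ Metric.ball (0 : EuclideanSpace ℝ (Fin n)) 1, 0 ≤ u x) →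
        (∀ x ∈ Metric.ball (0 : EuclideanSpace ℝ (Fin n)) 1,
          pucciMinus n lam Lam (hess n u x) - b x * gradNorm n u x ≤ f x) →
        ENNReal.ofReal c *
            (∫⁻ x in Metric.ball (0 : EuclideanSpace ℝ (Fin n)) 1,
              ENNReal.ofReal ((max (-f x) 0) ^ ε)) ^ (1 / ε)
          ≤ ENNReal.ofReal
              (⨅ x : Metric.ball (0 : EuclideanSpace ℝ (Fin n)) 1, u x.1 / (1 - ‖x.1‖))
            + ENNReal.ofReal C *
              (LpNormE n p (fun x => max (f x) 0) (Metric.ball 0 1)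
                + LpNormE n q (fun x => max (f x) 0)
                    {x ∈ Metric.ball (0 : EuclideanSpace ℝ (Fin n)) 1 | 1 - ‖x‖ < d0}) := by
  have := NeZero.mk hn
  obtain ⟨ε, D, C, hε, hD, hC, hestimate⟩ :=
    Pucci.exists_lintegral_neg_part_rpow_le_of_lpNormE_le hlam hLam hq hp hd0 hK
  refine ⟨ε, (D ^ (1 / ε))⁻¹, C, hε, by positivity, hC,
    fun b f u hb hf hb0 hbK hu hu0 hpucci => le_of_forall_gt_imp_ge_of_dense fun a ha => ?_⟩
  rcases eq_or_ne a ⊤ with rfl | ha_top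
  · exact le_top
  obtain ⟨τ, rfl⟩ : ∃ τ, a = ENNReal.ofReal τ := ⟨a.toReal, (ENNReal.ofReal_toReal ha_top).symm⟩
  obtain ⟨hinf, hτ⟩ := ENNReal.ofReal_lt_ofReal_iff'.1 (le_self_add.trans_lt ha)
  have : Nonempty (Metric.ball (0 : EuclideanSpace ℝ (Fin n)) 1) :=
    ⟨0, Metric.mem_ball_self one_pos⟩
  obtain ⟨x, hx⟩ := exists_lt_of_ciInf_lt hinf
  have hx1 : ‖x.1‖ < 1 := mem_ball_zero_iff.1 x.2
  exact Pucci.ofReal_inv_rpow_mul_rpow_le hD hτ hε <| hestimate b f u τ hb hf hb0 hbK hu hu0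
    (fun x hx => sub_le_iff_le_add'.1 (hpucci x hx)) hτ (le_add_self.trans ha.le)
    ⟨x, hx1, (div_lt_iff₀ (sub_pos.2 hx1)).1 hx⟩

/-- Quantitative strong maximum principle with right-hand side, in the unit ball. -/
theorem quantitative_strong_maximum_principle_with_rhs
    (n : ℕ) (hn : 2 ≤ n) (lam Lam : ℝ) (hlam : 0 < lam) (hLam : lam ≤ Lam)
    (p q d0 K : ℝ) (hq : (n : ℝ) < q) (hp : (n : ℝ) ≤ p) (hpq : p ≤ q)
    (hd0 : 0 < d0) (hd0' : d0 ≤ 1 / 4) (hK : 0 < K) :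
    ∃ ε c C : ℝ, 0 < ε ∧ 0 < c ∧ 0 < C ∧
      ∀ b f u : EuclideanSpace ℝ (Fin n) → ℝ,
        ContinuousOn b (Metric.ball 0 1) →
        ContinuousOn f (Metric.ball 0 1) →
        (∀ x ∈ Metric.ball (0 : EuclideanSpace ℝ (Fin n)) 1, 0 ≤ b x) →
        LpNormE n q b (Metric.ball 0 1) ≤ ENNReal.ofReal K →
        ContDiffOn ℝ 2 u (Metric.ball 0 1) →
        (∀ x ∈ Metric.ball (0 : EuclideanSpace ℝ (Fin n)) 1, 0 ≤ u x) →
        (∀ x ∈ Metric.ball (0 : EuclideanSpace ℝ (Fin n)) 1,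
          pucciMinus n lam Lam (hess n u x) - b x * gradNorm n u x ≤ f x) →
        ENNReal.ofReal c *
            (∫⁻ x in Metric.ball (0 : EuclideanSpace ℝ (Fin n)) 1,
              ENNReal.ofReal ((max (-f x) 0) ^ ε)) ^ (1 / ε)
          ≤ ENNReal.ofReal
              (⨅ x : Metric.ball (0 : EuclideanSpace ℝ (Fin n)) 1, u x.1 / (1 - ‖x.1‖))
            + ENNReal.ofReal C *
              (LpNormE n p (fun x => max (f x) 0) (Metric.ball 0 1)
                + LpNormE n q (fun x => max (f x) 0)
                    {x ∈ Metric.ball (0 : EuclideanSpace ℝ (Fin n)) 1 | 1 - ‖x‖ < d0}) := by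
  obtain ⟨ε, c, C, hε, hc, hC, hestimate⟩ :=
    quantitative_strong_maximum_principle_with_rhs_general n (by omega) lam Lam hlam hLam p q d0 K
      hq hp hd0 hK.le
  exact ⟨ε, c, C, hε, hc, hC, fun b f u hb hf =>
    hestimate b f u hb.domRestrict.measurable hf.domRestrict.measurable⟩
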